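/- arXiv:math/0206188 — 5 statements merged into one kernel-verified Lean document; each statement's English description precedes it below -/
import Mathlib

section
/- Let X and Y be schemes of finite type over Spec ℤ, with X irreducible and reduced, and suppose that some point of X has residue field of characteristic zero (i.e., the generic fiber X_ℚ is nonempty). If f, g : X → Y are two morphisms of schemes whose underlying continuous maps of topological spaces are equal, then f = g. -/
open AlgebraicGeometry CategoryTheory


lemma aux_poly (h : Polynomial ℤ) (hd : 0 < h.natDegree) (N : ℤ) (hN : N ≠ 0) :
    ∃ p : ℕ, p.Prime ∧ ¬ ((p : ℤ) ∣ N) ∧ ∃ r : ℤ, (p : ℤ) ∣ h.eval r := by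
  by_cases hc : h.coeff 0 = 0
  · obtain ⟨p, hp, hpp⟩ := Nat.exists_infinite_primes (N.natAbs + 1)
    refine ⟨p, hpp, fun hdv => ?_, 0, by simp [← Polynomial.coeff_zero_eq_eval_zero, hc]⟩
    have := Nat.le_of_dvd (Int.natAbs_pos.mpr hN) (Int.natCast_dvd.mp hdv)
    omega
  · set c := h.coeff 0 with hcdef
    have hne : (h - Polynomial.C c) * (h + Polynomial.C c) ≠ 0 := by
      refine mul_ne_zero ?_ ?_
      · intro h0
        rw [sub_eq_zero.mp h0] at hd; simp at hd
      · intro h0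
        rw [eq_neg_of_add_eq_zero_left h0] at hd; simp at hd
    have hinf : (Set.range fun t : ℤ => c * N * t).Infinite :=
      Set.infinite_range_of_injective (mul_right_injective₀ (mul_ne_zero hc hN))
    obtain ⟨_, ⟨t, rfl⟩, ht⟩ := hinf.exists_notMem_finset
      ((h - Polynomial.C c) * (h + Polynomial.C c)).roots.toFinset
    have ht' : (h.eval (c*N*t) - c) * (h.eval (c*N*t) + c) ≠ 0 := by
      intro h0; apply ht
      simp only [Multiset.mem_toFinset, Polynomial.mem_roots hne, Polynomial.IsRoot]
      simpa using h0
    obtain ⟨q, hq⟩ : ∃ q, h.eval (c*N*t) = c * (1 + N * q) := by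
      have := congrArg (Polynomial.eval (c*N*t)) (Polynomial.X_mul_divX_add h)
      refine ⟨t * h.divX.eval (c*N*t), ?_⟩
      rw [← this]; simp [← hcdef]; ring
    obtain ⟨p, hp, hpd⟩ := Nat.exists_prime_and_dvd (n := (1 + N*q).natAbs) (by
      intro h1
      rcases Int.natAbs_eq_iff.mp h1 with h1 | h1 <;> rw [hq, h1] at ht' <;> simp at ht')
    have hpd' := Int.natCast_dvd.mpr hpd
    refine ⟨p, hp, fun hdv => ?_, c*N*t, hq ▸ hpd'.mul_left c⟩
    have h1 : (p:ℤ) ∣ 1 := (Int.dvd_add_left (hdv.mul_right q)).mp hpd'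
    exact hp.one_lt.ne' (by exact_mod_cast Int.eq_one_of_dvd_one (by positivity) h1)

lemma aux_numField (A K : Type*) [CommRing A] [Algebra.FiniteType ℤ A] [Field K]
    [Algebra ℚ K] [FiniteDimensional ℚ K] (ι : A →+* K) :
    ∃ p : ℕ, p.Prime ∧ Nonempty (A →+* ZMod p) := by
  have hCZ : CharZero K := algebraRat.charZero K
  obtain ⟨α₀, hα₀⟩ := Field.exists_primitive_element ℚ K
  obtain ⟨y, hy0, hy⟩ := IsAlgebraic.exists_integral_multiple (R := ℤ) (z := α₀)
    ((IsFractionRing.isAlgebraic_iff ℤ ℚ K).mpr (Algebra.IsAlgebraic.isAlgebraic α₀))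
  set α := y • α₀ with hα
  let R : Subalgebra ℤ K := Algebra.adjoin ℤ {α}
  have hα₀' : Algebra.adjoin ℚ {α₀} = ⊤ := by
    rw [← IntermediateField.adjoin_simple_toSubalgebra_of_isAlgebraic
      (Algebra.IsAlgebraic.isAlgebraic α₀), hα₀]; rfl
  have hden : ∀ x : K, ∃ n : ℤ, n ≠ 0 ∧ (n : K) * x ∈ R := by
    intro x
    have hx : x ∈ Algebra.adjoin ℚ {α₀} := hα₀' ▸ Algebra.mem_top
    induction hx using Algebra.adjoin_induction with
    | mem x hx =>
      obtain rfl : x = α₀ := hx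
      refine ⟨y, hy0, ?_⟩
      rw [← zsmul_eq_mul]
      exact Algebra.self_mem_adjoin_singleton ℤ α
    | algebraMap q =>
      refine ⟨q.den, by exact_mod_cast q.den_nz, ?_⟩
      have : ((q.den : ℤ) : K) * algebraMap ℚ K q = ((q.num : ℤ) : K) := by
        have := congrArg (algebraMap ℚ K) (Rat.den_mul_eq_num q)
        rw [map_mul, map_natCast, map_intCast] at this
        exact_mod_cast this
      rw [this]
      exact intCast_mem R _
    | add a b _ _ ha hb =>
      obtain ⟨n, hn, hn'⟩ := ha
      obtain ⟨m, hm, hm'⟩ := hb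
      refine ⟨n * m, mul_ne_zero hn hm, ?_⟩
      have : ((n * m : ℤ) : K) * (a + b) = (m : K) * (n * a) + (n : K) * (m * b) := by
        push_cast; ring
      rw [this]
      exact add_mem (mul_mem (intCast_mem R _) hn') (mul_mem (intCast_mem R _) hm')
    | mul a b _ _ ha hb =>
      obtain ⟨n, hn, hn'⟩ := ha
      obtain ⟨m, hm, hm'⟩ := hb
      refine ⟨n * m, mul_ne_zero hn hm, ?_⟩
      have : ((n * m : ℤ) : K) * (a * b) = (n * a) * (m * b) := by
        push_cast; ring
      rw [this]
      exact mul_mem hn' hm'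
  choose d hd0 hd using hden
  obtain ⟨S, hS⟩ := (inferInstance : Algebra.FiniteType ℤ A).out
  let N : ℤ := ∏ s ∈ S, d (ι s)
  have hN0 : N ≠ 0 := Finset.prod_ne_zero_iff.mpr fun s _ => hd0 _
  have hNS : ∀ s ∈ S, (N : K) * ι s ∈ R := by
    intro s hs
    obtain ⟨q, hq⟩ := Finset.dvd_prod_of_mem (fun s => d (ι s)) hs
    have : (N : K) * ι s = (q : K) * (d (ι s) * ι s) := by
      change ((∏ s ∈ S, d (ι s) : ℤ) : K) * _ = _
      rw [hq]; push_cast; ring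
    rw [this]
    exact mul_mem (intCast_mem R _) (hd _)
  obtain ⟨p, hp, hpN, r, hr⟩ := aux_poly (minpoly ℤ α) (minpoly.natDegree_pos hy) N hN0
  have : Fact p.Prime := ⟨hp⟩
  let χ : R →+* ZMod p := (AdjoinRoot.lift (Int.castRingHom (ZMod p)) (r : ZMod p) (by
      rw [← eq_intCast (Int.castRingHom (ZMod p)) r, Polynomial.eval₂_at_apply, eq_intCast]
      exact (ZMod.intCast_zmod_eq_zero_iff_dvd _ _).mpr hr)).comp
    (minpoly.equivAdjoin hy).symm.toRingEquiv.toRingHom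
  let C := Localization.Away ((N : ℤ) : R)
  have hNK : (N : K) ≠ 0 := by exact_mod_cast hN0
  have hunit : IsUnit (algebraMap R K ((N : ℤ) : R)) := by
    rw [map_intCast]; exact hNK.isUnit
  have hunit' : IsUnit (χ ((N : ℤ) : R)) := by
    rw [map_intCast, isUnit_iff_ne_zero]
    exact fun h0 => hpN ((ZMod.intCast_zmod_eq_zero_iff_dvd _ _).mp h0)
  let j : C →+* K := IsLocalization.Away.lift ((N : ℤ) : R) (g := algebraMap R K) hunit
  let χ' : C →+* ZMod p := IsLocalization.Away.lift ((N : ℤ) : R) (g := χ) hunit'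
  have hjC : ∀ a : R, j (algebraMap R C a) = a := fun a =>
    IsLocalization.Away.lift_eq ((N : ℤ) : R) hunit a
  have hj : Function.Injective j := by
    rw [injective_iff_map_eq_zero]
    intro c hc
    obtain ⟨n, a, ha⟩ := IsLocalization.Away.surj ((N : ℤ) : R) c
    have h1 := congrArg j ha
    rw [map_mul, hc, zero_mul, hjC] at h1
    have : a = 0 := Subtype.ext h1.symm
    rw [this, map_zero] at ha
    exact (((IsLocalization.Away.algebraMap_isUnit (S := C) ((N : ℤ) : R)).pow n).mul_left_eq_zero).mp ha
  have hrange : ∀ a : A, ι a ∈ j.range := by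
    intro a
    have ha : a ∈ Algebra.adjoin ℤ (S : Set A) := hS ▸ Algebra.mem_top
    induction ha using Algebra.adjoin_induction with
    | mem x hx =>
      obtain ⟨u, hu⟩ := IsLocalization.Away.algebraMap_isUnit (S := C) ((N : ℤ) : R)
      refine ⟨algebraMap R C ⟨_, hNS x hx⟩ * (u⁻¹ : Cˣ), ?_⟩
      have h2 : j u = N := by rw [hu, hjC]; simp
      have h3 : j (u⁻¹ : Cˣ) * j u = 1 := by rw [← map_mul, Units.inv_mul, map_one]
      rw [h2] at h3
      rw [map_mul, hjC]
      linear_combination (ι x) * h3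
    | algebraMap n => simp
    | add a b _ _ ha hb => rw [map_add]; exact add_mem ha hb
    | mul a b _ _ ha hb => rw [map_mul]; exact mul_mem ha hb
  let e : C ≃+* j.range := RingEquiv.ofBijective j.rangeRestrict
    ⟨fun a b hab => hj (congrArg Subtype.val hab), j.rangeRestrict_surjective⟩
  exact ⟨p, hp, ⟨χ'.comp (e.symm.toRingHom.comp (ι.codRestrict j.range hrange))⟩⟩

lemma aux_field' (A F : Type*) [CommRing A] [IsDomain A] [Algebra.FiniteType ℤ A]
    [Field F] [CharZero F] (i : A →+* F) :
    ∃ p : ℕ, p.Prime ∧ Nonempty (A →+* ZMod p) := by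
  let L := TensorProduct ℤ ℚ A
  have φ : L →ₐ[ℤ] F := Algebra.TensorProduct.productMap
    ((algebraMap ℚ F).toIntAlgHom) i.toIntAlgHom
  have : Nontrivial L := φ.toRingHom.domain_nontrivial
  obtain ⟨m, hm⟩ := Ideal.exists_maximal L
  let : Field (L ⧸ m) := Ideal.Quotient.field m
  have : Module.Finite ℚ (L ⧸ m) := finite_of_finite_type_of_isJacobsonRing ℚ (L ⧸ m)
  exact aux_numField A (L ⧸ m) ((Ideal.Quotient.mk m).comp
    (Algebra.TensorProduct.includeRight : A →ₐ[ℤ] L).toRingHom)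

lemma aux_field (A : Type*) [CommRing A] [IsDomain A] [CharZero A] [Algebra.FiniteType ℤ A] :
    ∃ p : ℕ, p.Prime ∧ Nonempty (A →+* ZMod p) :=
  aux_field' A (FractionRing A) (algebraMap _ _)

lemma aux_away (A A' : Type*) [CommRing A] [IsDomain A] [CharZero A] [Algebra.FiniteType ℤ A]
    [CommRing A'] [Algebra A A'] (d : A) (hd : d ≠ 0) [IsLocalization.Away d A'] :
    ∃ p : ℕ, p.Prime ∧ Nonempty (A' →+* ZMod p) := by
  have hle : Submonoid.powers d ≤ nonZeroDivisors A :=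
    powers_le_nonZeroDivisors_of_noZeroDivisors hd
  have : IsDomain A' := IsLocalization.isDomain_of_le_nonZeroDivisors A' hle
  have hinj : Function.Injective (algebraMap A A') := IsLocalization.injective A' hle
  have : CharZero A' := charZero_of_injective_algebraMap hinj
  have : Algebra.FiniteType A A' :=
    IsLocalization.finiteType_of_monoid_fg (Submonoid.powers d) _
  have : Algebra.FiniteType ℤ A' :=
    Algebra.FiniteType.trans (S := A) inferInstance inferInstance
  exact aux_field A'

lemma aux_ring (A B : Type*) [CommRing A] [IsDomain A] [CharZero A] [Algebra.FiniteType ℤ A]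
    [CommRing B] (φ ψ : B →+* A)
    (H : ∀ (P : Ideal A), P.IsPrime → ∀ b, φ b ∈ P ↔ ψ b ∈ P) : φ = ψ := by
  ext b
  by_contra hne
  have hd : φ b - ψ b ≠ 0 := sub_ne_zero.mpr hne
  let A' := Localization.Away (φ b - ψ b)
  obtain ⟨p, hp, ⟨χ⟩⟩ := aux_away A A' _ hd
  have : Fact p.Prime := ⟨hp⟩
  let θ : A →+* ZMod p := χ.comp (algebraMap A A')
  have key := H (RingHom.ker θ) (RingHom.ker_isPrime θ)
  obtain ⟨n, hn⟩ := ZMod.intCast_surjective (θ (φ b))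
  have h1 := (key (b - n)).mp (by simp [RingHom.mem_ker, hn])
  simp only [map_sub, map_intCast, RingHom.mem_ker, hn] at h1
  have h2 : θ (φ b - ψ b) = 0 := by rw [map_sub]; linear_combination -h1
  have hu : IsUnit (θ (φ b - ψ b)) :=
    (IsLocalization.Away.algebraMap_isUnit (S := A') (φ b - ψ b)).map χ
  exact hu.ne_zero h2

/-- Let `X` and `Y` be schemes of finite type over `Spec ℤ`, with `X`
irreducible and reduced, and suppose some point of `X` has residue field of characteristic
zero. If `f g : X ⟶ Y` are morphisms of schemes with the same underlying continuous map of
topological spaces, then `f = g`. -/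
theorem scheme_hom_eq_of_base_eq_of_charZero_point
    (X Y : Scheme)
    (sX : X ⟶ Spec (CommRingCat.of ℤ)) [LocallyOfFiniteType sX] [QuasiCompact sX]
    (sY : Y ⟶ Spec (CommRingCat.of ℤ)) [LocallyOfFiniteType sY] [QuasiCompact sY]
    [IrreducibleSpace X] [IsReduced X]
    (x₀ : X) (hx₀ : CharZero (X.residueField x₀))
    (f g : X ⟶ Y) (h : f.base = g.base) :
    f = g := by
  have hI : IsIntegral X := isIntegral_of_irreducibleSpace_of_isReduced X
  refine Scheme.hom_ext_of_forall f g fun x => ?_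
  obtain ⟨_, ⟨V, hV, rfl⟩, hxV, -⟩ := Y.isBasis_affineOpens.exists_subset_of_mem_open
    (Set.mem_univ (f x)) isOpen_univ
  obtain ⟨_, ⟨U, hU, rfl⟩, hxU, hUV⟩ := X.isBasis_affineOpens.exists_subset_of_mem_open
    (show x ∈ ((f ⁻¹ᵁ V : X.Opens) : Set X) from hxV) (f ⁻¹ᵁ V).isOpen
  have hpre : ∀ W : Y.Opens, f ⁻¹ᵁ W = g ⁻¹ᵁ W := fun W => by
    ext z; change f.base z ∈ W ↔ g.base z ∈ W; rw [h]
  have hUV' : U ≤ f ⁻¹ᵁ V := hUV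
  have hUg : U ≤ g ⁻¹ᵁ V := hpre V ▸ hUV'
  have : Nonempty U := ⟨⟨x, hxU⟩⟩
  have hdom : IsDomain Γ(X, U) := inferInstance
  have hcz : CharZero Γ(X, U) := by
    have h1 : CharZero Γ(X, ⊤) := (X.evaluation ⊤ x₀ trivial).hom.charZero
    have : Nonempty (⊤ : X.Opens) := ⟨⟨x₀, trivial⟩⟩
    have h2 : CharZero X.functionField := charZero_of_injective_ringHom
      (f := (X.germToFunctionField ⊤).hom) (Scheme.germToFunctionField_injective X ⊤)
    exact (X.germToFunctionField U).hom.charZero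
  have hft : Algebra.FiniteType ℤ Γ(X, U) := by
    have h1 := LocallyOfFiniteType.finiteType_appLE sX (isAffineOpen_top _) hU
      (show U ≤ sX ⁻¹ᵁ ⊤ from le_top)
    have h2 : (Scheme.ΓSpecIso (CommRingCat.of ℤ)).inv.hom.FiniteType :=
      RingHom.FiniteType.of_surjective _
        (ConcreteCategory.bijective_of_isIso (Scheme.ΓSpecIso (CommRingCat.of ℤ)).inv).2
    have h3 := h1.comp h2
    rw [← RingHom.finiteType_algebraMap]
    convert h3 using 1
    exact RingHom.ext_int _ _
  have key : f.appLE V U hUV' = g.appLE V U hUg := by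
    apply CommRingCat.hom_ext
    apply aux_ring
    intro P hP b
    have h1 := Scheme.basicOpen_appLE f U V hUV' b
    have h2 := Scheme.basicOpen_appLE g U V hUg b
    rw [hpre, ← h2] at h1
    have h3 := congrArg (fun W => hU.fromSpec ⁻¹ᵁ W) h1
    simp only [hU.fromSpec_preimage_basicOpen] at h3
    have h4 : (⟨P, hP⟩ : PrimeSpectrum Γ(X, U)) ∈ PrimeSpectrum.basicOpen (f.appLE V U hUV' b) ↔ 
      (⟨P, hP⟩ : PrimeSpectrum Γ(X, U)) ∈ PrimeSpectrum.basicOpen (g.appLE V U hUg b) := by rw [h3]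
    exact not_iff_not.mp h4
  refine ⟨U, hxU, ?_⟩
  have h5 : hU.fromSpec ≫ f = hU.fromSpec ≫ g := by
    rw [← IsAffineOpen.SpecMap_appLE_fromSpec f hV hU hUV',
      ← IsAffineOpen.SpecMap_appLE_fromSpec g hV hU hUg, key]
  rw [← hU.isoSpec_hom_fromSpec, Category.assoc, Category.assoc, h5]
end

section
/- Let A be an integral domain of characteristic zero that is finitely generated as a ℤ-algebra, and let B be a finitely generated ℤ-algebra. If φ, ψ : B → A are ring homomorphisms that induce the same map on prime spectra, i.e., PrimeSpectrum.comap φ = PrimeSpectrum.comap ψ as maps PrimeSpectrum A → PrimeSpectrum B, then φ = ψ. -/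
open Polynomial

lemma exists_prime_root (f : ℤ[X]) (hf : 0 < f.natDegree) (D : ℤ) (hD : D ≠ 0) :
    ∃ p : ℕ, p.Prime ∧ ¬ (p : ℤ) ∣ D ∧ ∃ r : ℤ, (p : ℤ) ∣ f.eval r := by
  by_cases hc : f.eval 0 = 0
  · obtain ⟨p, hp, hpp⟩ := Nat.exists_infinite_primes (D.natAbs + 1)
    refine ⟨p, hpp, ?_, 0, by simp [hc]⟩
    intro h
    have := Nat.le_of_dvd (Int.natAbs_pos.mpr hD) (Int.natCast_dvd.mp h)
    omega
  · set c := f.eval 0 with hcdef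
    obtain ⟨q, hq⟩ : X ∣ f - C c := by
      rw [X_dvd_iff]; simp [hcdef, coeff_zero_eq_eval_zero]
    have hval : ∀ x, f.eval (c * D * x) = c * (1 + D * x * q.eval (c * D * x)) := by
      intro x
      have : f = C c + X * q := by rw [← hq]; ring
      conv_lhs => rw [this]
      simp; ring
    have hfin : ∀ k : ℤ, {z | f.eval z = k}.Finite := by
      intro k
      have h0 : f - C k ≠ 0 := by
        intro h
        have : f = C k := sub_eq_zero.mp h
        rw [this] at hf; simp at hf
      refine ((f - C k).rootSet_finite ℤ).subset ?_
      intro z hz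
      rw [mem_rootSet]
      refine ⟨h0, ?_⟩
      simp only [Set.mem_ofPred_eq] at hz
      simp [hz]
    have hinj : Function.Injective (fun x : ℤ => c * D * x) :=
      mul_right_injective₀ (mul_ne_zero hc hD)
    have hfin2 := ((hfin c).union (hfin (-c))).preimage hinj.injOn
    obtain ⟨x, hx⟩ := hfin2.exists_notMem
    simp only [Set.mem_preimage, Set.mem_union, Set.mem_ofPred_eq, not_or, hval] at hx
    set u := 1 + D * x * q.eval (c * D * x) with hu
    have hu1 : u.natAbs ≠ 1 := by
      intro h
      rcases Int.natAbs_eq_iff.mp h with h | h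
      · apply hx.1; rw [h]; simp
      · apply hx.2; rw [h]; simp
    obtain ⟨p, hp, hpu⟩ := Nat.exists_prime_and_dvd hu1
    have hpu' : (p : ℤ) ∣ u := Int.natCast_dvd.mpr hpu
    refine ⟨p, hp, ?_, c * D * x, by rw [hval]; exact hpu'.mul_left _⟩
    intro h
    have h1 : (p : ℤ) ∣ 1 := by
      have := dvd_sub hpu' ((h.mul_right x).mul_right (q.eval (c * D * x)))
      simpa [hu] using this
    exact hp.one_lt.ne' (by simpa using Int.natCast_dvd.mp h1)

lemma exists_denom (K : Type*) [Field K] [CharZero K] [Algebra ℚ K] [Module.Finite ℚ K] :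
    ∃ α : K, IsIntegral ℤ α ∧ ∀ k : K, ∃ n : ℤ, n ≠ 0 ∧ (n : K) * k ∈ Algebra.adjoin ℤ {α} := by
  obtain ⟨β, hβ⟩ := Field.exists_primitive_element ℚ K
  have hβa : IsAlgebraic ℚ β := Algebra.IsAlgebraic.isAlgebraic β
  have hβz : IsAlgebraic ℤ β := (IsFractionRing.isAlgebraic_iff ℤ ℚ K).mpr hβa
  obtain ⟨d, hd, hint⟩ := hβz.exists_integral_multiple
  refine ⟨d • β, hint, fun k => ?_⟩
  have hk : k ∈ Algebra.adjoin ℚ {β} := by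
    rw [← IntermediateField.adjoin_simple_toSubalgebra_of_isAlgebraic hβa, hβ]
    trivial
  induction hk using Algebra.adjoin_induction with
  | mem x hx =>
    obtain rfl : x = β := hx
    refine ⟨d, hd, ?_⟩
    rw [← zsmul_eq_mul]
    exact Algebra.subset_adjoin rfl
  | algebraMap r =>
    refine ⟨r.den, by exact_mod_cast r.den_nz, ?_⟩
    have : ((r.den : ℤ) : K) * algebraMap ℚ K r = algebraMap ℤ K r.num := by
      have h := Rat.den_mul_eq_num r
      have h2 := congrArg (algebraMap ℚ K) h
      rw [map_mul, map_natCast, map_intCast] at h2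
      rw [Int.cast_natCast, h2]; simp
    rw [this]
    exact Subalgebra.algebraMap_mem _ _
  | add x y _ _ hx hy =>
    obtain ⟨n, hn, hx⟩ := hx
    obtain ⟨m, hm, hy⟩ := hy
    refine ⟨n * m, mul_ne_zero hn hm, ?_⟩
    have : ((n * m : ℤ) : K) * (x + y) = m • ((n : K) * x) + n • ((m : K) * y) := by
      simp only [zsmul_eq_mul]; push_cast; ring
    rw [this]
    exact add_mem (zsmul_mem hx _) (zsmul_mem hy _)
  | mul x y _ _ hx hy =>
    obtain ⟨n, hn, hx⟩ := hx
    obtain ⟨m, hm, hy⟩ := hy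
    refine ⟨n * m, mul_ne_zero hn hm, ?_⟩
    have : ((n * m : ℤ) : K) * (x * y) = ((n : K) * x) * ((m : K) * y) := by
      push_cast; ring
    rw [this]
    exact mul_mem hx hy

lemma exists_subring_hom (K : Type*) [Field K] [CharZero K] [Algebra ℚ K] [Module.Finite ℚ K]
    (T : Finset K) :
    ∃ (p : ℕ) (_ : p.Prime) (V : Subring K) (_ : V →+* ZMod p), ∀ t ∈ T, t ∈ V := by
  obtain ⟨α, hα, hden⟩ := exists_denom K
  choose n hn hnmem using hden
  set D : ℤ := ∏ t ∈ T, n t with hDdef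
  have hD : D ≠ 0 := Finset.prod_ne_zero_iff.mpr fun t _ => hn t
  have hDT : ∀ t ∈ T, (D : K) * t ∈ Algebra.adjoin ℤ {α} := by
    intro t ht
    obtain ⟨e, he⟩ := Finset.dvd_prod_of_mem n ht
    rw [← hDdef] at he
    have : (D : K) * t = e • ((n t : K) * t) := by
      rw [he, zsmul_eq_mul]; push_cast; ring
    rw [this]
    exact zsmul_mem (hnmem t) _
  obtain ⟨p, hp, hpD, r, hr⟩ := exists_prime_root (minpoly ℤ α) (minpoly.natDegree_pos hα) D hD
  have := Fact.mk hp
  let χ : Algebra.adjoin ℤ {α} →+* ZMod p :=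
    (AdjoinRoot.lift (Int.castRingHom (ZMod p)) (r : ZMod p) (by
      have := (ZMod.intCast_zmod_eq_zero_iff_dvd _ p).mpr hr
      rw [← this]
      exact Polynomial.eval₂_at_apply (Int.castRingHom (ZMod p)) r)).comp
      (minpoly.equivAdjoin hα).symm.toRingHom
  have : IsFractionRing (Algebra.adjoin ℤ {α}) K := by
    refine IsFractionRing.of_field _ _ fun z => ?_
    refine ⟨⟨_, hnmem z⟩, (n z : Algebra.adjoin ℤ {α}), ?_⟩
    have : (n z : K) ≠ 0 := by exact_mod_cast hn z
    have h2 : algebraMap (Algebra.adjoin ℤ {α}) K (n z : Algebra.adjoin ℤ {α}) = (n z : K) := by simp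
    rw [h2]
    change z = ((n z : K) * z) / (n z : K)
    field_simp
  let M : Submonoid (Algebra.adjoin ℤ {α}) := Submonoid.powers (D : Algebra.adjoin ℤ {α})
  have hM : M ≤ nonZeroDivisors _ := by
    refine powers_le_nonZeroDivisors_of_noZeroDivisors ?_
    exact_mod_cast hD
  refine ⟨p, hp, (Localization.subalgebra.ofField K M hM).toSubring,
    IsLocalization.lift (M := M) (S := Localization.subalgebra.ofField K M hM) (g := χ) ?_, ?_⟩
  · rintro ⟨_, k, rfl⟩
    have : (D : ZMod p) ≠ 0 := fun h => hpD ((ZMod.intCast_zmod_eq_zero_iff_dvd _ p).mp h)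
    simp only [map_pow, map_intCast]
    exact (isUnit_iff_ne_zero.mpr this).pow k
  · intro t ht
    refine ⟨⟨_, hDT t ht⟩, D, Submonoid.mem_powers _, ?_⟩
    have : (D : K) ≠ 0 := by exact_mod_cast hD
    have h2 : algebraMap (Algebra.adjoin ℤ {α}) K (D : Algebra.adjoin ℤ {α}) = (D : K) := by simp
    rw [h2]
    change t = ((D : K) * t) * (D : K)⁻¹
    field_simp

lemma exists_numberField_hom.{u} (S : Type u) [CommRing S] [Nontrivial S] [Algebra ℚ S]
    [Algebra.FiniteType ℚ S] :
    ∃ (K : Type u) (_ : Field K) (_ : Algebra ℚ K) (_ : Module.Finite ℚ K),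
      Nonempty (S →+* K) := by
  obtain ⟨m, hm⟩ := Ideal.exists_maximal S
  let i1 : Field (S ⧸ m) := Ideal.Quotient.field m
  exact ⟨S ⧸ m, i1, inferInstance, finite_of_finite_type_of_isJacobsonRing ℚ (S ⧸ m),
    ⟨Ideal.Quotient.mk m⟩⟩

lemma exists_hom_zmod (A : Type*) [CommRing A] [IsDomain A] [CharZero A]
    [hA : Algebra.FiniteType ℤ A] (a : A) (ha : a ≠ 0) :
    ∃ (p : ℕ) (_ : p.Prime) (θ : A →+* ZMod p), θ a ≠ 0 := by
  classical
  obtain ⟨s, hs⟩ := hA.out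
  let F := FractionRing A
  have : CharZero F := charZero_of_injective_algebraMap (IsFractionRing.injective A F)
  let ι : A →+* F := algebraMap A F
  let G : Finset F := insert (ι a)⁻¹ (s.image ι)
  let S : Subalgebra ℚ F := Algebra.adjoin ℚ (G : Set F)
  have : Algebra.FiniteType ℚ S :=
    (Subalgebra.fg_iff_finiteType S).mp ⟨G, rfl⟩
  have hιS : ∀ x, ι x ∈ S := by
    intro x
    have hx : x ∈ Algebra.adjoin ℤ (s : Set A) := by rw [hs]; trivial
    induction hx using Algebra.adjoin_induction with
    | mem x hx => exact Algebra.subset_adjoin (by simp [G]; right; exact ⟨x, hx, rfl⟩)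
    | algebraMap r => simp
    | add x y _ _ hx hy => rw [map_add]; exact add_mem hx hy
    | mul x y _ _ hx hy => rw [map_mul]; exact mul_mem hx hy
  have hinvS : (ι a)⁻¹ ∈ S := Algebra.subset_adjoin (by simp [G])
  have hιa : ι a ≠ 0 := by
    intro h; exact ha (IsFractionRing.injective A F (h.trans (map_zero ι).symm))
  obtain ⟨K, _, _, _, ⟨π⟩⟩ := exists_numberField_hom S
  have : CharZero K := algebraRat.charZero K
  let g : A →+* K := π.comp (ι.codRestrict S hιS)
  let b : K := π ⟨_, hinvS⟩
  have hgb : g a * b = 1 := by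
    change π (ι.codRestrict S hιS a) * π ⟨_, hinvS⟩ = 1
    rw [← map_mul, ← map_one π]
    congr 1
    ext
    exact mul_inv_cancel₀ hιa
  obtain ⟨p, hp, V, χ, hV⟩ := exists_subring_hom K (insert b (s.image g))
  have := Fact.mk hp
  have hgV : ∀ x, g x ∈ V := by
    intro x
    have hx : x ∈ Algebra.adjoin ℤ (s : Set A) := by rw [hs]; trivial
    induction hx using Algebra.adjoin_induction with
    | mem x hx =>
      exact hV _ (Finset.mem_insert_of_mem (Finset.mem_image_of_mem g hx))
    | algebraMap r => simp
    | add x y _ _ hx hy => rw [map_add]; exact add_mem hx hy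
    | mul x y _ _ hx hy => rw [map_mul]; exact mul_mem hx hy
  have hbV : b ∈ V := hV _ (Finset.mem_insert_self _ _)
  refine ⟨p, hp, χ.comp (g.codRestrict V hgV), ?_⟩
  intro h0
  have h1 : (g.codRestrict V hgV a) * ⟨b, hbV⟩ = 1 := by
    ext
    exact hgb
  have h2 := congrArg χ h1
  rw [map_mul, map_one] at h2
  rw [RingHom.comp_apply] at h0
  rw [h0, zero_mul] at h2
  exact zero_ne_one h2

/-- Let `A` be an integral domain of characteristic zero that is finitely
generated as a `ℤ`-algebra, and let `B` be a finitely generated `ℤ`-algebra. If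
`φ ψ : B →+* A` induce the same map on prime spectra, then `φ = ψ`. -/
theorem ringHom_eq_of_comap_eq_charZero
    (A B : Type*) [CommRing A] [IsDomain A] [CharZero A]
    [Algebra.FiniteType ℤ A] [CommRing B] [Algebra.FiniteType ℤ B]
    (φ ψ : B →+* A)
    (h : (PrimeSpectrum.comap φ : PrimeSpectrum A → PrimeSpectrum B) =
      PrimeSpectrum.comap ψ) :
    φ = ψ := by
  ext b
  by_contra hne
  obtain ⟨p, hp, θ, hθ⟩ := exists_hom_zmod A (φ b - ψ b) (sub_ne_zero.mpr hne)
  have := Fact.mk hp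
  obtain ⟨n, hn⟩ := ZMod.intCast_surjective (θ (φ b))
  let P : PrimeSpectrum A := ⟨RingHom.ker θ, RingHom.ker_isPrime θ⟩
  have hP : Ideal.comap φ (RingHom.ker θ) = Ideal.comap ψ (RingHom.ker θ) :=
    congrArg PrimeSpectrum.asIdeal (congrFun h P)
  have h1 : b - (n : B) ∈ Ideal.comap φ (RingHom.ker θ) := by
    simp [Ideal.mem_comap, RingHom.mem_ker, hn]
  rw [hP] at h1
  simp only [Ideal.mem_comap, RingHom.mem_ker, map_sub, map_intCast, hn] at h1
  apply hθ
  rw [map_sub, sub_eq_zero]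
  exact (sub_eq_zero.mp h1).symm
end

section
/- Let p be a prime number, let A be an integral domain of characteristic p that is finitely generated as an algebra over 𝔽_p, and let B be a finitely generated 𝔽_p-algebra. Let φ, ψ : B → A be ring homomorphisms that induce the same map on prime spectra, i.e., PrimeSpectrum.comap φ = PrimeSpectrum.comap ψ. Then there exists a natural number m such that either frob_A^m ∘ φ = ψ or frob_A^m ∘ ψ = φ, where frob_A : A → A is the Frobenius ring homomorphism a ↦ a^p and frob_A^m denotes its m-fold iterate. -/
open Polynomial

theorem ft_chev {R A : Type*} [CommRing R] [IsDomain R] [IsNoetherianRing R] [CommRing A] [IsDomain A]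
    (f : R →+* A) (hf : f.FiniteType) (hi : Function.Injective f) :
    ∃ r : R, r ≠ 0 ∧ ∀ P : Ideal R, P.IsPrime → r ∉ P → ∃ Q : Ideal A, Q.IsPrime ∧ Q.comap f = P := by
  have hc := PrimeSpectrum.isConstructible_range_comap (RingHom.FinitePresentation.of_finiteType.mp hf)
  obtain ⟨S, hS⟩ := PrimeSpectrum.exists_constructibleSetData_iff.mpr hc
  have hb : (⟨⊥, Ideal.isPrime_bot⟩ : PrimeSpectrum R) ∈ Set.range (PrimeSpectrum.comap f) := by
    refine ⟨⟨⊥, Ideal.isPrime_bot⟩, ?_⟩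
    ext x
    simp [map_eq_zero_iff f hi]
  rw [← hS] at hb
  simp only [PrimeSpectrum.ConstructibleSetData.toSet, Set.mem_iUnion] at hb
  obtain ⟨c, hcS, hc1, hc2⟩ := hb
  refine ⟨c.f, ?_, ?_⟩
  · simpa [PrimeSpectrum.mem_zeroLocus] using hc2
  · intro P hP hr
    have : (⟨P, hP⟩ : PrimeSpectrum R) ∈ S.toSet := by
      simp only [PrimeSpectrum.ConstructibleSetData.toSet, Set.mem_iUnion]
      refine ⟨c, hcS, ?_, ?_⟩
      · rw [PrimeSpectrum.mem_zeroLocus] at hc1 ⊢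
        intro x hx
        have := hc1 hx
        simp only [Submodule.bot_coe, Set.mem_singleton_iff] at this
        simp [this]
      · simpa [PrimeSpectrum.mem_zeroLocus] using hr
    rw [hS] at this
    obtain ⟨Q, hQ⟩ := this
    exact ⟨Q.asIdeal, Q.2, congrArg PrimeSpectrum.asIdeal hQ⟩

section
variable {p : ℕ} [Fact p.Prime] {A : Type*} [CommRing A] [Algebra (ZMod p) A]

theorem ft_conj {K : Type*} [Field K] [Finite K] [Algebra (ZMod p) K] (x y : K)
    (h : minpoly (ZMod p) x = minpoly (ZMod p) y) : ∃ n, y = x ^ p ^ n := by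
  obtain ⟨σ, hσ⟩ := (isConjRoot_iff_exists_algEquiv (K := ZMod p) (x := y) (y := x)).1 h.symm
  obtain ⟨n, hn⟩ := (FiniteField.bijective_frobeniusAlgEquivOfAlgebraic_pow (ZMod p) K).2 σ
  refine ⟨n, ?_⟩
  rw [← hσ, ← hn]
  simp only [AlgEquiv.coe_pow]
  rw [FiniteField.coe_frobeniusAlgEquivOfAlgebraic, ZMod.card, pow_iterate]

theorem ft_residue [Algebra.FiniteType (ZMod p) A] (a a' : A) (M : Ideal A) [hM : M.IsMaximal]
    (H : ∀ g : (ZMod p)[X], aeval a g ∈ M → aeval a' g ∈ M) :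
    ∃ n, a' - a ^ p ^ n ∈ M := by
  let _ := Ideal.Quotient.field M
  have : Module.Finite (ZMod p) (A ⧸ M) := finite_of_finite_type_of_isJacobsonRing _ _
  have : Finite (A ⧸ M) := Module.finite_of_finite (ZMod p)
  have key : ∀ (b : A) (g : (ZMod p)[X]), aeval (Ideal.Quotient.mk M b) g = Ideal.Quotient.mk M (aeval b g) := by
    intro b g
    exact (aeval_algHom_apply (Ideal.Quotient.mkₐ (ZMod p) M) b g)
  have hint : IsIntegral (ZMod p) (Ideal.Quotient.mk M a) := Algebra.IsIntegral.isIntegral _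
  obtain ⟨n, hn⟩ := ft_conj (p := p) (Ideal.Quotient.mk M a) (Ideal.Quotient.mk M a') (by
    apply minpoly.eq_of_irreducible_of_monic (minpoly.irreducible hint) _ (minpoly.monic hint)
    rw [key, Ideal.Quotient.eq_zero_iff_mem]
    apply H
    rw [← Ideal.Quotient.eq_zero_iff_mem, ← key, minpoly.aeval])
  refine ⟨n, ?_⟩
  rw [← Ideal.Quotient.eq_zero_iff_mem]
  simp [hn]

theorem ft_alg [IsDomain A] [Algebra.FiniteType (ZMod p) A] (a a' : A)
    (H : ∀ P : Ideal A, P.IsPrime → ∀ g : (ZMod p)[X], aeval a g ∈ P ↔ aeval a' g ∈ P)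
    (ha : IsAlgebraic (ZMod p) a) : ∃ n, a' = a ^ p ^ n := by
  obtain ⟨M, hM⟩ := Ideal.exists_maximal A
  obtain ⟨n, hn⟩ := ft_residue a a' M (fun g => (H M hM.isPrime g).1)
  refine ⟨n, ?_⟩
  have ha' : IsAlgebraic (ZMod p) a' := by
    obtain ⟨g, hg, hg0⟩ := ha
    exact ⟨g, hg, by simpa using (H ⊥ Ideal.isPrime_bot g).1 (by simpa using hg0)⟩
  have hi : IsIntegral (ZMod p) (a' - a ^ p ^ n) := (ha'.sub (ha.pow _)).isIntegral
  by_contra hne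
  have hu : IsUnit (a' - a ^ p ^ n) := by
    exact hi.isUnit (sub_ne_zero.2 hne)
  exact hM.ne_top (Ideal.eq_top_of_isUnit_mem _ hn hu)

theorem ft_finiteType {R : Type*} [CommRing R] [Algebra (ZMod p) R] [Algebra.FiniteType (ZMod p) A]
    (f : R →ₐ[ZMod p] A) : f.toRingHom.FiniteType := by
  apply RingHom.FiniteType.of_comp_finiteType (f := algebraMap (ZMod p) R)
  have : f.toRingHom.comp (algebraMap (ZMod p) R) = algebraMap (ZMod p) A := f.comp_algebraMap
  rw [this, RingHom.finiteType_algebraMap]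
  infer_instance

theorem ft_indep [IsDomain A] [Algebra.FiniteType (ZMod p) A] (a a' : A)
    (H : ∀ P : Ideal A, P.IsPrime → ∀ g : (ZMod p)[X], aeval a g ∈ P ↔ aeval a' g ∈ P) :
    ¬ Function.Injective (aevalAeval (R := ZMod p) a a') := by
  intro hinj
  obtain ⟨r, hr, hP⟩ := ft_chev (aevalAeval (R := ZMod p) a a').toRingHom (ft_finiteType _) hinj
  set c := r.leadingCoeff with hc
  have hc0 : c ≠ 0 := leadingCoeff_ne_zero.2 hr
  have hnu : ¬ IsUnit (X * c + 1) := by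
    intro hu
    have h1 := natDegree_eq_zero_of_isUnit hu
    have h2 : (X * c + 1).natDegree = c.natDegree + 1 := by
      rw [← C_1, natDegree_add_C, natDegree_X_mul hc0]
    omega
  have hne : X * c + 1 ≠ 0 := by
    intro h
    have := congrArg (coeff · 0) h
    simp at this
  obtain ⟨g, hg, hgd⟩ := WfDvdMonoid.exists_irreducible_factor hnu hne
  have hgc : ¬ g ∣ c := by
    intro h
    exact hg.not_isUnit (isUnit_of_dvd_one ((dvd_add_right (h.mul_left X)).1 hgd))
  have hgp : Prime (C g : (ZMod p)[X][X]) := prime_C_iff.2 hg.prime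
  obtain ⟨Q, hQ, hQc⟩ := hP (Ideal.span {C g}) ((Ideal.span_singleton_prime hgp.ne_zero).2 hgp) (by
    rw [Ideal.mem_span_singleton, C_dvd_iff_dvd_coeff]
    intro h
    exact hgc (h _))
  have h1 : aeval a g ∈ Q := by
    have : C g ∈ Q.comap (aevalAeval (R := ZMod p) a a').toRingHom := by
      rw [hQc]; exact Ideal.mem_span_singleton_self _
    rw [Ideal.mem_comap] at this
    simpa using this
  have h2 : g.map C ∈ Q.comap (aevalAeval (R := ZMod p) a a').toRingHom := by
    rw [Ideal.mem_comap]
    have h3 := (H Q hQ g).1 h1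
    rw [← Bivariate.swap_C]
    change aevalAeval a a' (Bivariate.swap (C g)) ∈ Q
    rw [Bivariate.aevalAeval_swap]
    simpa using h3
  rw [hQc, Ideal.mem_span_singleton, C_dvd_iff_dvd_coeff] at h2
  have h4 := h2 g.natDegree
  rw [coeff_map] at h4
  exact hg.not_isUnit (isUnit_of_dvd_unit h4 (isUnit_C.2 (by simpa using hg.ne_zero)))

theorem ft_eval (N : ℕ) (x : A) (F : (ZMod p)[X][X]) :
    aevalAeval x (x ^ N) F = aeval x (F.eval (X ^ N)) := by
  induction F using Polynomial.induction_on' with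
  | add _ _ h1 h2 => simp only [map_add, eval_add, h1, h2]
  | monomial n a => simp

theorem ft_deg (F : (ZMod p)[X][X]) : ∃ d, ∀ N, 1 ≤ N → (F.eval (X ^ N)).natDegree ≤ d * N := by
  refine ⟨(Finset.range (F.natDegree + 1)).sup (fun i => (F.coeff i).natDegree) + F.natDegree, ?_⟩
  intro N hN
  rw [eval_eq_sum_range]
  apply natDegree_sum_le_of_forall_le
  intro i hi
  refine natDegree_mul_le.trans ?_
  have h1 := Finset.le_sup (f := fun i => (F.coeff i).natDegree) hi
  have h2 : i ≤ F.natDegree := by simpa [Nat.lt_succ_iff] using hi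
  rw [← pow_mul, natDegree_X_pow]
  nlinarith

theorem ft_prime (F : (ZMod p)[X][X]) (hF : Prime F) (q : (ZMod p)[X]) (h : F.eval q = 0) :
    F ∣ X - C q := by
  obtain ⟨G, hG⟩ := dvd_iff_isRoot.2 h
  have : F ∣ (X - C q) * G := hG ▸ dvd_rfl
  rcases hF.dvd_or_dvd this with h | ⟨c, hc⟩
  · exact h
  · exfalso
    apply not_isUnit_X_sub_C q
    rw [hc] at hG
    have : F * 1 = F * ((X - C q) * c) := by rw [mul_one]; linear_combination hG
    exact IsUnit.of_mul_eq_one _ (mul_left_cancel₀ hF.ne_zero this).symm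

theorem ft_card (K : Type*) [Field K] [Fintype K] [DecidableEq K] [Algebra (ZMod p) K]
    (f : (ZMod p)[X]) (hf : f ≠ 0) :
    (Finset.univ.filter fun x : K => aeval x f = 0).card ≤ f.natDegree := by
  have : (Finset.univ.filter fun x : K => aeval x f = 0) ⊆ (f.aroots K).toFinset := by
    intro x hx
    simpa [mem_aroots, hf] using hx
  calc _ ≤ _ := Finset.card_le_card this
    _ ≤ _ := Multiset.toFinset_card_le _
    _ ≤ _ := card_roots' _
    _ ≤ _ := natDegree_map_le

theorem ft_arith {p : ℕ} (e d : ℕ) (hp : 2 ≤ p) : ∃ l, 1 ≤ l ∧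
    e + (∑ n ∈ Finset.range (l + 1), d * p ^ n + ∑ n ∈ Finset.range (l + 1), d * p ^ n) < p ^ (2 * l) := by
  have hs : ∀ l, ∑ n ∈ Finset.range (l + 1), p ^ n ≤ 2 * p ^ l := by
    intro l
    induction l with
    | zero => simp
    | succ l ih =>
      rw [Finset.sum_range_succ]
      have : 2 * p ^ l ≤ p ^ (l + 1) := by rw [pow_succ, mul_comm]; gcongr
      omega
  refine ⟨e + 4 * d + 1, by omega, ?_⟩
  set l := e + 4 * d + 1 with hl
  have h1 : l < p ^ l := Nat.lt_pow_self (by omega)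
  have h2 := hs l
  rw [← Finset.mul_sum, two_mul l, pow_add]
  nlinarith [Nat.mul_le_mul_left d h2]

theorem ft_count (F : (ZMod p)[X][X]) (h : (ZMod p)[X]) (hh : h ≠ 0)
    (hyp : ∀ l, 1 ≤ l → ∀ x : GaloisField p (2 * l), aeval x h ≠ 0 →
      ∃ n, n < 2 * l ∧ aevalAeval x (x ^ p ^ n) F = 0) :
    ∃ n, F.eval (X ^ p ^ n) = 0 ∨ (Bivariate.swap F).eval (X ^ p ^ n) = 0 := by
  classical
  by_contra! hcon
  have hp := (Fact.out : p.Prime)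
  obtain ⟨d1, hd1⟩ := ft_deg F
  obtain ⟨d2, hd2⟩ := ft_deg (Bivariate.swap F)
  obtain ⟨l, hl, hlt⟩ := ft_arith (p := p) h.natDegree (d1 + d2) hp.two_le
  let K := GaloisField p (2 * l)
  let _ : Fintype K := Fintype.ofFinite K
  have hcard : Fintype.card K = p ^ (2 * l) := by
    rw [← Nat.card_eq_fintype_card]; exact GaloisField.card p (2 * l) (by omega)
  let Z (f : (ZMod p)[X]) : Finset K := Finset.univ.filter fun x : K => aeval x f = 0
  have hcov : (Finset.univ : Finset K) ⊆ Z h ∪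
      ((Finset.range (l + 1)).biUnion (fun n => Z (F.eval (X ^ p ^ n))) ∪
       (Finset.range (l + 1)).biUnion
        (fun n => (Z ((Bivariate.swap F).eval (X ^ p ^ n))).image (fun y => y ^ p ^ n))) := by
    intro x _
    by_cases hx : aeval x h = 0
    · apply Finset.mem_union_left
      simpa [Z] using hx
    apply Finset.mem_union_right
    obtain ⟨n, hn, hF⟩ := hyp l hl x hx
    by_cases hnl : n ≤ l
    · apply Finset.mem_union_left
      rw [Finset.mem_biUnion]
      refine ⟨n, by simpa [Nat.lt_succ_iff] using hnl, ?_⟩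
      rw [ft_eval] at hF
      simpa [Z] using hF
    · apply Finset.mem_union_right
      rw [Finset.mem_biUnion]
      refine ⟨2 * l - n, by simp; omega, ?_⟩
      rw [Finset.mem_image]
      have hxx : (x ^ p ^ n) ^ p ^ (2 * l - n) = x := by
        rw [← pow_mul, ← pow_add, Nat.add_sub_cancel' hn.le, ← hcard, FiniteField.pow_card]
      refine ⟨x ^ p ^ n, ?_, hxx⟩
      have : aeval (x ^ p ^ n) ((Bivariate.swap F).eval (X ^ p ^ (2 * l - n))) = 0 := by
        rw [← ft_eval, hxx, Bivariate.aevalAeval_swap, hF]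
      simpa [Z] using this
  have hle := Finset.card_le_card hcov
  rw [Finset.card_univ, hcard] at hle
  have e1 : (Z h).card ≤ h.natDegree := ft_card K h hh
  have e2 : ((Finset.range (l + 1)).biUnion (fun n => Z (F.eval (X ^ p ^ n)))).card ≤
      ∑ n ∈ Finset.range (l + 1), (d1 + d2) * p ^ n := by
    refine Finset.card_biUnion_le.trans (Finset.sum_le_sum fun n _ => ?_)
    refine (ft_card K _ (hcon n).1).trans ((hd1 _ (Nat.one_le_pow _ _ hp.pos)).trans ?_)
    gcongr; omega
  have e3 : ((Finset.range (l + 1)).biUnion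
        (fun n => (Z ((Bivariate.swap F).eval (X ^ p ^ n))).image (fun y => y ^ p ^ n))).card ≤
      ∑ n ∈ Finset.range (l + 1), (d1 + d2) * p ^ n := by
    refine Finset.card_biUnion_le.trans (Finset.sum_le_sum fun n _ => ?_)
    refine Finset.card_image_le.trans ?_
    refine (ft_card K _ (hcon n).2).trans ((hd2 _ (Nat.one_le_pow _ _ hp.pos)).trans ?_)
    gcongr; omega
  have e4 := Finset.card_union_le (Z h) ((Finset.range (l + 1)).biUnion (fun n => Z (F.eval (X ^ p ^ n))) ∪
       (Finset.range (l + 1)).biUnion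
        (fun n => (Z ((Bivariate.swap F).eval (X ^ p ^ n))).image (fun y => y ^ p ^ n)))
  have e5 := Finset.card_union_le ((Finset.range (l + 1)).biUnion (fun n => Z (F.eval (X ^ p ^ n))))
       ((Finset.range (l + 1)).biUnion
        (fun n => (Z ((Bivariate.swap F).eval (X ^ p ^ n))).image (fun y => y ^ p ^ n)))
  omega

theorem ft_elem [IsDomain A] [Algebra.FiniteType (ZMod p) A] (a a' : A)
    (H : ∀ P : Ideal A, P.IsPrime → ∀ g : (ZMod p)[X], aeval a g ∈ P ↔ aeval a' g ∈ P) :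
    ∃ n, a' = a ^ p ^ n ∨ a = a' ^ p ^ n := by
  by_cases ha : IsAlgebraic (ZMod p) a
  · obtain ⟨n, hn⟩ := ft_alg a a' H ha
    exact ⟨n, Or.inl hn⟩
  have htr : Function.Injective (aeval (R := ZMod p) a) := by
    rw [← transcendental_iff_injective]; exact ha
  have hnb : RingHom.ker (aevalAeval (R := ZMod p) a a') ≠ ⊥ := by
    intro h
    exact ft_indep a a' H ((RingHom.injective_iff_ker_eq_bot _).2 h)
  obtain ⟨F, hFm, hF⟩ := (RingHom.ker_isPrime
    (aevalAeval (R := ZMod p) a a')).exists_mem_prime_of_ne_bot hnb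
  rw [RingHom.mem_ker] at hFm
  obtain ⟨h, hh, hP⟩ := ft_chev (aeval (R := ZMod p) a).toRingHom (ft_finiteType _) htr
  obtain ⟨n, hn⟩ := ft_count F h hh (by
    intro l hl x hx
    let K := GaloisField p (2 * l)
    let _ : Fintype K := Fintype.ofFinite K
    have hcard : Fintype.card K = p ^ (2 * l) := by
      rw [← Nat.card_eq_fintype_card]; exact GaloisField.card p (2 * l) (by omega)
    let P := RingHom.ker (aeval (R := ZMod p) x)
    have hPp : P.IsPrime := RingHom.ker_isPrime _
    obtain ⟨Q, hQ, hQP⟩ := hP P hPp (by rw [RingHom.mem_ker]; exact hx)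
    obtain ⟨M, hM, hQM⟩ := Q.exists_le_maximal hQ.ne_top
    have hPb : P ≠ ⊥ := by
      intro hb
      have h1 : IsAlgebraic (ZMod p) x := Algebra.IsAlgebraic.isAlgebraic x
      exact (transcendental_iff_injective.2 ((RingHom.injective_iff_ker_eq_bot _).2 hb)) h1
    have hPm : P.IsMaximal := IsPrime.to_maximal_ideal hPb
    have hMp := hM.isPrime
    have hMP : M.comap (aeval (R := ZMod p) a).toRingHom = P := by
      refine (hPm.eq_of_le (Ideal.comap_ne_top _ hM.ne_top) ?_).symm
      rw [← hQP]
      exact Ideal.comap_mono hQM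
    obtain ⟨n, hn⟩ := ft_residue a a' M (fun g => (H M hMp g).1)
    refine ⟨n % (2 * l), Nat.mod_lt _ (by omega), ?_⟩
    have hxn : x ^ p ^ (n % (2 * l)) = x ^ p ^ n := by
      conv_rhs => rw [← Nat.mod_add_div n (2 * l), pow_add, pow_mul, pow_mul p (2 * l), ← hcard,
        FiniteField.pow_card_pow]
    rw [hxn, ft_eval]
    have : F.eval (X ^ p ^ n) ∈ M.comap (aeval (R := ZMod p) a).toRingHom := by
      rw [Ideal.mem_comap]
      change aeval a (F.eval (X ^ p ^ n)) ∈ M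
      rw [← ft_eval, ← Ideal.Quotient.eq_zero_iff_mem]
      have e : ∀ b : A, Ideal.Quotient.mk M (aevalAeval (R := ZMod p) a b F) =
          aevalAeval (R := ZMod p) (Ideal.Quotient.mk M a) (Ideal.Quotient.mk M b) F := by
        intro b
        have : (Ideal.Quotient.mkₐ (ZMod p) M).comp (aevalAeval (R := ZMod p) a b) =
          aevalAeval (R := ZMod p) (Ideal.Quotient.mk M a) (Ideal.Quotient.mk M b) := by
          apply (aevalAevalEquiv (ZMod p) (A ⧸ M)).symm.injective
          simp
        exact DFunLike.congr_fun this F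
      rw [e, ← Ideal.Quotient.eq.2 hn, ← e, hFm, map_zero]
    rw [hMP] at this
    exact this)
  refine ⟨n, ?_⟩
  rcases hn with hn | hn
  · left
    obtain ⟨G, hG⟩ := ft_prime F hF _ hn
    have := congrArg (aevalAeval (R := ZMod p) a a') hG
    rw [map_mul, hFm, zero_mul, map_sub] at this
    simpa [sub_eq_zero] using this
  · right
    have hF' : Prime (Bivariate.swap F) := (MulEquiv.prime_iff (Bivariate.swap (R := ZMod p))).2 hF
    obtain ⟨G, hG⟩ := ft_prime _ hF' _ hn
    have := congrArg (aevalAeval (R := ZMod p) a' a) hG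
    rw [map_mul, Bivariate.aevalAeval_swap, hFm, zero_mul, map_sub] at this
    simpa [sub_eq_zero] using this

theorem ft_npow {K : Type*} [Field K] [Algebra (ZMod p) K] (v : K) (hv : Transcendental (ZMod p) v)
    (i j : ℕ) (hi : i ≠ 0) : v ^ i ≠ (v + 1) ^ j ∧ v ^ i * (v + 1) ^ j ≠ 1 := by
  rw [transcendental_iff] at hv
  constructor
  · intro h
    have := hv (X ^ i - (X + 1) ^ j) (by simp [h])
    have := congrArg (eval 0) this
    simp [hi] at this
  · intro h
    have := hv (X ^ i * (X + 1) ^ j - 1) (by simp [h])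
    have := congrArg (eval 0) this
    simp [hi] at this

theorem ft_zpow {K : Type*} [Field K] [Algebra (ZMod p) K] (v : K) (hv : Transcendental (ZMod p) v)
    (i j : ℤ) (hi : i ≠ 0) : v ^ i ≠ (v + 1) ^ j := by
  have hv1 : v + 1 ≠ 0 := by
    intro h
    rw [transcendental_iff] at hv
    have := hv (X + 1) (by simp [h])
    have := congrArg (coeff · 1) this
    simp [coeff_one] at this
  have pos : ∀ (i : ℕ) (j : ℤ), i ≠ 0 → v ^ i ≠ (v + 1) ^ j := by
    intro i j hi h
    obtain ⟨n, rfl | rfl⟩ := j.eq_nat_or_neg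
    · rw [zpow_natCast] at h
      exact (ft_npow v hv i n hi).1 h
    · rw [zpow_neg, zpow_natCast] at h
      refine (ft_npow v hv i n hi).2 ?_
      rw [h, inv_mul_cancel₀ (pow_ne_zero _ hv1)]
  intro h
  obtain ⟨n, rfl | rfl⟩ := i.eq_nat_or_neg
  · exact pos n j (by simpa using hi) (by simpa using h)
  · refine pos n (-j) (by simpa using hi) ?_
    rw [zpow_neg, ← h, zpow_neg, inv_inv, zpow_natCast]

theorem ft_inj {K : Type*} [Field K] [Algebra (ZMod p) K] (v : K) (hv : Transcendental (ZMod p) v)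
    (i j : ℕ) (h : v ^ i = v ^ j) : i = j := by
  rw [transcendental_iff_injective] at hv
  have : (X ^ i : (ZMod p)[X]) = X ^ j := hv (by simpa using h)
  simpa using congrArg natDegree this

theorem ft_dep {K : Type*} [Field K] [Algebra (ZMod p) K] (u v u' v' : K)
    (hu : Transcendental (ZMod p) u) (hv : Transcendental (ZMod p) v) (q1 q2 r1 r2 t1 t2 : ℕ)
    (ht2 : t2 ≠ 0)
    (hq : u ^ q1 = u' ^ q2) (hr : v ^ r1 = v' ^ r2) (ht : (u * v) ^ t1 = (u' * v') ^ t2)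
    (hne : q1 * r2 ≠ r1 * q2) : ∃ M N : ℤ, M ≠ 0 ∧ N ≠ 0 ∧ u ^ M = v ^ N := by
  have hu0 : u ≠ 0 := by rintro rfl; exact hu isAlgebraic_zero
  have hv0 : v ≠ 0 := by rintro rfl; exact hv isAlgebraic_zero
  have key : u ^ (t1 * q2 * r2) * v ^ (t1 * q2 * r2) = u ^ (q1 * r2 * t2) * v ^ (r1 * q2 * t2) := by
    calc _ = ((u * v) ^ t1) ^ (q2 * r2) := by rw [← mul_pow, ← pow_mul, mul_assoc]
      _ = (u' ^ q2) ^ (r2 * t2) * (v' ^ r2) ^ (q2 * t2) := by rw [ht]; ring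
      _ = _ := by rw [← hq, ← hr]; ring
  have hgd : q1 * r2 * t2 ≠ r1 * q2 * t2 := fun h => hne (Nat.eq_of_mul_eq_mul_right (by omega) h)
  generalize t1 * q2 * r2 = α at *
  generalize q1 * r2 * t2 = γ at *
  generalize r1 * q2 * t2 = δ at *
  have h1 : α ≠ γ := by
    rintro rfl
    exact hgd (ft_inj v hv _ _ (mul_left_cancel₀ (pow_ne_zero _ hu0) key))
  have h2 : α ≠ δ := by
    rintro rfl
    exact hgd (ft_inj u hu _ _ (mul_right_cancel₀ (pow_ne_zero _ hv0) key)).symm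
  refine ⟨(α : ℤ) - γ, (δ : ℤ) - α, by omega, by omega, ?_⟩
  rw [zpow_sub₀ hu0, zpow_sub₀ hv0]
  simp only [zpow_natCast]
  rw [div_eq_div_iff (pow_ne_zero _ hu0) (pow_ne_zero _ hv0), key]
  ring

theorem ft_core [IsDomain A] [CharP A p] {B : Type*} [CommRing B] [Algebra (ZMod p) B]
    (φ ψ : B →ₐ[ZMod p] A) (hel : ∀ b, ∃ n, ψ b = φ b ^ p ^ n ∨ φ b = ψ b ^ p ^ n)
    (b : B) (hb : Transcendental (ZMod p) (φ b)) (n : ℕ) (hn : ψ b = φ b ^ p ^ n) (c : B) :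
    ψ c = φ c ^ p ^ n := by
  have hp := (Fact.out : p.Prime)
  let K := FractionRing A
  let ι : A →ₐ[ZMod p] K := IsScalarTower.toAlgHom (ZMod p) A K
  have hι : Function.Injective ι := IsFractionRing.injective A K
  have htr : ∀ x : A, Transcendental (ZMod p) x → Transcendental (ZMod p) (ι x) := by
    intro x hx h
    exact hx ((isAlgebraic_algHom_iff ι hι).1 h)
  have hel' : ∀ c, ∃ s1 s2 : ℕ, s1 ≠ 0 ∧ s2 ≠ 0 ∧ ι (φ c) ^ s1 = ι (ψ c) ^ s2 := by
    intro c
    obtain ⟨m, hm | hm⟩ := hel c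
    · exact ⟨p ^ m, 1, pow_ne_zero _ hp.ne_zero, one_ne_zero, by rw [hm]; simp⟩
    · exact ⟨1, p ^ m, one_ne_zero, pow_ne_zero _ hp.ne_zero, by rw [hm]; simp⟩
  have hn' : ι (φ b) ^ (p ^ n) = ι (ψ b) ^ 1 := by rw [hn]; simp
  have heq : ∀ c, Transcendental (ZMod p) (φ c) → ∀ r1 r2 : ℕ, φ c ^ r1 = ψ c ^ r2 →
      (φ c + 1) ^ r1 = (ψ c + 1) ^ r2 → p ^ n * r2 = r1 * 1 := by
    intro c hc r1 r2 hr hr'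
    by_contra hne
    obtain ⟨t1, t2, -, ht, h1⟩ := hel' (b * c)
    obtain ⟨t1', t2', -, ht', h1'⟩ := hel' (b * (c + 1))
    simp only [map_mul, map_add, map_one] at h1 h1'
    have hc1 : Transcendental (ZMod p) (φ c + 1) := by
      intro h
      apply hc
      simpa using h.sub isAlgebraic_one
    obtain ⟨M, N, hM, hN, e⟩ := ft_dep (p := p) _ _ _ _ (htr _ hb) (htr _ hc) _ _ r1 r2 t1 t2 ht hn'
      (by simpa using congrArg ι hr) h1 hne
    obtain ⟨M', N', hM', hN', e'⟩ := ft_dep (p := p) (ι (φ b)) (ι (φ c) + 1) (ι (ψ b)) (ι (ψ c) + 1)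
      (htr _ hb) (by simpa using htr _ hc1) _ _ r1 r2 t1' t2' ht' hn'
      (by simpa using congrArg ι hr') h1' hne
    apply ft_zpow (p := p) _ (htr _ hc) (N * M') (N' * M) (mul_ne_zero hN hM')
    rw [zpow_mul, ← e, zpow_mul, ← e', ← zpow_mul, ← zpow_mul, mul_comm]
  have htrc : ∀ c, Transcendental (ZMod p) (φ c) → ψ c = φ c ^ p ^ n := by
    intro c hc
    obtain ⟨m, hm | hm⟩ := hel c
    · have := heq c hc (p ^ m) 1 (by rw [hm]; simp) (by
        rw [add_pow_char_pow, hm]; simp)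
      rw [mul_one, mul_one] at this
      rw [this, hm]
    · have := heq c hc 1 (p ^ m) (by rw [hm]; simp) (by
        rw [add_pow_char_pow, hm]; simp)
      obtain ⟨h1, h2⟩ := mul_eq_one.1 (this.trans (mul_one 1))
      rw [h2] at hm
      rw [h1, hm]; simp
  by_cases hc : IsAlgebraic (ZMod p) (φ c)
  · have hbc : Transcendental (ZMod p) (φ (b + c)) := by
      intro h
      apply hb
      simpa using h.sub hc
    have := htrc _ hbc
    rw [map_add, map_add, add_pow_char_pow, hn] at this
    exact add_left_cancel this
  · exact htrc c hc

theorem ft_noTrans [IsDomain A] {B : Type*} [CommRing B] [Algebra (ZMod p) B]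
    [Algebra.FiniteType (ZMod p) B]
    (φ : B →ₐ[ZMod p] A) (h : ∀ b, IsAlgebraic (ZMod p) (φ b)) :
    ∃ b, ∀ c, φ c = 0 ∨ ∃ i : ℕ, φ c = φ b ^ i := by
  let S := φ.range
  have h1 : Algebra.FiniteType (ZMod p) S :=
    Algebra.FiniteType.of_surjective φ.rangeRestrict φ.rangeRestrict_surjective
  have h2 : Algebra.IsIntegral (ZMod p) S := by
    refine ⟨?_⟩
    rintro ⟨_, b, rfl⟩
    have := (h b).isIntegral
    exact (isIntegral_algHom_iff S.val Subtype.val_injective).1 this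
  have h3 : Module.Finite (ZMod p) S := Algebra.IsIntegral.finite
  have h4 : Finite S := Module.finite_of_finite (ZMod p)
  obtain ⟨g, hg⟩ := IsCyclic.exists_monoid_generator (α := Sˣ)
  obtain ⟨b, hb⟩ := φ.rangeRestrict_surjective g
  refine ⟨b, fun c => ?_⟩
  by_cases hc : φ c = 0
  · exact Or.inl hc
  right
  have hf := Finite.isField_of_domain S
  have hu : IsUnit (φ.rangeRestrict c) := by
    obtain ⟨y, hy⟩ := hf.mul_inv_cancel (a := φ.rangeRestrict c) (by
      intro h; exact hc (congrArg Subtype.val h))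
    exact IsUnit.of_mul_eq_one _ hy
  obtain ⟨w, hw⟩ := hu
  obtain ⟨i, hi⟩ := hg w
  refine ⟨i, ?_⟩
  have e1 : φ.rangeRestrict c = φ.rangeRestrict b ^ i := by
    rw [hb, ← hw, ← hi]; simp
  simpa using congrArg Subtype.val e1

end

/-- Let `p` be a prime, `A` an integral domain of characteristic `p` that is
finitely generated as an `𝔽_p`-algebra, `B` a finitely generated `𝔽_p`-algebra, and
`φ ψ : B →+* A` ring homomorphisms inducing the same map on prime spectra. Then for some
`m : ℕ`, either `frob_A^m ∘ φ = ψ` or `frob_A^m ∘ ψ = φ`. -/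
theorem frobenius_twist_of_comap_eq
    (p : ℕ) [Fact p.Prime]
    (A B : Type*) [CommRing A] [IsDomain A] [CharP A p]
    [Algebra (ZMod p) A] [Algebra.FiniteType (ZMod p) A]
    [CommRing B] [Algebra (ZMod p) B] [Algebra.FiniteType (ZMod p) B]
    (φ ψ : B →+* A)
    (h : (PrimeSpectrum.comap φ : PrimeSpectrum A → PrimeSpectrum B) =
      PrimeSpectrum.comap ψ) :
    ∃ m : ℕ, (iterateFrobenius A p m).comp φ = ψ ∨ (iterateFrobenius A p m).comp ψ = φ := by
  let φ' : B →ₐ[ZMod p] A := { φ with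
    commutes' := fun r => RingHom.congr_fun
      (RingHom.ext_zmod (φ.comp (algebraMap (ZMod p) B)) (algebraMap (ZMod p) A)) r }
  let ψ' : B →ₐ[ZMod p] A := { ψ with
    commutes' := fun r => RingHom.congr_fun
      (RingHom.ext_zmod (ψ.comp (algebraMap (ZMod p) B)) (algebraMap (ZMod p) A)) r }
  have hmem : ∀ P : Ideal A, P.IsPrime → ∀ b, φ' b ∈ P ↔ ψ' b ∈ P := by
    intro P hP b
    have h1 := congrArg PrimeSpectrum.asIdeal (congrFun h ⟨P, hP⟩)
    exact SetLike.ext_iff.1 h1 b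
  have hker : ∀ b, φ' b = 0 ↔ ψ' b = 0 := fun b => by
    simpa using hmem ⊥ Ideal.isPrime_bot b
  have hel : ∀ b, ∃ n, ψ' b = φ' b ^ p ^ n ∨ φ' b = ψ' b ^ p ^ n := by
    intro b
    apply ft_elem
    intro P hP g
    rw [aeval_algHom_apply, aeval_algHom_apply]
    exact hmem P hP _
  suffices hs : ∃ n, (∀ c, ψ' c = φ' c ^ p ^ n) ∨ (∀ c, φ' c = ψ' c ^ p ^ n) by
    obtain ⟨n, hn | hn⟩ := hs
    · refine ⟨n, Or.inl (RingHom.ext fun c => ?_)⟩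
      rw [RingHom.comp_apply, iterateFrobenius_def]
      exact (hn c).symm
    · refine ⟨n, Or.inr (RingHom.ext fun c => ?_)⟩
      rw [RingHom.comp_apply, iterateFrobenius_def]
      exact (hn c).symm
  by_cases hall : ∀ b, IsAlgebraic (ZMod p) (φ' b)
  · obtain ⟨b, hb⟩ := ft_noTrans φ' hall
    have hb' : ∀ c, (φ' c = 0 ∧ ψ' c = 0) ∨ ∃ i : ℕ, φ' c = φ' b ^ i ∧ ψ' c = ψ' b ^ i := by
      intro c
      rcases hb c with h0 | ⟨i, hi⟩
      · exact Or.inl ⟨h0, (hker c).1 h0⟩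
      · refine Or.inr ⟨i, hi, ?_⟩
        have := (hker (c - b ^ i)).1 (by simp [hi])
        simpa [sub_eq_zero] using this
    have hp := (Fact.out : p.Prime)
    obtain ⟨n, hn | hn⟩ := hel b
    · refine ⟨n, Or.inl fun c => ?_⟩
      rcases hb' c with ⟨h1, h2⟩ | ⟨i, h1, h2⟩
      · rw [h1, h2, zero_pow (pow_ne_zero _ hp.ne_zero)]
      · rw [h1, h2, hn, pow_right_comm]
    · refine ⟨n, Or.inr fun c => ?_⟩
      rcases hb' c with ⟨h1, h2⟩ | ⟨i, h1, h2⟩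
      · rw [h1, h2, zero_pow (pow_ne_zero _ hp.ne_zero)]
      · rw [h1, h2, hn, pow_right_comm]
  · push Not at hall
    obtain ⟨b, hb⟩ := hall
    have hb' : Transcendental (ZMod p) (ψ' b) := by
      rintro ⟨g, hg, hg0⟩
      refine hb ⟨g, hg, ?_⟩
      rw [aeval_algHom_apply] at hg0 ⊢
      exact (hker _).2 hg0
    obtain ⟨n, hn | hn⟩ := hel b
    · exact ⟨n, Or.inl (ft_core φ' ψ' hel b hb n hn)⟩
    · exact ⟨n, Or.inr (ft_core ψ' φ' (fun c => (hel c).imp fun _ => Or.symm) b hb' n hn)⟩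
end

section
/- Let X be an irreducible scheme of finite type over Spec ℤ such that some point of X has residue field of characteristic zero (i.e., the generic fiber X_ℚ is nonempty). Then the set of points x of X whose residue field is a finite field of prime cardinality (i.e., isomorphic to 𝔽_p for some prime p) is dense in the underlying topological space of X. -/
open AlgebraicGeometry CategoryTheory

open Polynomial in
theorem aux_schur (f : ℤ[X]) (hf : 0 < f.natDegree) (N : ℤ) (hN : N ≠ 0) :
    ∃ p : ℕ, p.Prime ∧ ¬ (p : ℤ) ∣ N ∧ ∃ a : ℤ, (p : ℤ) ∣ f.eval a := by
  have hinf : ∀ g : ℤ[X], g ≠ 0 → ∀ d : ℤ, d ≠ 0 → ∀ a : ℤ, ∃ m : ℤ, g.eval (a + d * m) ≠ 0 := by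
    intro g hg d hd a
    by_contra! h
    have : Set.Infinite {x | g.IsRoot x} := by
      refine Set.Infinite.mono (s := Set.range fun m : ℤ => a + d * m) ?_ ?_
      · rintro _ ⟨m, rfl⟩; exact h m
      · apply Set.infinite_range_of_injective
        intro m m' h; simpa [hd] using h
    exact this (Polynomial.finite_setOfPred_isRoot hg)
  have hf0 : f ≠ 0 := by rintro rfl; simp at hf
  obtain ⟨a, ha⟩ := hinf f hf0 1 one_ne_zero 0
  set a' := 0 + 1 * a
  set c := f.eval a' with hc
  have hc1 : ∀ c : ℤ, f - C c ≠ 0 := by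
    intro c h
    rw [sub_eq_zero] at h
    rw [h] at hf; simp at hf
  obtain ⟨m, hm⟩ := hinf ((f - C c) * (f - C (-c))) (mul_ne_zero (hc1 _) (hc1 _)) (N * c)
    (mul_ne_zero hN ha) a'
  obtain ⟨k, hk⟩ := Polynomial.sub_dvd_eval_sub (a' + N * c * m) a' f
  have hk' : f.eval (a' + N * c * m) = c * (1 + N * (m * k)) := by
    rw [← hc] at hk; linear_combination hk
  simp only [eval_mul, eval_sub, eval_C, hk', mul_ne_zero_iff] at hm
  have hu : (1 + N * (m * k)).natAbs ≠ 1 := by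
    intro h
    rcases Int.natAbs_eq (1 + N * (m * k)) with h' | h' <;> rw [h] at h' <;> rw [h'] at hm <;> simp at hm
  obtain ⟨p, hp, hpd⟩ := Nat.exists_prime_and_dvd hu
  have hpd' : (p : ℤ) ∣ 1 + N * (m * k) := Int.natCast_dvd.mpr hpd
  refine ⟨p, hp, fun h => ?_, _, hk' ▸ hpd'.mul_left _⟩
  have : (p : ℤ) ∣ 1 := (Int.dvd_add_left (h.mul_right _)).mp hpd'
  exact hp.one_lt.ne' (by simpa using Int.eq_one_of_dvd_one (by positivity) this)

theorem aux_numberField {K : Type} [Field K] [Algebra ℚ K] [FiniteDimensional ℚ K] :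
    ∃ α : K, IsIntegral ℤ α ∧ ∀ k : K, ∃ N : ℤ, N ≠ 0 ∧ N • k ∈ Algebra.adjoin ℤ {α} := by
  have : CharZero K := algebraRat.charZero K
  obtain ⟨β, hβ⟩ := Field.exists_primitive_element ℚ K
  have hint : IsIntegral ℚ β := Algebra.IsIntegral.isIntegral β
  obtain ⟨y, hy, hyi⟩ : ∃ y : ℤ, y ≠ 0 ∧ IsIntegral ℤ (y • β) := by
    obtain ⟨y, h⟩ := IsIntegral.exists_multiple_integral_of_isLocalization (nonZeroDivisors ℤ) β hint
    exact ⟨y, nonZeroDivisors.ne_zero y.2, h⟩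
  refine ⟨y • β, hyi, fun k => ?_⟩
  have hk : k ∈ Algebra.adjoin ℚ {β} := by
    rw [← IntermediateField.adjoin_simple_toSubalgebra_of_isAlgebraic hint.isAlgebraic, hβ]; trivial
  induction hk using Algebra.adjoin_induction with
  | mem x hx => 
    rw [Set.mem_singleton_iff.mp hx]
    exact ⟨y, hy, Algebra.subset_adjoin rfl⟩
  | algebraMap q =>
    refine ⟨q.den, by simp, ?_⟩
    have : (q.den : ℤ) • algebraMap ℚ K q = algebraMap ℤ K q.num := by
      simp only [zsmul_eq_mul, Int.cast_natCast, eq_ratCast, algebraMap_int_eq, eq_intCast]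
      exact_mod_cast congrArg (Rat.cast (K := K)) (Rat.den_mul_eq_num q)
    rw [this]; exact Subalgebra.algebraMap_mem _ _
  | add a b _ _ ha hb =>
    obtain ⟨n, hn, h⟩ := ha
    obtain ⟨m, hm, h'⟩ := hb
    refine ⟨n * m, mul_ne_zero hn hm, ?_⟩
    have : (n * m) • (a + b) = m • (n • a) + n • (m • b) := by simp; ring
    rw [this]
    exact add_mem (zsmul_mem h _) (zsmul_mem h' _)
  | mul a b _ _ ha hb =>
    obtain ⟨n, hn, h⟩ := ha
    obtain ⟨m, hm, h'⟩ := hb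
    refine ⟨n * m, mul_ne_zero hn hm, ?_⟩
    have : (n * m) • (a * b) = (n • a) * (m • b) := by simp; ring
    rw [this]
    exact mul_mem h h'

theorem aux_hom_of_numberField {A K : Type} [CommRing A] [Algebra.FiniteType ℤ A]
    [Field K] [Algebra ℚ K] [FiniteDimensional ℚ K] (ψ : A →ₐ[ℤ] K) :
    ∃ p : ℕ, p.Prime ∧ Nonempty (A →+* ZMod p) := by
  have : CharZero K := algebraRat.charZero K
  obtain ⟨α, hα, H⟩ := aux_numberField (K := K)
  choose n hn hnk using H
  obtain ⟨s, hs⟩ := Algebra.FiniteType.out (R := ℤ) (A := A)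
  let S := Algebra.adjoin ℤ {α}
  let N : ℤ := ∏ a ∈ s, n (ψ a)
  have hN : N ≠ 0 := Finset.prod_ne_zero_iff.mpr fun a _ => hn _
  have hNs : ∀ a ∈ s, N • ψ a ∈ S := by
    intro a ha
    obtain ⟨c, hc⟩ := Finset.dvd_prod_of_mem (fun a => n (ψ a)) ha
    have : N • ψ a = c • (n (ψ a) • ψ a) := by
      rw [smul_smul]; congr 1; simp only [N]; rw [hc, mul_comm]
    rw [this]
    exact zsmul_mem (hnk _) _
  obtain ⟨p, hp, hpN, a, ha⟩ := aux_schur (minpoly ℤ α) (minpoly.natDegree_pos hα) N hN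
  have : Fact p.Prime := ⟨hp⟩
  refine ⟨p, hp, ?_⟩
  -- the hom `S → ZMod p`
  let φ : S →+* ZMod p := (AdjoinRoot.lift (Int.castRingHom (ZMod p)) (a : ZMod p) (by
      have : ((Polynomial.eval a (minpoly ℤ α) : ℤ) : ZMod p) = 0 :=
        (ZMod.intCast_zmod_eq_zero_iff_dvd _ _).mpr ha 
      have h2 := Polynomial.eval₂_at_apply (p := minpoly ℤ α) (Int.castRingHom (ZMod p)) a
      simp only [eq_intCast] at h2
      rw [h2, this])).comp
    (minpoly.equivAdjoin hα).symm.toAlgHom.toRingHom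
  let L := Localization.Away (N : S)
  have hNK : (N : K) ≠ 0 := by exact_mod_cast hN
  have hu1 : IsUnit (S.val.toRingHom (N : S)) := by simpa using hNK
  have hu2 : IsUnit (φ (N : S)) := by
    simp only [map_intCast, isUnit_iff_ne_zero, ne_eq]
    rwa [ZMod.intCast_zmod_eq_zero_iff_dvd]
  let j : L →+* K := IsLocalization.Away.lift (N : S) hu1
  let θ : L →+* ZMod p := IsLocalization.Away.lift (N : S) hu2
  have hj : Function.Injective j := by
    rw [injective_iff_map_eq_zero]
    intro x hx
    obtain ⟨m, y, hy⟩ := IsLocalization.Away.surj (N : S) x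
    have h1 : j (algebraMap S L y) = y := IsLocalization.Away.lift_eq _ hu1 y
    rw [← hy, map_mul, hx, zero_mul] at h1
    have h2 : y = 0 := by ext; simp [← h1]
    rw [h2, map_zero] at hy
    refine ((IsLocalization.Away.algebraMap_isUnit (S := L) (N : S)).pow m).mul_left_eq_zero.mp ?_
    simpa using hy
  have hr : ∀ x, ψ.toRingHom x ∈ j.range := by
    intro x
    have hx : x ∈ Algebra.adjoin ℤ (s : Set A) := hs ▸ trivial
    induction hx using Algebra.adjoin_induction with
    | algebraMap r => exact ⟨(r : L), by simp⟩
    | add a b _ _ ha hb => rw [map_add]; exact add_mem ha hb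
    | mul a b _ _ ha hb => rw [map_mul]; exact mul_mem ha hb
    | mem a ha =>
    refine ⟨IsLocalization.mk' L (⟨_, hNs a ha⟩ : S) (⟨(N : S), Submonoid.mem_powers _⟩ : Submonoid.powers (N : S)), ?_⟩
    have h3 := congrArg j (IsLocalization.mk'_spec L (⟨_, hNs a ha⟩ : S) (⟨(N : S), Submonoid.mem_powers _⟩ : Submonoid.powers (N : S)))
    rw [map_mul, show j (algebraMap S L _) = _ from IsLocalization.Away.lift_eq _ hu1 _, show j (algebraMap S L _) = _ from IsLocalization.Away.lift_eq _ hu1 _] at h3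
    change j _ = ψ a
    refine mul_right_cancel₀ hNK ?_
    simpa [mul_comm] using h3
  let e := RingEquiv.ofBijective j.rangeRestrict
    ⟨fun a b hab => hj (congrArg Subtype.val hab), j.rangeRestrict_surjective⟩
  exact ⟨θ.comp (e.symm.toRingHom.comp (ψ.toRingHom.codRestrict j.range hr))⟩

open TensorProduct in
theorem aux_hom {A F : Type} [CommRing A] [Algebra.FiniteType ℤ A]
    [Field F] [CharZero F] (g : A →+* F) :
    ∃ p : ℕ, p.Prime ∧ Nonempty (A →+* ZMod p) := by
  let G : ℚ ⊗[ℤ] A →ₐ[ℤ] F :=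
    Algebra.TensorProduct.lift (algebraMap ℚ F).toIntAlgHom g.toIntAlgHom (fun _ _ => mul_comm _ _)
  have : Nontrivial (ℚ ⊗[ℤ] A) := G.toRingHom.domain_nontrivial
  obtain ⟨M, hM⟩ := Ideal.exists_maximal (ℚ ⊗[ℤ] A)
  let := Ideal.Quotient.field M
  have : Algebra.FiniteType ℚ ((ℚ ⊗[ℤ] A) ⧸ M) := inferInstance
  have : Module.Finite ℚ ((ℚ ⊗[ℤ] A) ⧸ M) := finite_of_finite_type_of_isJacobsonRing _ _
  exact aux_hom_of_numberField (K := (ℚ ⊗[ℤ] A) ⧸ M)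
    ((Ideal.Quotient.mk M).comp (Algebra.TensorProduct.includeRight : A →ₐ[ℤ] ℚ ⊗[ℤ] A).toRingHom).toIntAlgHom

theorem dense_primeField_points
    (X : Scheme) [IrreducibleSpace X]
    (sX : X ⟶ Spec (CommRingCat.of ℤ)) [LocallyOfFiniteType sX] [QuasiCompact sX]
    (x₀ : X) (hx₀ : CharZero (X.residueField x₀)) :
    Dense {x : X | ∃ p : ℕ, p.Prime ∧ Nonempty (X.residueField x ≃+* ZMod p)} := by
  rw [X.isBasis_affineOpens.dense_iff]
  rintro _ ⟨U, hU, rfl⟩ hne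
  have hUa : IsAffineOpen U := hU
  have hη : genericPoint X ∈ U := by
    simpa using (genericPoint_spec X).mem_open_set_iff U.2 |>.mpr (by simpa using hne)
  have hchar : CharZero (X.residueField (genericPoint X)) := by
    refine charZero_of_inj_zero fun p hp0 => ?_
    by_contra hp
    have h1 : x₀ ∈ X.basicOpen ((p : Γ(X, ⊤))) := by
      rw [← X.evaluation_ne_zero_iff_mem_basicOpen x₀ (TopologicalSpace.Opens.mem_top x₀)]
      simpa using hp
    have h2 : genericPoint X ∈ X.basicOpen ((p : Γ(X, ⊤))) :=
      (genericPoint_spec X).mem_open_set_iff (X.basicOpen _).2 |>.mpr (by simpa using ⟨x₀, h1⟩)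
    rw [← X.evaluation_ne_zero_iff_mem_basicOpen _ (TopologicalSpace.Opens.mem_top _)] at h2
    simp [hp0] at h2
  have hft : Algebra.FiniteType ℤ Γ(X, U) := by
    have h1 := HasRingHomProperty.appLE @LocallyOfFiniteType sX inferInstance
      ⟨⊤, isAffineOpen_top _⟩ ⟨U, hUa⟩ le_top
    have h2 : RingHom.FiniteType ((Scheme.ΓSpecIso (CommRingCat.of ℤ)).inv.hom) :=
      RingHom.FiniteType.of_surjective _ 
        (ConcreteCategory.bijective_of_isIso (Scheme.ΓSpecIso (CommRingCat.of ℤ)).inv).2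
    have h3 := h1.comp h2
    rw [← RingHom.finiteType_algebraMap]
    convert h3
    exact Subsingleton.elim _ _
  obtain ⟨p, hp, ⟨g⟩⟩ := aux_hom (A := Γ(X, U)) (F := X.residueField (genericPoint X))
    (X.evaluation U _ hη).hom
  have : Fact p.Prime := ⟨hp⟩
  let h : Spec (.of (ZMod p)) ⟶ X := Spec.map (CommRingCat.ofHom g) ≫ hUa.fromSpec
  let P := Scheme.SpecToEquivOfField (ZMod p) X h
  refine ⟨P.1, ?_, p, hp, ⟨RingEquiv.ofBijective P.2.hom ⟨P.2.hom.injective, ?_⟩⟩⟩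
  · have : P.1 ∈ Set.range hUa.fromSpec := ⟨Spec.map (CommRingCat.ofHom g) (IsLocalRing.closedPoint _), rfl⟩
    rwa [hUa.range_fromSpec] at this
  · exact ZMod.ringHom_surjective _
end

section
/- Let k be a field and let X be an irreducible scheme of finite type over k whose underlying topological space has Krull dimension at least 1. Then for any two closed points x and y of X there exists a closed irreducible subset Z of the underlying space of X of topological Krull dimension 1 that contains both x and y. -/
open AlgebraicGeometry CategoryTheory

section Helpers
open Polynomial

section Part1
theorem exists_val_of_prime {A E : Type*} [CommRing A] [Field E] (φ : A →+* E) (m : Ideal A)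
    [m.IsPrime] (h : RingHom.ker φ ≤ m) :
    ∃ O : ValuationSubring E, (∀ a, φ a ∈ O) ∧ (∀ a ∈ m, O.valuation (φ a) < 1) ∧
      ∀ a, a ∉ m → O.valuation (φ a) = 1 := by
  have hu : ∀ y : m.primeCompl, IsUnit (φ y) := by
    rintro ⟨y, hy⟩
    rw [isUnit_iff_ne_zero]
    intro h0
    exact hy (h h0)
  let ψ : Localization.AtPrime m →+* E := IsLocalization.lift hu
  have hψ : ∀ a, ψ (algebraMap A _ a) = φ a := fun a => IsLocalization.lift_eq hu a
  obtain ⟨O, hO, hloc⟩ := IsLocalRing.exists_factor_valuationRing ψ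
  have hmem : ∀ a, φ a ∈ O := fun a => by rw [← hψ]; exact hO _
  have hiff : ∀ a, a ∉ m ↔ O.valuation (φ a) = 1 := by
    intro a
    have h1 := O.valuation_eq_one_iff ⟨φ a, hmem a⟩
    change _ ↔ O.valuation (φ a) = 1 at h1
    rw [← h1]
    have h2 : (⟨φ a, hmem a⟩ : O) = ψ.codRestrict O.toSubring hO (algebraMap A _ a) := by
      apply Subtype.ext; exact (hψ a).symm
    rw [h2]
    change a ∈ m.primeCompl ↔ _
    rw [← IsLocalization.AtPrime.isUnit_to_map_iff (Localization.AtPrime m) m a]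
    constructor
    · intro h; exact h.map (ψ.codRestrict O.toSubring hO)
    · intro h; exact hloc.map_nonunit _ h
  refine ⟨O, hmem, fun a ha => ?_, fun a ha => (hiff a).1 ha⟩
  refine lt_of_le_of_ne ((O.valuation_le_one_iff _).2 (hmem a)) ?_
  intro h; exact (hiff a).2 h ha

/-- `α` has transcendental residue over `L`. -/
def ResTr (L : Type*) {K : Type*} [Field L] [Field K] [Algebra L K] (V : ValuationSubring K)
    (α : K) : Prop := ∀ f : L[X], f ≠ 0 → V.valuation (aeval α f) = 1

section
variable {L K : Type*} [Field L] [Field K] [Algebra L K] {V : ValuationSubring K}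

theorem ResTr.comp {α : K} (h : ResTr L V α) (f : L[X]) (hf : 0 < f.natDegree) :
    ResTr L V (aeval α f) := by
  intro g hg
  rw [← aeval_comp]
  apply h
  intro h0
  rw [comp_eq_zero_iff] at h0
  rcases h0 with h0 | h0
  · exact hg h0
  · rw [h0.2, natDegree_C] at hf; exact lt_irrefl _ hf

theorem ResTr.inv {α : K} (h : ResTr L V α) : ResTr L V α⁻¹ := by
  intro g hg
  have h1 : V.valuation α = 1 := by simpa using h X X_ne_zero
  have hα : α ≠ 0 := by rintro rfl; simp at h1
  have h2 := h g.reverse (by simpa using hg)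
  have h3 : aeval α g.reverse = α ^ g.natDegree * aeval α⁻¹ g := by
    letI := invertibleOfNonzero (inv_ne_zero hα)
    have := Polynomial.eval₂_reverse_mul_pow (algebraMap L K) α⁻¹ g
    simp only [invOf_eq_inv, inv_inv] at this
    rw [aeval_def, aeval_def, ← this, mul_comm, mul_assoc, ← mul_pow, inv_mul_cancel₀ hα]; simp
  rw [h3, map_mul, map_pow, h1] at h2
  simpa using h2

theorem ResTr.mem {α : K} (h : ResTr L V α) (f : L[X]) : aeval α f ∈ V := by
  by_cases hf : f = 0
  · subst hf; simp
  · rw [← V.valuation_le_one_iff, h f hf]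

theorem ResTr.const {α : K} (h : ResTr L V α) (c : L) : algebraMap L K c ∈ V := by
  simpa using h.mem (C c)

theorem ResTr.add {α β : K} (h : ResTr L V α) (hβ : V.valuation β < 1) : ResTr L V (α + β) := by
  intro f hf
  have hα : α ∈ V := by simpa using h.mem X
  have hβ' : β ∈ V := (V.valuation_le_one_iff _).1 hβ.le
  let c : L →+* V := (algebraMap L K).codRestrict V.toSubring (fun x => h.const x)
  let F : V[X] := f.map c
  have key : ∀ z : V, ((F.eval z : V) : K) = aeval (z : K) f := by
    intro z
    have : (V.subtype) (F.eval z) = eval₂ (V.subtype.comp c) (V.subtype z) f := by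
      rw [Polynomial.eval_map, Polynomial.hom_eval₂]
    rw [aeval_def]
    exact this
  obtain ⟨q, hq⟩ := Polynomial.sub_dvd_eval_sub (⟨α, hα⟩ + ⟨β, hβ'⟩ : V) ⟨α, hα⟩ F
  have hq' : aeval (α + β) f - aeval α f = β * q := by
    have := congrArg (fun z : V => (z : K)) hq
    rw [AddSubgroupClass.coe_sub, key, key] at this
    simpa using this
  have h1 : V.valuation (aeval (α + β) f - aeval α f) < 1 := by
    rw [hq', map_mul]
    exact mul_lt_one_of_lt_of_le hβ (V.valuation_le_one q)
  have h2 : aeval (α + β) f = (aeval (α + β) f - aeval α f) + aeval α f := by ring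
  rw [h2, Valuation.map_add_eq_of_lt_right _ (by rw [h f hf]; exact h1), h f hf]

theorem ResTr.exists_small {α : K} (h : ResTr L V α) (W : ValuationSubring K)
    (hW : ∀ c : L, algebraMap L K c ∈ W) :
    ResTr L W α ∨ ∃ β, ResTr L V β ∧ W.valuation β < 1 := by
  by_cases hn : ResTr L W α
  · exact Or.inl hn
  right
  simp only [ResTr, not_forall] at hn
  obtain ⟨f, hf, hne⟩ := hn
  have hdeg : 0 < f.natDegree := by
    by_contra h0
    rw [not_lt, Nat.le_zero, natDegree_eq_zero] at h0
    obtain ⟨c, rfl⟩ := h0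
    have hc : c ≠ 0 := by rintro rfl; simp at hf
    apply hne
    rw [aeval_C]
    have hc1 := (W.valuation_le_one_iff _).2 (hW c)
    have hc2 := (W.valuation_le_one_iff _).2 (hW c⁻¹)
    have hc3 : W.valuation (algebraMap L K c) * W.valuation (algebraMap L K c⁻¹) = 1 := by
      rw [← map_mul, ← map_mul, mul_inv_cancel₀ hc]; simp
    apply le_antisymm hc1
    rw [← hc3]
    exact mul_le_of_le_one_right' hc2
  rcases lt_or_gt_of_ne hne with hlt | hgt
  · exact ⟨_, h.comp f hdeg, hlt⟩
  · refine ⟨_, (h.comp f hdeg).inv, ?_⟩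
    rw [map_inv₀]
    exact inv_lt_one_of_one_lt₀ hgt

theorem ResTr.exists_common {W : ValuationSubring K} {α β : K} (h : ResTr L V α)
    (h' : ResTr L W β) : ∃ s, ResTr L V s ∧ ResTr L W s := by
  rcases h.exists_small W h'.const with h1 | ⟨a, ha, ha'⟩
  · exact ⟨α, h, h1⟩
  rcases h'.exists_small V h.const with h1 | ⟨b, hb, hb'⟩
  · exact ⟨β, h1, h'⟩
  exact ⟨a + b, ha.add hb', by rw [add_comm]; exact hb.add ha'⟩
end

theorem exists_composite {K : Type*} [Field K] (O : ValuationSubring K)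
    (D : Subring (IsLocalRing.ResidueField O)) (g : K)
    (h : ∀ hg : g ∈ O, ¬ IsIntegral D (IsLocalRing.residue O ⟨g, hg⟩)) :
    ∃ O' : ValuationSubring K, O' ≤ O ∧
      (∀ z (hz : z ∈ O), IsLocalRing.residue O ⟨z, hz⟩ ∈ D → z ∈ O') ∧ g ∉ O' := by
  by_cases hg : g ∈ O
  swap
  · exact ⟨O, le_rfl, fun z hz _ => hz, hg⟩
  specialize h hg
  have hex : ∃ V : ValuationSubring (IsLocalRing.ResidueField O), D ≤ V.toSubring ∧
      IsLocalRing.residue O ⟨g, hg⟩ ∉ V := by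
    by_contra hcon
    push Not at hcon
    apply h
    have h1 := @iInf_valuationSubring_superset (IsLocalRing.ResidueField O) _ (D : Set _)
    rw [Subring.closure_eq] at h1
    have h2 : IsLocalRing.residue O ⟨g, hg⟩ ∈ (integralClosure D (IsLocalRing.ResidueField O)).toSubring := by
      rw [← h1, Subring.mem_iInf]
      rintro ⟨V, hV⟩
      exact hcon V hV
    exact h2
  obtain ⟨V, hDV, hgV⟩ := hex
  let S : Subring K := (V.toSubring.comap (IsLocalRing.residue O)).map O.subtype
  have hS : ∀ z, z ∈ S ↔ ∃ hz : z ∈ O, IsLocalRing.residue O ⟨z, hz⟩ ∈ V := by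
    intro z
    constructor
    · rintro ⟨w, hw, rfl⟩
      exact ⟨w.2, hw⟩
    · rintro ⟨hz, hw⟩
      exact ⟨⟨z, hz⟩, hw, rfl⟩
  have hval : ∀ z : K, z ∈ S ∨ z⁻¹ ∈ S := by
    have key : ∀ z : K, z ∈ O → z ∈ S ∨ z⁻¹ ∈ S := by
      intro z hz
      by_cases hz' : z⁻¹ ∈ O
      · rcases V.mem_or_inv_mem (IsLocalRing.residue O ⟨z, hz⟩) with h1 | h1
        · left; rw [hS]; exact ⟨hz, h1⟩
        · by_cases hz0 : z = 0
          · left; subst hz0; exact S.zero_mem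
          right; rw [hS]; refine ⟨hz', ?_⟩
          have h2 : IsLocalRing.residue O ⟨z⁻¹, hz'⟩ = (IsLocalRing.residue O ⟨z, hz⟩)⁻¹ := by
            apply eq_inv_of_mul_eq_one_left
            rw [← map_mul]
            have : (⟨z⁻¹, hz'⟩ * ⟨z, hz⟩ : O) = 1 := Subtype.ext (inv_mul_cancel₀ hz0)
            rw [this, map_one]
          rw [h2]; exact h1
      · left
        rw [hS]
        refine ⟨hz, ?_⟩
        have : IsLocalRing.residue O ⟨z, hz⟩ = 0 := by
          rw [IsLocalRing.residue_eq_zero_iff, ← O.coe_mem_nonunits_iff, O.mem_nonunits_iff_or]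
          exact Or.inr hz'
        rw [this]; exact V.zero_mem
    intro z
    rcases O.mem_or_inv_mem z with h1 | h1
    · exact key z h1
    · have := key _ h1
      rw [inv_inv] at this
      exact this.symm
  refine ⟨ValuationSubring.ofSubring S hval, ?_, ?_, ?_⟩
  · intro z hz
    rw [ValuationSubring.mem_ofSubring, hS] at hz
    exact hz.1
  · intro z hz hzD
    rw [ValuationSubring.mem_ofSubring, hS]
    exact ⟨hz, hDV hzD⟩
  · rw [ValuationSubring.mem_ofSubring, hS]
    rintro ⟨hz, hh⟩
    exact hgV hh
end Part1

section Part2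
theorem val_mem_of_integralElem {R K : Type*} [CommRing R] [Field K] (V : ValuationSubring K)
    (c : R →+* K) (hc : ∀ r, c r ∈ V) (z : K) (hz : c.IsIntegralElem z) : z ∈ V := by
  obtain ⟨p, hp, hz⟩ := hz
  let c' : R →+* V := c.codRestrict V.toSubring hc
  have h : IsIntegral V z := by
    refine ⟨p.map c', hp.map _, ?_⟩
    rw [Polynomial.eval₂_map]
    exact hz
  obtain ⟨y, hy⟩ := IsIntegrallyClosed.algebraMap_eq_of_integral h
  rw [← hy]
  exact y.2

theorem val_eval₂_lt {A K : Type*} [CommRing A] [Field K] (V : ValuationSubring K)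
    (c : A →+* K) (M : A[X]) (hM : ∀ i, V.valuation (c (M.coeff i)) < 1) (z : K) (hz : z ∈ V) :
    V.valuation (M.eval₂ c z) < 1 := by
  rw [eval₂_eq_sum_range]
  apply Valuation.map_sum_lt _ one_ne_zero
  intro i _
  rw [map_mul, map_pow]
  exact mul_lt_one_of_lt_of_le (hM i) (pow_le_one' ((V.valuation_le_one_iff _).2 hz) _)

theorem eval_scaleRoots_div {A K : Type*} [CommRing A] [Field K] (c : A →+* K) (G : A[X])
    (a b : A) (hb : c b ≠ 0) :
    c ((G.scaleRoots b).eval a) = c b ^ G.natDegree * G.eval₂ c (c a / c b) := by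
  rw [← scaleRoots_eval₂_mul, mul_div_cancel₀ _ hb, ← Polynomial.eval₂_at_apply]

theorem scaleRoots_dvd_aux {P : Type*} [CommRing P] (π p₁ p₂ : P) (hπ : Prime π) (h : P[X])
    (hlc : IsUnit h.leadingCoeff) (h1 : π ∣ (h.scaleRoots p₂).eval p₁) (h2 : π ∣ p₂) : π ∣ p₁ := by
  rw [eval_eq_sum_range, natDegree_scaleRoots, Finset.sum_range_succ] at h1
  rw [dvd_add_right] at h1
  · simp only [coeff_scaleRoots, tsub_self, pow_zero, mul_one] at h1
    rw [coeff_natDegree, hlc.dvd_mul_left] at h1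
    exact hπ.dvd_of_dvd_pow h1
  · apply Finset.dvd_sum
    intro i hi
    rw [Finset.mem_range] at hi
    rw [coeff_scaleRoots]
    exact Dvd.dvd.mul_right (Dvd.dvd.mul_left (dvd_pow h2 (by omega)) _) _

theorem S1key {L P A K : Type*} [Field L] [CommRing P] [IsDomain P] [UniqueFactorizationMonoid P]
    [CommRing A] [IsDomain A] [Field K] [Algebra L P] [Algebra L A] [Algebra P A] [Algebra L K]
    [IsScalarTower L P A] [FaithfulSMul P A] [Algebra.IsIntegral P A]
    (φ : A →ₐ[L] K) (hφ : Function.Injective φ) (m : Ideal A) [m.IsPrime]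
    (p₁ p₂ : P) (h₁ : algebraMap P A p₁ ∈ m) (h₂ : algebraMap P A p₂ ∈ m) (h₂0 : p₂ ≠ 0)
    (hcop : ∀ π : P, Prime π → π ∣ p₂ → ¬ π ∣ p₁)
    (f : L[X]) (M : A[X]) (hM : ∀ i, M.coeff i ∈ m)
    (heq : aeval (φ (algebraMap P A p₁) / φ (algebraMap P A p₂)) f =
      M.eval₂ (φ : A →+* K) (φ (algebraMap P A p₁) / φ (algebraMap P A p₂))) : f = 0 := by
  by_contra hf
  let h : L[X] := X * f + 1
  have hdeg : h.natDegree = f.natDegree + 1 := by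
    have : (X * f).natDegree = f.natDegree + 1 := natDegree_X_mul hf
    rw [← this]
    show (X * f + C 1).natDegree = _
    exact natDegree_add_C
  have hh0 : h ≠ 0 := by
    intro h0
    rw [h0] at hdeg
    simp at hdeg
  let hP : P[X] := h.map (algebraMap L P)
  have hPdeg : hP.natDegree = f.natDegree + 1 := by rw [natDegree_map, hdeg]
  have hPlc : IsUnit hP.leadingCoeff := by
    rw [leadingCoeff_map]
    exact (isUnit_iff_ne_zero.2 (leadingCoeff_ne_zero.2 hh0)).map _
  let H : P := (hP.scaleRoots p₂).eval p₁
  let 𝔫 : Ideal P := m.under P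
  have hp1n : p₁ ∈ 𝔫 := h₁
  have hp2n : p₂ ∈ 𝔫 := h₂
  have hHn : H ∈ 𝔫 := by
    simp only [H]
    rw [eval_eq_sum_range]
    apply Ideal.sum_mem
    intro i hi
    rw [natDegree_scaleRoots, Finset.mem_range] at hi
    rw [coeff_scaleRoots]
    rcases Nat.eq_zero_or_pos i with rfl | hi0
    · apply Ideal.mul_mem_right
      apply Ideal.mul_mem_left
      exact Ideal.pow_mem_of_mem _ hp2n _ (by omega)
    · apply Ideal.mul_mem_left
      exact Ideal.pow_mem_of_mem _ hp1n _ (by omega)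
  have hH0 : H ≠ 0 := by
    intro h0
    have hnu : ¬ IsUnit p₂ := fun hu => Ideal.IsPrime.ne_top inferInstance
      (Ideal.eq_top_of_isUnit_mem 𝔫 hp2n hu)
    obtain ⟨π, hπ, hd⟩ := WfDvdMonoid.exists_irreducible_factor hnu h₂0
    have hπ' := hπ.prime
    refine hcop π hπ' hd (scaleRoots_dvd_aux π p₁ p₂ hπ' hP hPlc ?_ hd)
    change π ∣ H
    rw [h0]; exact dvd_zero _
  obtain ⟨π, hπ, hπn, hπH⟩ : ∃ π : P, Prime π ∧ π ∈ 𝔫 ∧ π ∣ H := by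
    obtain ⟨F, hF, u, hu⟩ := UniqueFactorizationMonoid.exists_prime_factors H hH0
    have h1 : F.prod ∈ 𝔫 := by
      have : F.prod = H * ↑u⁻¹ := by rw [← hu]; simp
      rw [this]; exact Ideal.mul_mem_right _ _ hHn
    rw [Ideal.IsPrime.multiset_prod_mem_iff_exists_mem inferInstance] at h1
    obtain ⟨π, hπF, hπ⟩ := h1
    refine ⟨π, hF π hπF, hπ, (Multiset.dvd_prod hπF).trans ⟨_, hu.symm⟩⟩
  have hπ2 : ¬ π ∣ p₂ := fun hd => hcop π hπ hd (scaleRoots_dvd_aux π p₁ p₂ hπ hP hPlc hπH hd)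
  have : (Ideal.span {π}).IsPrime := (Ideal.span_singleton_prime hπ.ne_zero).2 hπ
  obtain ⟨q, hqm, hq, hqo⟩ := Ideal.exists_ideal_le_liesOver_of_le (p := Ideal.span {π})
    (q := 𝔫) m ((Ideal.span_singleton_le_iff_mem _).2 hπn)
  have hqmem : ∀ a : P, algebraMap P A a ∈ q ↔ π ∣ a := by
    intro a
    rw [← Ideal.mem_span_singleton, hqo.over]
    rfl
  let E := FractionRing (A ⧸ q)
  let ψ : A →+* E := (algebraMap (A ⧸ q) E).comp (Ideal.Quotient.mk q)
  have hker : ∀ a, ψ a = 0 ↔ a ∈ q := by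
    intro a
    rw [← Ideal.Quotient.eq_zero_iff_mem]
    exact (IsFractionRing.injective (A ⧸ q) E).eq_iff' (map_zero _)
  obtain ⟨O, hO1, hO2, -⟩ := exists_val_of_prime ψ m (fun a ha => hqm ((hker a).1 ha))
  let a₁ := algebraMap P A p₁
  let a₂ := algebraMap P A p₂
  have hψ2 : ψ a₂ ≠ 0 := by
    rw [Ne, hker, hqmem]; exact hπ2
  let s' : E := ψ a₁ / ψ a₂
  let ι : L →+* E := ψ.comp (algebraMap L A)
  have hhs : h.eval₂ ι s' = 0 := by
    have e1 := eval_scaleRoots_div (ψ.comp (algebraMap P A)) hP p₁ p₂ hψ2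
    have e2 : (ψ.comp (algebraMap P A)) H = 0 := by
      change ψ _ = 0
      rw [hker, hqmem]; exact hπH
    rw [e2] at e1
    have e3 := (mul_eq_zero.1 e1.symm).resolve_left (pow_ne_zero _ hψ2)
    rw [Polynomial.eval₂_map, RingHom.comp_assoc, ← IsScalarTower.algebraMap_eq] at e3
    exact e3
  have hφ2 : φ a₂ ≠ 0 := by
    rw [Ne, map_eq_zero_iff φ hφ, map_eq_zero_iff _ (FaithfulSMul.algebraMap_injective P A)]
    exact h₂0
  let G : A[X] := M - f.map (algebraMap L A)
  have hG : G.eval₂ (φ : A →+* K) (φ a₁ / φ a₂) = 0 := by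
    simp only [G]
    rw [Polynomial.eval₂_sub, Polynomial.eval₂_map, ← heq, sub_eq_zero, aeval_def]
    congr 1
    ext l
    simp
  have hG2 : (G.scaleRoots a₂).eval a₁ = 0 := by
    have e1 := eval_scaleRoots_div (φ : A →+* K) G a₁ a₂ hφ2
    change φ _ = _ * G.eval₂ (φ : A →+* K) (φ a₁ / φ a₂) at e1
    rw [hG, mul_zero] at e1
    exact (map_eq_zero_iff φ hφ).1 e1
  have hG3 : G.eval₂ ψ s' = 0 := by
    have e1 := eval_scaleRoots_div ψ G a₁ a₂ hψ2
    rw [hG2, map_zero] at e1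
    exact (mul_eq_zero.1 e1.symm).resolve_left (pow_ne_zero _ hψ2)
  simp only [G] at hG3
  rw [Polynomial.eval₂_sub, Polynomial.eval₂_map, sub_eq_zero] at hG3
  have hs'f : s' * f.eval₂ ι s' = -1 := by
    simp only [h] at hhs
    rw [Polynomial.eval₂_add, Polynomial.eval₂_mul, eval₂_X, eval₂_one] at hhs
    exact eq_neg_of_add_eq_zero_left hhs
  have hs'O : s' ∈ O := by
    apply val_mem_of_integralElem O ι (fun r => hO1 _)
    refine ⟨h * C h.leadingCoeff⁻¹, monic_mul_leadingCoeff_inv hh0, ?_⟩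
    rw [Polynomial.eval₂_mul, hhs, zero_mul]
  have hv := val_eval₂_lt O ψ M (fun i => hO2 _ (hM i)) s' hs'O
  rw [hG3] at hv
  have : O.valuation (s' * f.eval₂ ι s') < 1 := by
    rw [map_mul, mul_comm]
    exact mul_lt_one_of_lt_of_le hv ((O.valuation_le_one_iff _).2 hs'O)
  rw [hs'f, Valuation.map_neg, map_one] at this
  exact lt_irrefl _ this
end Part2

section Part3
theorem noether_norm {L A : Type*} {K : Type*} [Field L] [CommRing A] [IsDomain A] [Field K]
    [Algebra L A] [Algebra L K] [Algebra.FiniteType L A] (φ : A →ₐ[L] K)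
    (hφ : Function.Injective φ) (hfrac : ∀ z : K, ∃ a b, z = φ a / φ b) :
    ∃ (n : ℕ) (g : MvPolynomial (Fin n) L →ₐ[L] A), Function.Injective g ∧ g.Finite ∧
      Algebra.trdeg L K = n := by
  obtain ⟨n, g, hg, hfin⟩ := exists_finite_inj_algHom_of_fg L A
  refine ⟨n, g, hg, hfin, ?_⟩
  let x : Fin n → K := fun i => φ (g (MvPolynomial.X i))
  have hx : (MvPolynomial.aeval x : MvPolynomial (Fin n) L →ₐ[L] K) = φ.comp g := by
    apply MvPolynomial.algHom_ext
    intro i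
    simp [x]
  have hind : AlgebraicIndependent L x := by
    rw [AlgebraicIndependent, hx]
    exact hφ.comp hg
  have hrange : ∀ p, φ (g p) ∈ Algebra.adjoin L (Set.range x) := by
    intro p
    rw [Algebra.adjoin_range_eq_range_aeval, hx]
    exact ⟨p, rfl⟩
  have halgA : ∀ a, IsAlgebraic (Algebra.adjoin L (Set.range x)) (φ a) := by
    intro a
    apply IsIntegral.isAlgebraic
    obtain ⟨p, hp, hpa⟩ := hfin.to_isIntegral a
    let c : MvPolynomial (Fin n) L →+* Algebra.adjoin L (Set.range x) :=
      ((φ.comp g : _ →ₐ[L] K) : _ →+* K).codRestrict (Algebra.adjoin L (Set.range x)).toSubring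
        hrange
    refine ⟨p.map c, hp.map _, ?_⟩
    rw [Polynomial.eval₂_map]
    have h2 := congrArg (φ : A →+* K) hpa
    rw [Polynomial.hom_eval₂, map_zero] at h2
    exact h2
  have hb : IsTranscendenceBasis L x := by
    rw [isTranscendenceBasis_iff_algebraicIndependent_isAlgebraic]
    refine ⟨hind, ⟨fun z => ?_⟩⟩
    obtain ⟨a, b, rfl⟩ := hfrac z
    rw [div_eq_mul_inv]
    exact (halgA a).mul (halgA b).inv
  have := hb.lift_cardinalMk_eq_trdeg
  simpa using this.symm

theorem S1core {L P A K : Type*} [Field L] [CommRing P] [IsDomain P] [UniqueFactorizationMonoid P]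
    [CommRing A] [IsDomain A] [Field K] [Algebra L P] [Algebra L A] [Algebra P A] [Algebra L K]
    [IsScalarTower L P A] [FaithfulSMul P A] [Algebra.IsIntegral P A]
    (φ : A →ₐ[L] K) (hφ : Function.Injective φ) (m : Ideal A) [m.IsPrime]
    (p₁ p₂ : P) (h₁ : algebraMap P A p₁ ∈ m) (h₂ : algebraMap P A p₂ ∈ m) (h₂0 : p₂ ≠ 0)
    (hcop : ∀ π : P, Prime π → π ∣ p₂ → ¬ π ∣ p₁) :
    ∃ (V : ValuationSubring K) (s : K), (∀ a, φ a ∈ V) ∧ (∀ a ∈ m, V.valuation (φ a) < 1) ∧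
      ResTr L V s := by
  let s : K := φ (algebraMap P A p₁) / φ (algebraMap P A p₂)
  let Φ : A[X] →+* K := eval₂RingHom (φ : A →+* K) s
  let J : Ideal A[X] := m.map C ⊔ RingHom.ker Φ
  let c : L[X] →+* A[X] := mapRingHom (algebraMap L A)
  have hcΦ : ∀ f, Φ (c f) = aeval s f := by
    intro f
    simp only [Φ, c, coe_eval₂RingHom, coe_mapRingHom]
    rw [Polynomial.eval₂_map, aeval_def]
    congr 1
    ext l
    simp
  let T : Submonoid A[X] := (nonZeroDivisors L[X]).map c
  have hdis : Disjoint (J : Set A[X]) T := by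
    rw [Set.disjoint_left]
    rintro _ hJ ⟨f, hf, rfl⟩
    obtain ⟨M, hM, κ, hκ, he⟩ := Submodule.mem_sup.1 hJ
    apply nonZeroDivisors.ne_zero hf
    refine S1key φ hφ m p₁ p₂ h₁ h₂ h₂0 hcop f M (Ideal.mem_map_C_iff.1 hM) ?_
    have := congrArg Φ he
    rw [map_add, RingHom.mem_ker.1 hκ, add_zero] at this
    change Φ M = Φ (c f) at this
    rw [hcΦ] at this
    exact this.symm
  obtain ⟨Q, hQ, hJQ, hQT⟩ := Ideal.exists_le_prime_disjoint J T hdis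
  obtain ⟨V, hV1, hV2, hV3⟩ := exists_val_of_prime Φ Q (le_sup_right.trans hJQ)
  have hC : ∀ a, Φ (C a) = φ a := by intro a; simp [Φ]
  refine ⟨V, s, fun a => ?_, fun a ha => ?_, fun f hf => ?_⟩
  · rw [← hC]; exact hV1 _
  · rw [← hC]; exact hV2 _ (hJQ (Ideal.mem_sup_left (Ideal.mem_map_of_mem _ ha)))
  · rw [← hcΦ]
    refine hV3 _ fun h => Set.disjoint_left.1 hQT h ⟨f, mem_nonZeroDivisors_of_ne_zero hf, rfl⟩

theorem mvPoly_coprime_aux {L : Type*} [Field L] {n : ℕ} (i j : Fin n) (hij : i ≠ j) (f g : L[X])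
    (hf : f ≠ 0) (hg : g ≠ 0) (π : MvPolynomial (Fin n) L) (hπ : Prime π)
    (h1 : π ∣ aeval (MvPolynomial.X i) f) (h2 : π ∣ aeval (MvPolynomial.X j) g) : False := by
  have hvars : ∀ (i : Fin n) (f : L[X]), f ≠ 0 →
      π ∣ aeval (MvPolynomial.X i : MvPolynomial (Fin n) L) f → (π.vars : Set (Fin n)) ⊆ {i} := by
    intro i f hf hd
    have hp0 : aeval (MvPolynomial.X i : MvPolynomial (Fin n) L) f ≠ 0 := by
      have ht : Transcendental L (MvPolynomial.X i : MvPolynomial (Fin n) L) :=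
        MvPolynomial.transcendental_X L i
      intro h0
      exact hf ((transcendental_iff.1 ht) f h0)
    have hs : aeval (MvPolynomial.X i : MvPolynomial (Fin n) L) f ∈
        MvPolynomial.supported L ({i} : Set (Fin n)) := by
      rw [MvPolynomial.supported_eq_adjoin_X, Set.image_singleton]
      exact aeval_mem_adjoin_singleton L _
    rw [MvPolynomial.mem_supported] at hs
    intro l hl
    apply hs
    obtain ⟨q, hq⟩ := hd
    rw [Finset.mem_coe, MvPolynomial.mem_vars_iff_degreeOf_ne_zero] at hl ⊢
    rw [hq] at hp0 ⊢
    rw [MvPolynomial.degreeOf_mul_eq (left_ne_zero_of_mul hp0) (right_ne_zero_of_mul hp0)]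
    omega
  have hempty : π.vars = ∅ := by
    rw [Finset.eq_empty_iff_forall_notMem]
    intro l hl
    have e1 := hvars i f hf h1 hl
    have e2 := hvars j g hg h2 hl
    exact hij (e1.symm.trans e2)
  rw [MvPolynomial.vars_eq_empty_iff_eq_C] at hempty
  apply hπ.not_isUnit
  rw [hempty]
  have : π.coeff 0 ≠ 0 := by
    intro h0
    rw [h0, map_zero] at hempty
    exact hπ.ne_zero hempty
  exact (isUnit_iff_ne_zero.2 this).map _

theorem S1 {L A K : Type*} [Field L] [CommRing A] [IsDomain A] [Field K]
    [Algebra L A] [Algebra L K] [Algebra.FiniteType L A] (φ : A →ₐ[L] K)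
    (hφ : Function.Injective φ) (hfrac : ∀ z : K, ∃ a b, z = φ a / φ b)
    (htr : 2 ≤ Algebra.trdeg L K) (m : Ideal A) [m.IsMaximal] :
    ∃ (V : ValuationSubring K) (s : K), (∀ a, φ a ∈ V) ∧ (∀ a ∈ m, V.valuation (φ a) < 1) ∧
      ResTr L V s := by
  obtain ⟨n, g, hg, hfin, hn⟩ := noether_norm φ hφ hfrac
  rw [hn] at htr
  have hn2 : 2 ≤ n := by exact_mod_cast htr
  algebraize [g.toRingHom]
  have : FaithfulSMul (MvPolynomial (Fin n) L) A := (faithfulSMul_iff_algebraMap_injective _ _).2 hg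
  have : Module.Finite (MvPolynomial (Fin n) L) A := hfin
  have : Algebra.IsIntegral (MvPolynomial (Fin n) L) A := inferInstance
  let := Ideal.Quotient.field m
  have : Module.Finite L (A ⧸ m) := finite_of_finite_type_of_isJacobsonRing L (A ⧸ m)
  have hex : ∀ a : A, ∃ f : L[X], f ≠ 0 ∧ aeval a f ∈ m := by
    intro a
    have hi : IsIntegral L (Ideal.Quotient.mk m a) := Algebra.IsIntegral.isIntegral _
    refine ⟨minpoly L (Ideal.Quotient.mk m a), minpoly.ne_zero hi, ?_⟩
    rw [← Ideal.Quotient.eq_zero_iff_mem]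
    have h1 := minpoly.aeval L (Ideal.Quotient.mk m a)
    have h2 := aeval_algHom_apply (Ideal.Quotient.mkₐ L m) a (minpoly L (Ideal.Quotient.mk m a))
    exact h2.symm.trans h1
  let i0 : Fin n := ⟨0, by omega⟩
  let i1 : Fin n := ⟨1, by omega⟩
  obtain ⟨f₁, hf₁, hm₁⟩ := hex (g (MvPolynomial.X i0))
  obtain ⟨f₂, hf₂, hm₂⟩ := hex (g (MvPolynomial.X i1))
  have hij : i0 ≠ i1 := by simp [i0, i1]
  refine S1core (P := MvPolynomial (Fin n) L) φ hφ m (aeval (MvPolynomial.X i0) f₁)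
    (aeval (MvPolynomial.X i1) f₂) ?_ ?_ ?_ ?_
  · change g _ ∈ m
    rw [← aeval_algHom_apply]; exact hm₁
  · change g _ ∈ m
    rw [← aeval_algHom_apply]; exact hm₂
  · intro h0
    exact hf₂ ((transcendental_iff.1 (MvPolynomial.transcendental_X L i1)) f₂ h0)
  · intro π hπ h2 h1
    exact mvPoly_coprime_aux i0 i1 hij f₁ f₂ hf₁ hf₂ π hπ h1 h2
end Part3

section Part4
theorem minimalPrime_pow_mul {A : Type*} [CommRing A] (I p : Ideal A) (hp : p ∈ I.minimalPrimes)
    (z : A) (hz : z ∈ p) : ∃ y ∉ p, ∃ n : ℕ, y * z ^ n ∈ I := by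
  have hpp : p.IsPrime := hp.1.1
  by_contra hcon
  push Not at hcon
  obtain ⟨q, hq, hIq, hdis⟩ := Ideal.exists_le_prime_disjoint I (p.primeCompl ⊔ Submonoid.powers z)
    (by
      rw [Set.disjoint_left]
      intro a ha hs
      obtain ⟨y, hy, w, ⟨n, rfl⟩, rfl⟩ := Submonoid.mem_sup.1 hs
      exact hcon y hy n ha)
  have hqp : q ≤ p := by
    intro y hy
    by_contra hyp
    exact Set.disjoint_left.1 hdis hy (Submonoid.mem_sup_left hyp)
  have := hp.2 ⟨hq, hIq⟩ hqp hz
  exact Set.disjoint_left.1 hdis this (Submonoid.mem_sup_right (Submonoid.mem_powers z))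

theorem aeval_reflect {L K : Type*} [Field L] [Field K] [Algebra L K] (t : K) (ht : t ≠ 0) (N : ℕ)
    (f : L[X]) (hf : f.natDegree ≤ N) : aeval t⁻¹ (reflect N f) = t⁻¹ ^ N * aeval t f := by
  let := invertibleOfNonzero ht
  have := Polynomial.eval₂_reflect_mul_pow (algebraMap L K) t N f hf
  rw [invOf_eq_inv] at this
  rw [aeval_def, aeval_def, ← this, mul_comm, mul_assoc, ← mul_pow, mul_inv_cancel₀ ht, one_pow,
    mul_one]

theorem int_scale {L K : Type*} [Field L] [Field K] [Algebra L K] (t : K) (ht : t ≠ 0) (z : K)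
    (hz : (aeval t : L[X] →ₐ[L] K).toRingHom.IsIntegralElem z) :
    ∃ N₀, ∀ N ≥ N₀, (aeval t⁻¹ : L[X] →ₐ[L] K).toRingHom.IsIntegralElem (t⁻¹ ^ N * z) := by
  obtain ⟨f, hf, hfz⟩ := hz
  refine ⟨(Finset.range f.natDegree).sup (fun l => (f.coeff l).natDegree), fun N hN => ?_⟩
  let r := f.natDegree
  let G : L[X][X] := X ^ r + ∑ l ∈ Finset.range r, C (reflect (N * (r - l)) (f.coeff l)) * X ^ l
  refine ⟨G, ?_, ?_⟩
  · apply monic_X_pow_add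
    refine lt_of_le_of_lt (degree_sum_le _ _) ?_
    refine (Finset.sup_lt_iff (WithBot.bot_lt_coe r)).2 ?_
    intro l hl
    refine lt_of_le_of_lt (degree_C_mul_X_pow_le _ _) ?_
    rw [Finset.mem_range] at hl
    exact WithBot.coe_lt_coe.2 hl
  · have key : G.eval₂ (aeval t⁻¹ : L[X] →ₐ[L] K).toRingHom (t⁻¹ ^ N * z) =
        t⁻¹ ^ (N * r) * f.eval₂ (aeval t : L[X] →ₐ[L] K).toRingHom z := by
      rw [eval₂_eq_sum_range (p := f), Finset.sum_range_succ]
      simp only [G]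
      rw [Polynomial.eval₂_add, eval₂_finsetSum, eval₂_pow, eval₂_X, mul_add, Finset.mul_sum,
        add_comm]
      congr 1
      · apply Finset.sum_congr rfl
        intro l hl
        have hl' := Finset.mem_range.1 hl
        rw [Polynomial.eval₂_mul, eval₂_C, eval₂_pow, eval₂_X]
        change aeval t⁻¹ _ * _ = _ * (aeval t _ * _)
        rw [aeval_reflect t ht _ _ ?_, mul_pow, ← pow_mul]
        · have : N * r = N * (r - l) + N * l := by rw [← mul_add, Nat.sub_add_cancel hl'.le]
          rw [this, pow_add]; ring
        · have h1 : (f.coeff l).natDegree ≤ N :=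
            (Finset.le_sup (f := fun l => (f.coeff l).natDegree) hl).trans hN
          have h2 : 1 ≤ r - l := by omega
          nlinarith
      · rw [coeff_natDegree, hf.leadingCoeff, map_one, one_mul, mul_pow, ← pow_mul]
    rw [key, hfz, mul_zero]

/-- choose a parameter -/
theorem exists_param {L A K : Type*} [Field L] [CommRing A] [IsDomain A] [Field K]
    [Algebra L A] [Algebra L K] [Algebra.FiniteType L A] (φ : A →ₐ[L] K)
    (hφ : Function.Injective φ) (hfrac : ∀ z : K, ∃ a b, z = φ a / φ b)
    (htr : Algebra.trdeg L K = 1) (p : Ideal A) [p.IsMaximal] :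
    ∃ t ∈ p, Function.Injective (aeval t : L[X] →ₐ[L] A) ∧
      (aeval t : L[X] →ₐ[L] A).toRingHom.IsIntegral := by
  obtain ⟨n, g, hg, hfin, hn⟩ := noether_norm φ hφ hfrac
  rw [hn] at htr
  have hn1 : n = 1 := by exact_mod_cast htr
  subst hn1
  let t0 := g (MvPolynomial.X 0)
  have hex : ∃ f : L[X], f.Monic ∧ aeval t0 f ∈ p := by
    let := Ideal.Quotient.field p
    have : Module.Finite L (A ⧸ p) := finite_of_finite_type_of_isJacobsonRing L (A ⧸ p)
    have hi : IsIntegral L (Ideal.Quotient.mk p t0) := Algebra.IsIntegral.isIntegral _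
    refine ⟨minpoly L (Ideal.Quotient.mk p t0), minpoly.monic hi, ?_⟩
    rw [← Ideal.Quotient.eq_zero_iff_mem]
    have h1 := minpoly.aeval L (Ideal.Quotient.mk p t0)
    have h2 := aeval_algHom_apply (Ideal.Quotient.mkₐ L p) t0 (minpoly L (Ideal.Quotient.mk p t0))
    exact h2.symm.trans h1
  obtain ⟨f, hf, hfp⟩ := hex
  have hdeg : 0 < f.natDegree := by
    rw [hf.natDegree_pos]
    rintro rfl
    rw [map_one] at hfp
    exact Ideal.IsPrime.ne_top inferInstance ((Ideal.eq_top_iff_one p).2 hfp)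
  have ht0 : Function.Injective (aeval t0 : L[X] →ₐ[L] A) := by
    have : (aeval t0 : L[X] →ₐ[L] A) = g.comp (aeval (MvPolynomial.X 0)) := by
      ext; simp [t0]
    rw [this]
    exact hg.comp (transcendental_iff_injective.1 (MvPolynomial.transcendental_X L 0))
  refine ⟨aeval t0 f, hfp, ?_, ?_⟩
  · rw [injective_iff_map_eq_zero]
    intro q hq
    rw [← aeval_comp] at hq
    have := (map_eq_zero_iff _ ht0).1 hq
    rw [comp_eq_zero_iff] at this
    rcases this with h | h
    · exact h
    · rw [h.2, natDegree_C] at hdeg; exact absurd hdeg (lt_irrefl _)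
  · set c : L[X] →+* A := (aeval (aeval t0 f) : L[X] →ₐ[L] A).toRingHom with hc
    have hL : ∀ l : L, c.IsIntegralElem (algebraMap L A l) := by
      intro l
      have : c (C l) = algebraMap L A l := by simp [c]
      rw [← this]
      exact c.isIntegralElem_map
    have hci : c.IsIntegralElem t0 := by
      refine ⟨f.map C - C X, ?_, ?_⟩
      · apply (hf.map C).sub_of_left
        rw [degree_map]
        refine lt_of_le_of_lt degree_C_le ?_
        rw [← natDegree_pos_iff_degree_pos]; exact hdeg
      · rw [Polynomial.eval₂_sub, Polynomial.eval₂_map, eval₂_C]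
        have h1 : c X = aeval t0 f := by simp [c]
        have h2 : c.comp C = algebraMap L A := by ext l; simp [c]
        rw [h1, h2, aeval_def, sub_self]
    have hg' : ∀ q, c.IsIntegralElem (g q) := by
      intro q
      induction q using MvPolynomial.induction_on with
      | C a => rw [← MvPolynomial.algebraMap_eq, AlgHom.commutes]; exact hL a
      | add p q hp hq => rw [map_add]; exact hp.add _ hq
      | mul_X p i hp =>
        rw [map_mul]
        have : i = 0 := Subsingleton.elim _ _
        subst this
        exact hp.mul _ hci
    intro a
    algebraize [c]
    have hB : ∀ q, g q ∈ integralClosure L[X] A := hg'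
    have h1 : IsIntegral (integralClosure L[X] A) a := by
      obtain ⟨F, hF, hFa⟩ := hfin.to_isIntegral a
      let g' : MvPolynomial (Fin 1) L →+* integralClosure L[X] A :=
        g.toRingHom.codRestrict (integralClosure L[X] A).toSubring hB
      refine ⟨F.map g', hF.map _, ?_⟩
      rw [Polynomial.eval₂_map]
      exact hFa
    exact isIntegral_trans (R := L[X]) (A := integralClosure L[X] A) a h1
end Part4

section Part5
theorem RRlin {L A : Type*} [Field L] [CommRing A] [IsDomain A] [Algebra L A] [Algebra L[X] A]
    [IsScalarTower L L[X] A] {d : ℕ} (b : Module.Basis (Fin d) L[X] A) (t : A)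
    (ht : t = algebraMap L[X] A X) (ht0 : t ≠ 0)
    (p : Ideal A) [p.IsPrime] (htp : t ∈ p) (j : A) (hj : j ∉ p) (N m : ℕ) (hm : m = d * N + N + 1) :
    ∃ (c : Fin d → L[X]) (α β : A), (∀ i, (c i).natDegree ≤ d * N) ∧ ∑ i, c i • b i ≠ 0 ∧
      ∑ i, c i • b i = j ^ m * α + t ^ m * β := by
  let a : (Fin d → degreeLT L (d * N + 1)) × degreeLT L m →ₗ[L] A :=
    { toFun := fun x => ∑ i, (x.1 i : L[X]) • b i + (x.2 : L[X]) • (j ^ m)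
      map_add' := by
        intro x y
        simp only [Prod.fst_add, Prod.snd_add, Pi.add_apply, Submodule.coe_add, add_smul,
          Finset.sum_add_distrib]
        abel
      map_smul' := by
        intro r x
        simp only [Prod.smul_fst, Prod.smul_snd, Pi.smul_apply, Submodule.coe_smul, smul_add,
          Finset.smul_sum, RingHom.id_apply, smul_assoc] }
  let q : A →ₗ[L] (Fin d → Fin m → L) :=
    { toFun := fun z i l => (b.repr z i).coeff l
      map_add' := by intro x y; ext i l; simp
      map_smul' := by
        intro r x; ext i l
        have : r • x = (C r : L[X]) • x := by
          rw [← algebraMap_smul L[X] r x]; rfl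
        simp [this] }
  have hq : ∀ z, q z = 0 → ∃ β, z = t ^ m * β := by
    intro z hz
    have h1 : ∀ i, (X : L[X]) ^ m ∣ b.repr z i := by
      intro i
      rw [X_pow_dvd_iff]
      intro l hl
      exact congrFun (congrFun hz i) ⟨l, hl⟩
    choose w hw using h1
    refine ⟨∑ i, w i • b i, ?_⟩
    conv_lhs => rw [← b.sum_repr z]
    rw [Finset.mul_sum]
    apply Finset.sum_congr rfl
    intro i _
    rw [hw, mul_smul, Algebra.smul_def (X ^ m : L[X]), map_pow, ht]
  have hker : LinearMap.ker (q.comp a) ≠ ⊥ := by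
    apply LinearMap.ker_ne_bot_of_finrank_lt
    have e1 : ∀ n, Module.finrank L (degreeLT L n) = n := by
      intro n
      rw [(degreeLTEquiv L n).finrank_eq]; simp
    simp only [Module.finrank_prod, Module.finrank_pi_fintype, e1, Module.finrank_self, Finset.sum_const, Finset.card_univ, Fintype.card_fin,
      smul_eq_mul, mul_one]
    rw [hm]; ring_nf; omega
  obtain ⟨⟨c, c'⟩, hc, hc0⟩ := (Submodule.ne_bot_iff _).1 hker
  obtain ⟨β, hβ⟩ := hq _ hc
  change ∑ i, (c i : L[X]) • b i + (c' : L[X]) • (j ^ m) = t ^ m * β at hβ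
  refine ⟨fun i => c i, - algebraMap L[X] A c', β, fun i => ?_, ?_, ?_⟩
  · change (c i : L[X]).natDegree ≤ d * N
    have := (c i).2
    rw [mem_degreeLT] at this
    by_cases h0 : (c i : L[X]) = 0
    · rw [h0]; simp
    · rw [← natDegree_lt_iff_degree_lt h0] at this
      omega
  · intro hu
    have hcz : c = 0 := by
      ext1 i
      apply Subtype.ext
      exact Fintype.linearIndependent_iff.1 b.linearIndependent (fun i => (c i : L[X])) hu i
    have hc'z : (c' : L[X]) ≠ 0 := by
      intro h
      apply hc0
      have : c' = 0 := Subtype.ext h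
      rw [hcz, this]; rfl
    rw [hu, zero_add, Algebra.smul_def] at hβ
    obtain ⟨Q, hQ, hQ'⟩ := exists_eq_pow_rootMultiplicity_mul_and_not_dvd (c' : L[X]) hc'z 0
    simp only [map_zero, sub_zero] at hQ hQ'
    set n := rootMultiplicity 0 (c' : L[X])
    have hQ0 : Q ≠ 0 := by rintro rfl; exact hQ' (dvd_zero _)
    have hnm : n < m := by
      have h1 := c'.2
      rw [mem_degreeLT, ← natDegree_lt_iff_degree_lt hc'z, hQ,
        natDegree_mul (pow_ne_zero _ X_ne_zero) hQ0, natDegree_X_pow] at h1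
      omega
    rw [hQ, map_mul, map_pow, ← ht] at hβ
    have h2 : algebraMap L[X] A Q * j ^ m = t * (t ^ (m - n - 1) * β) := by
      apply mul_left_cancel₀ (pow_ne_zero n ht0)
      have : m = n + 1 + (m - n - 1) := by omega
      calc _ = t ^ n * algebraMap L[X] A Q * j ^ m := by ring
        _ = t ^ m * β := hβ
        _ = t ^ (n + 1 + (m - n - 1)) * β := by rw [← this]
        _ = _ := by rw [pow_add, pow_add]; ring
    have h3 : algebraMap L[X] A Q * j ^ m ∈ p := by
      rw [h2]; exact Ideal.mul_mem_right _ _ htp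
    have h4 : algebraMap L[X] A Q ∈ p := by
      rcases Ideal.IsPrime.mem_or_mem inferInstance h3 with h | h
      · exact h
      · exact absurd (Ideal.IsPrime.mem_of_pow_mem inferInstance _ h) hj
    have h5 : Q.coeff 0 ≠ 0 := by
      intro h; exact hQ' (X_dvd_iff.2 h)
    have h6 : algebraMap L[X] A (C (Q.coeff 0)) ∈ p := by
      have e := X_mul_divX_add Q
      have : algebraMap L[X] A (C (Q.coeff 0)) = algebraMap L[X] A Q - t * algebraMap L[X] A Q.divX := by
        conv_rhs => rw [← e]
        rw [map_add, map_mul, ht]; simp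
      rw [this]
      exact Ideal.sub_mem _ h4 (Ideal.mul_mem_right _ _ htp)
    refine Ideal.IsPrime.ne_top inferInstance (Ideal.eq_top_of_isUnit_mem p h6 ?_)
    exact ((isUnit_iff_ne_zero.2 h5).map C).map _
  · rw [Algebra.smul_def] at hβ
    linear_combination hβ

theorem RR {L A K : Type*} [Field L] [CommRing A] [IsDomain A] [Field K]
    [Algebra L A] [Algebra L K] [Algebra.FiniteType L A] (φ : A →ₐ[L] K)
    (hφ : Function.Injective φ) (hfrac : ∀ z : K, ∃ a b, z = φ a / φ b)
    (htr : Algebra.trdeg L K = 1) (p : Ideal A) [p.IsMaximal] (Z : Finset A) (hZ : ∀ z ∈ Z, z ∈ p) :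
    ∃ t g : K, (∀ a, (aeval t : L[X] →ₐ[L] K).toRingHom.IsIntegralElem (φ a)) ∧
      (∀ z ∈ Z, ∃ (M : ℕ) (a : A), φ z ^ M * g = φ a) ∧
      (aeval t⁻¹ : L[X] →ₐ[L] K).toRingHom.IsIntegralElem (t * g) ∧ Transcendental L g := by
  obtain ⟨t, htp, hinj, hintg⟩ := exists_param φ hφ hfrac htr p
  let : Algebra L[X] A := (aeval t : L[X] →ₐ[L] A).toRingHom.toAlgebra
  have : IsScalarTower L L[X] A := IsScalarTower.of_algebraMap_eq (fun r => by
    change _ = aeval t (algebraMap L L[X] r); simp)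
  have hX : t = algebraMap L[X] A X := by
    change _ = aeval t X; simp
  have : Algebra.FiniteType L[X] A := Algebra.FiniteType.of_restrictScalars_finiteType L L[X] A
  have : Algebra.IsIntegral L[X] A := ⟨hintg⟩
  have : Module.Finite L[X] A := Algebra.IsIntegral.finite
  have : FaithfulSMul L[X] A := (faithfulSMul_iff_algebraMap_injective _ _).2 hinj
  have : Module.IsTorsionFree L[X] A := inferInstance
  let b := Module.finBasis L[X] A
  set d := Module.finrank L[X] A
  have ht0 : t ≠ 0 := by
    rw [hX, Ne, map_eq_zero_iff (algebraMap L[X] A) hinj]; exact X_ne_zero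
  have hφt0 : φ t ≠ 0 := by rw [Ne, map_eq_zero_iff _ hφ]; exact ht0
  have hpmin : p ∈ (Ideal.span {t}).minimalPrimes := by
    refine ⟨⟨inferInstance, (Ideal.span_singleton_le_iff_mem _).2 htp⟩, ?_⟩
    rintro q ⟨hq, htq⟩ hqp
    have hXq : (X : L[X]) ∈ q.under L[X] := by
      change algebraMap L[X] A X ∈ q
      rw [← hX]; exact htq (Ideal.mem_span_singleton_self t)
    have hne : q.under L[X] ≠ ⊥ := by
      intro h
      rw [h] at hXq
      exact X_ne_zero hXq
    have hqm : (q.under L[X]).IsMaximal := IsPrime.to_maximal_ideal hne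
    have := Ideal.isMaximal_of_isIntegral_of_isMaximal_comap q hqm
    exact (this.eq_of_le (Ideal.IsPrime.ne_top inferInstance) hqp).ge
  choose! y hy n hyn using fun z hz => minimalPrime_pow_mul _ p hpmin z (hZ z hz)
  let j : A := ∏ z ∈ Z, y z
  have hj : j ∉ p := by
    intro h
    obtain ⟨z, hz, hz'⟩ := (Ideal.IsPrime.prod_mem_iff).1 h
    exact hy z hz hz'
  have hjz : ∀ z ∈ Z, ∃ w, j * z ^ n z = t * w := by
    intro z hz
    obtain ⟨w, hw⟩ := Ideal.mem_span_singleton.1 (hyn z hz)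
    obtain ⟨r, hr⟩ := Finset.dvd_prod_of_mem y hz
    refine ⟨w * r, ?_⟩
    change (∏ z ∈ Z, y z) * _ = _
    rw [hr]
    linear_combination r * hw
  have hA : ∀ a, (aeval (φ t) : L[X] →ₐ[L] K).toRingHom.IsIntegralElem (φ a) := by
    intro a
    obtain ⟨F, hF, hFa⟩ := hintg a
    refine ⟨F, hF, ?_⟩
    have h2 := congrArg (φ : A →+* K) hFa
    rw [Polynomial.hom_eval₂, map_zero] at h2
    rw [← h2]
    have hcomp : (aeval (φ t) : L[X] →ₐ[L] K).toRingHom =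
        (φ : A →+* K).comp (aeval t : L[X] →ₐ[L] A).toRingHom := by
      have : (aeval (φ t) : L[X] →ₐ[L] K) = φ.comp (aeval t) := by ext; simp
      rw [this]; rfl
    rw [hcomp]; rfl
  choose N₀ hN₀ using fun i => int_scale (L := L) (φ t) hφt0 (φ (b i)) (hA _)
  let N := Finset.univ.sup N₀
  have hN : ∀ i, (aeval (φ t)⁻¹ : L[X] →ₐ[L] K).toRingHom.IsIntegralElem ((φ t)⁻¹ ^ N * φ (b i)) :=
    fun i => hN₀ i N (Finset.le_sup (f := N₀) (Finset.mem_univ i))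
  obtain ⟨c, α, β, hcdeg, hu0, hu⟩ := RRlin b t hX ht0 p htp j hj N _ rfl
  set m := d * N + N + 1 with hm
  set u := ∑ i, c i • b i with hudef
  have hsmul : ∀ (f : L[X]) (a : A), φ (f • a) = aeval (φ t) f * φ a := by
    intro f a
    rw [Algebra.smul_def, map_mul, aeval_algHom_apply]; rfl
  have hg0 : φ u / φ t ^ m ≠ 0 :=
    div_ne_zero (by rw [Ne, map_eq_zero_iff _ hφ]; exact hu0) (pow_ne_zero _ hφt0)
  have htg : (aeval (φ t)⁻¹ : L[X] →ₐ[L] K).toRingHom.IsIntegralElem (φ t * (φ u / φ t ^ m)) := by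
    have e : φ t * (φ u / φ t ^ m) =
        ∑ i, aeval (φ t)⁻¹ (reflect (d * N) (c i)) * ((φ t)⁻¹ ^ N * φ (b i)) := by
      rw [hudef, map_sum, Finset.sum_div, Finset.mul_sum]
      apply Finset.sum_congr rfl
      intro i _
      rw [aeval_reflect _ hφt0 _ _ (hcdeg i), hsmul, hm, pow_add, pow_add, pow_one, inv_pow, inv_pow]
      field_simp
    rw [e]
    apply Finset.sum_induction _ (fun z => (aeval (φ t)⁻¹ : L[X] →ₐ[L] K).toRingHom.IsIntegralElem z)
    · intro a b ha hb; exact ha.add _ hb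
    · exact RingHom.isIntegralElem_zero _
    · intro i _
      exact RingHom.IsIntegralElem.mul _ (RingHom.isIntegralElem_map _) (hN i)
  refine ⟨φ t, φ u / φ t ^ m, hA, fun z hz => ?_, htg, ?_⟩
  · obtain ⟨w, hw⟩ := hjz z hz
    refine ⟨n z * m, w ^ m * α + z ^ (n z * m) * β, ?_⟩
    rw [mul_div_assoc', div_eq_iff (pow_ne_zero _ hφt0), ← map_pow, ← map_pow, ← map_mul, ← map_mul]
    congr 1
    rw [hu]
    have : (j * z ^ n z) ^ m = (t * w) ^ m := by rw [hw]
    rw [mul_pow, mul_pow, ← pow_mul] at this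
    linear_combination α * this
  · intro halg
    have hginv : IsIntegral L (φ u / φ t ^ m)⁻¹ := (IsAlgebraic.inv halg).isIntegral
    have hginv' : (aeval (φ t)⁻¹ : L[X] →ₐ[L] K).toRingHom.IsIntegralElem (φ u / φ t ^ m)⁻¹ := by
      obtain ⟨F, hF, hF0⟩ := hginv
      refine ⟨F.map C, hF.map _, ?_⟩
      rw [Polynomial.eval₂_map, ← hF0]
      congr 1
      ext l; simp
    have ht := htg.mul _ hginv'
    rw [mul_assoc, mul_inv_cancel₀ hg0, mul_one] at ht
    have hpr : (Ideal.span {(X : L[X])}).IsPrime := (Ideal.span_singleton_prime X_ne_zero).2 prime_X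
    have htrans : Function.Injective (aeval (φ t)⁻¹ : L[X] →ₐ[L] K) := by
      rw [← transcendental_iff_injective]
      intro h
      have h2 := h.inv
      rw [inv_inv] at h2
      refine (transcendental_iff_injective (R := L)).2 ?_ h2
      have : (aeval (φ t) : L[X] →ₐ[L] K) = φ.comp (aeval t) := by ext; simp
      rw [this]; exact hφ.comp hinj
    obtain ⟨O, hO1, hO2, -⟩ := exists_val_of_prime (aeval (φ t)⁻¹ : L[X] →ₐ[L] K).toRingHom
      (Ideal.span {X}) (by
        intro f hf
        have : f = 0 := (map_eq_zero_iff _ htrans).1 hf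
        rw [this]; exact Ideal.zero_mem _)
    have h1 := val_mem_of_integralElem O _ hO1 _ ht
    have h2 := hO2 X (Ideal.mem_span_singleton_self X)
    change O.valuation (aeval (φ t)⁻¹ X) < 1 at h2
    rw [aeval_X] at h2
    rw [← O.valuation_le_one_iff] at h1
    have h3 := mul_lt_one_of_lt_of_le h2 h1
    rw [← map_mul, inv_mul_cancel₀ hφt0, map_one] at h3
    exact lt_irrefl _ h3
end Part5

section Part6
theorem val_ne_top {K : Type*} [Field K] (O : ValuationSubring K) (a : K) (ha : a ≠ 0)
    (h : O.valuation a < 1) : O ≠ ⊤ := by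
  rintro rfl
  have h1 : (⊤ : ValuationSubring K).valuation a⁻¹ ≤ 1 :=
    (ValuationSubring.valuation_le_one_iff _ _).2 (ValuationSubring.mem_top _)
  have h3 := mul_lt_one_of_lt_of_le h h1
  rw [← map_mul, mul_inv_cancel₀ ha, map_one] at h3
  exact lt_irrefl _ h3

theorem OL {k L : Type*} [Field k] [Field L] [Algebra k L] (s : L) (hs : Transcendental k s)
    (S : Finset L) : ∃ O : ValuationSubring L, O ≠ ⊤ ∧ (∀ c : k, algebraMap k L c ∈ O) ∧
      ∀ a ∈ S, a ∈ O := by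
  classical
  let C := Algebra.adjoin k ((insert s S : Finset L) : Set L)
  have hfg : Algebra.FiniteType k C := (Subalgebra.fg_iff_finiteType _).1 ⟨_, rfl⟩
  have hnf : ¬ IsField C := by
    intro hF
    let := hF.toField
    have : Module.Finite k C := finite_of_finite_type_of_isJacobsonRing k C
    have hsC : s ∈ C := Algebra.subset_adjoin (by simp)
    have h1 : IsIntegral k (⟨s, hsC⟩ : C) := Algebra.IsIntegral.isIntegral _
    have h2 : IsIntegral k s := h1.map C.val
    exact hs h2.isAlgebraic
  obtain ⟨M, hM⟩ := Ideal.exists_maximal C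
  have hMb : M ≠ ⊥ := Ring.ne_bot_of_isMaximal_of_not_isField hM hnf
  obtain ⟨a, haM, ha0⟩ := (Submodule.ne_bot_iff _).1 hMb
  obtain ⟨O, hO1, hO2, -⟩ := exists_val_of_prime (C.val : C →+* L) M (by
    intro z hz
    have : z = 0 := Subtype.ext hz
    rw [this]; exact M.zero_mem)
  refine ⟨O, val_ne_top O (a : L) (by simpa using ha0) (hO2 a haM), fun c => ?_, fun b hb => ?_⟩
  · exact hO1 (algebraMap k C c)
  · exact hO1 ⟨b, Algebra.subset_adjoin (by simp [hb])⟩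

theorem val_mem_of_monic {K : Type*} [Field K] (V : ValuationSubring K) (f : K[X]) (hf : f.Monic)
    (hc : ∀ i, f.coeff i ∈ V) (z : K) (hz : f.eval z = 0) : z ∈ V := by
  have hsub : (↑f.coeffs : Set K) ⊆ V.toSubring := by
    intro c hc'
    obtain ⟨i, _, rfl⟩ := Polynomial.mem_coeffs_iff.1 hc'
    exact hc i
  apply val_mem_of_integralElem V V.subtype (fun r => r.2) z
  refine ⟨f.toSubring V.toSubring hsub, (monic_toSubring _ _ _).2 hf, ?_⟩
  have h1 : (f.toSubring V.toSubring hsub).map V.toSubring.subtype = f := by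
    ext i; simp
  rw [← h1, Polynomial.eval_map] at hz
  exact hz

theorem val_aeval_mem {L K : Type*} [Field L] [Field K] [Algebra L K] (T : Subring K)
    (P : L[X]) (hP : ∀ i, algebraMap L K (P.coeff i) ∈ T) (t : K) (ht : t ∈ T) : aeval t P ∈ T := by
  rw [aeval_eq_sum_range]
  apply Subring.sum_mem
  intro i _
  rw [Algebra.smul_def]
  exact T.mul_mem (hP i) (T.pow_mem ht _)

/-- All the coefficients of the coefficients. -/
theorem exists_coef_set {L ι : Type*} [Field L] (I : Finset ι) (P : ι → L[X]) :
    ∃ S : Finset L, ∀ (T : Set L), (0 : L) ∈ T → (∀ l ∈ S, l ∈ T) → ∀ i ∈ I, ∀ n, (P i).coeff n ∈ T := by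
  classical
  refine ⟨I.biUnion (fun i => (P i).coeffs), fun T h0 hT i hi n => ?_⟩
  by_cases h : (P i).coeff n = 0
  · rw [h]; exact h0
  · exact hT _ (Finset.mem_biUnion.2 ⟨i, hi, coeff_mem_coeffs h⟩)

theorem FC1 {L K : Type*} [Field L] [Field K] [Algebra L K] (t z : K)
    (hz : (aeval t : L[X] →ₐ[L] K).toRingHom.IsIntegralElem z) :
    ∃ S : Finset L, ∀ O : ValuationSubring K, (∀ l ∈ S, algebraMap L K l ∈ O) → t ∈ O → z ∈ O := by
  obtain ⟨f, hf, hfz⟩ := hz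
  obtain ⟨S, hS⟩ := exists_coef_set f.support f.coeff
  refine ⟨S, fun O hO ht => ?_⟩
  have h1 := hS {l | algebraMap L K l ∈ O} (by simp) hO
  apply val_mem_of_monic O (f.map (aeval t : L[X] →ₐ[L] K).toRingHom) (hf.map _)
  · intro i
    rw [coeff_map]
    by_cases hi : i ∈ f.support
    · exact val_aeval_mem O.toSubring _ (h1 i hi) t ht
    · rw [notMem_support_iff.1 hi, map_zero]; exact O.zero_mem
  · rw [Polynomial.eval_map]; exact hfz

theorem FC2 {L K : Type*} [Field L] [Field K] [Algebra L K] (G : Set K) (w : K)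
    (hw : w ∈ Algebra.adjoin L G) :
    ∃ S : Finset L, ∀ O : ValuationSubring K, (∀ l ∈ S, algebraMap L K l ∈ O) → (∀ a ∈ G, a ∈ O) →
      w ∈ O := by
  classical
  induction hw using Algebra.adjoin_induction with
  | mem x hx => exact ⟨∅, fun O _ h => h x hx⟩
  | algebraMap r => exact ⟨{r}, fun O h _ => h r (by simp)⟩
  | add x y _ _ hx hy =>
    obtain ⟨S, hS⟩ := hx
    obtain ⟨T, hT⟩ := hy
    exact ⟨S ∪ T, fun O h h' => O.add_mem _ _ (hS O (fun l hl => h l (by simp [hl])) h')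
      (hT O (fun l hl => h l (by simp [hl])) h')⟩
  | mul x y _ _ hx hy =>
    obtain ⟨S, hS⟩ := hx
    obtain ⟨T, hT⟩ := hy
    exact ⟨S ∪ T, fun O h h' => O.mul_mem _ _ (hS O (fun l hl => h l (by simp [hl])) h')
      (hT O (fun l hl => h l (by simp [hl])) h')⟩

/-- finitely many finite conditions -/
theorem exists_finset_forall {L K ι : Type*} [Field K] [Field L] [Algebra L K]
    (I : Finset ι) (R : ι → ValuationSubring K → Prop)
    (h : ∀ i ∈ I, ∃ S : Finset L, ∀ O : ValuationSubring K,
      (∀ l ∈ S, algebraMap L K l ∈ O) → R i O) :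
    ∃ S : Finset L, ∀ O : ValuationSubring K, (∀ l ∈ S, algebraMap L K l ∈ O) → ∀ i ∈ I, R i O := by
  classical
  choose! S hS using h
  exact ⟨I.biUnion S, fun O hO i hi => hS i hi O fun l hl => hO l (Finset.mem_biUnion.2 ⟨i, hi, hl⟩)⟩

theorem side_finite {L K : Type*} [Field L] [Field K] [Algebra L K] (G Z : Finset K) (t g : K)
    (h1 : ∀ a ∈ G, (aeval t : L[X] →ₐ[L] K).toRingHom.IsIntegralElem a)
    (h2 : ∀ z ∈ Z, ∃ M : ℕ, z ^ M * g ∈ Algebra.adjoin L (G : Set K))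
    (h3 : (aeval t⁻¹ : L[X] →ₐ[L] K).toRingHom.IsIntegralElem (t * g)) :
    ∃ S : Finset L, ∀ O : ValuationSubring K, (∀ l ∈ S, algebraMap L K l ∈ O) → g ∉ O →
      (∀ a ∈ G, a ∈ O) ∧ ∀ z ∈ Z, O.valuation z < 1 := by
  classical
  obtain ⟨S₁, hS₁⟩ := exists_finset_forall (L := L) G (fun a O => t ∈ O → a ∈ O)
    (fun a ha => FC1 t a (h1 a ha))
  choose! M hM using h2
  obtain ⟨S₂, hS₂⟩ := exists_finset_forall (L := L) Z
    (fun z O => (∀ a ∈ (G : Set K), a ∈ O) → z ^ M z * g ∈ O)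
    (fun z hz => FC2 (G : Set K) _ (hM z hz))
  obtain ⟨S₃, hS₃⟩ := FC1 t⁻¹ _ h3
  refine ⟨S₁ ∪ S₂ ∪ S₃, fun O hO hg => ?_⟩
  have ht : t ∈ O := by
    by_contra ht
    have ht0 : t ≠ 0 := by rintro rfl; exact ht O.zero_mem
    have ht' := (O.mem_or_inv_mem t).resolve_left ht
    have e := hS₃ O (fun l hl => hO l (by simp [hl])) ht'
    apply hg
    have := O.mul_mem _ _ ht' e
    rwa [inv_mul_cancel_left₀ ht0] at this
  have hG := fun a ha => hS₁ O (fun l hl => hO l (by simp [hl])) a ha ht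
  refine ⟨hG, fun z hz => ?_⟩
  have e := hS₂ O (fun l hl => hO l (by simp [hl])) z hz hG
  by_contra hv
  rw [not_lt] at hv
  have hz0 : z ≠ 0 := by
    rintro rfl
    rw [map_zero] at hv
    exact absurd hv (by simp)
  have hzi : z⁻¹ ∈ O := by
    rw [← O.valuation_le_one_iff, map_inv₀]
    exact inv_le_one_of_one_le₀ hv
  apply hg
  have := O.mul_mem _ _ (O.toSubring.pow_mem hzi (M z)) e
  rwa [← mul_assoc, ← mul_pow, inv_mul_cancel₀ hz0, one_pow, one_mul] at this

theorem gauss_ext {L K : Type*} [Field L] [Field K] [Algebra L K] (V : ValuationSubring L) (g : K)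
    (hg : Transcendental L g) : ∃ O : ValuationSubring K, (∀ l ∈ V, algebraMap L K l ∈ O) ∧
      (∀ l, V.valuation l < 1 → O.valuation (algebraMap L K l) < 1) ∧ g ∈ O ∧
      ∀ P : L[X], (∀ i, P.coeff i ∈ V) → (∃ i, V.valuation (P.coeff i) = 1) →
        O.valuation (aeval g P) = 1 := by
  let Φ : V[X] →+* K := eval₂RingHom ((algebraMap L K).comp V.subtype) g
  have hΦ : ∀ P : V[X], Φ P = aeval g (P.map V.subtype) := by
    intro P
    rw [aeval_def, Polynomial.eval₂_map]; rfl
  let Q : Ideal V[X] := (IsLocalRing.maximalIdeal V).map C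
  have hQ : Q.IsPrime := Ideal.isPrime_map_C_of_isPrime
  obtain ⟨O, hO1, hO2, hO3⟩ := exists_val_of_prime Φ Q (by
    intro P hP
    rw [RingHom.mem_ker, hΦ] at hP
    have h1 := (transcendental_iff.1 hg) _ hP
    have : P = 0 := (Polynomial.map_eq_zero_iff V.subtype_injective).1 h1
    rw [this]; exact Q.zero_mem)
  refine ⟨O, fun l hl => ?_, fun l hl => ?_, ?_, fun P hP hP1 => ?_⟩
  · have := hO1 (C ⟨l, hl⟩)
    rw [hΦ] at this
    simpa using this
  · have hlV : l ∈ V := (V.valuation_le_one_iff l).1 hl.le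
    have := hO2 (C ⟨l, hlV⟩) (Ideal.mem_map_of_mem _ ((V.valuation_lt_one_iff ⟨l, hlV⟩).2 hl))
    rw [hΦ] at this
    simpa using this
  · have := hO1 X
    rw [hΦ] at this
    simpa using this
  · have hsub : (↑P.coeffs : Set L) ⊆ V.toSubring := by
      intro c hc'
      obtain ⟨i, _, rfl⟩ := Polynomial.mem_coeffs_iff.1 hc'
      exact hP i
    let P' : V[X] := P.toSubring V.toSubring hsub
    have h1 : P'.map V.subtype = P := by
      ext i
      rw [coeff_map]
      exact coeff_toSubring _ _ _
    have := hO3 P' (by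
      intro h
      obtain ⟨i, hi⟩ := hP1
      have h2 := Ideal.mem_map_C_iff.1 h i
      rw [V.valuation_lt_one_iff] at h2
      have h3 : ((P'.coeff i : V) : L) = P.coeff i := coeff_toSubring _ _ _
      rw [h3, hi] at h2
      exact lt_irrefl _ h2)
    rwa [hΦ, h1] at this
end Part6

section Part7
theorem alg_rel.{u, v} {L : Type u} {K : Type v} [Field L] [Field K] [Algebra L K] (htr : Algebra.trdeg L K = 1)
    (g r : K) (hg : Transcendental L g) :
    ∃ F : L[X][X], F ≠ 0 ∧ F.eval₂ (aeval g : L[X] →ₐ[L] K).toRingHom r = 0 := by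
  have hai : AlgebraicIndependent L (fun _ : PUnit.{v+1} => g) :=
    algebraicIndependent_unique_type_iff.2 hg
  have hb := hai.isTranscendenceBasis_of_trdeg_le_of_finite (by simp [htr])
  have halg := (isTranscendenceBasis_iff_algebraicIndependent_isAlgebraic.1 hb).2
  have hr := halg.isAlgebraic r
  obtain ⟨f, hf0, hf⟩ := hr
  let ψ : L[X] →ₐ[L] Algebra.adjoin L (Set.range (fun _ : PUnit.{v+1} => g)) :=
    aeval ⟨g, Algebra.subset_adjoin ⟨PUnit.unit, rfl⟩⟩
  have hψ : ∀ P, ((ψ P : Algebra.adjoin L (Set.range (fun _ : PUnit.{v+1} => g))) : K) = aeval g P := by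
    intro P
    have := Polynomial.aeval_algHom_apply (Algebra.adjoin L (Set.range (fun _ : PUnit.{v+1} => g))).val
      (⟨g, Algebra.subset_adjoin ⟨PUnit.unit, rfl⟩⟩ : Algebra.adjoin L (Set.range (fun _ : PUnit.{v+1} => g))) P
    exact this.symm
  have hsurj : Function.Surjective ψ := by
    rintro ⟨z, hz⟩
    rw [Set.range_const, Algebra.adjoin_singleton_eq_range_aeval] at hz
    obtain ⟨P, hP⟩ := hz
    exact ⟨P, Subtype.ext ((hψ P).trans hP)⟩
  obtain ⟨F, rfl⟩ := Polynomial.map_surjective (ψ : L[X] →+* _) hsurj f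
  refine ⟨F, ?_, ?_⟩
  · rintro rfl; simp at hf0
  · rw [aeval_def, Polynomial.eval₂_map] at hf
    rw [← hf]
    congr 1
    exact RingHom.ext fun P => (hψ P).symm

/-- `O` is an extension of `V` restricting to the Gauss valuation on `L(g)`. -/
def IsGauss {L K : Type*} [Field L] [Field K] [Algebra L K] (V : ValuationSubring L) (g : K)
    (O : ValuationSubring K) : Prop :=
  (∀ l ∈ V, algebraMap L K l ∈ O) ∧
      (∀ l, V.valuation l < 1 → O.valuation (algebraMap L K l) < 1) ∧ g ∈ O ∧
      ∀ P : L[X], (∀ i, P.coeff i ∈ V) → (∃ i, V.valuation (P.coeff i) = 1) →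
        O.valuation (aeval g P) = 1

theorem FC3 {L K : Type*} [Field L] [Field K] [Algebra L K] (htr : Algebra.trdeg L K = 1)
    (g r : K) (hg : Transcendental L g) : ∃ S : Finset L, ∀ (V : ValuationSubring L)
      (O : ValuationSubring K), IsGauss V g O → (∀ l ∈ S, l ∈ V) → r ∈ O := by
  classical
  obtain ⟨F, hF0, hF⟩ := alg_rel htr g r hg
  obtain ⟨S, hS⟩ := exists_coef_set F.support F.coeff
  have hl : F.leadingCoeff ≠ 0 := leadingCoeff_ne_zero.2 hF0
  have hl' := leadingCoeff_ne_zero.2 hl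
  refine ⟨insert (F.leadingCoeff.leadingCoeff)⁻¹ S, fun V O hO hSV => ?_⟩
  have hc := hS {l | l ∈ V} V.zero_mem (fun l hl => hSV l (by simp [hl]))
  have hc' : ∀ i n, (F.coeff i).coeff n ∈ V := by
    intro i n
    by_cases hi : i ∈ F.support
    · exact hc i hi n
    · rw [notMem_support_iff.1 hi, coeff_zero]; exact V.zero_mem
  have hv := hO.2.2.2 F.leadingCoeff (hc' _) ⟨F.leadingCoeff.natDegree, by
    apply le_antisymm
    · exact (V.valuation_le_one_iff _).2 (hc' _ _)
    · have h1 : V.valuation (F.leadingCoeff.leadingCoeff)⁻¹ ≤ 1 :=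
        (V.valuation_le_one_iff _).2 (hSV _ (by simp))
      rw [map_inv₀] at h1
      have h2 : 0 < V.valuation F.leadingCoeff.leadingCoeff := by
        rw [Valuation.pos_iff]; exact hl'
      exact (inv_le_one₀ h2).1 h1⟩
  set φ := (aeval g : L[X] →ₐ[L] K).toRingHom with hφ
  have hv' : O.valuation (φ F.leadingCoeff) = 1 := hv
  have hne : φ F.leadingCoeff ≠ 0 := by
    intro h
    rw [h, map_zero] at hv'
    exact zero_ne_one hv'
  have hinv : (φ F.leadingCoeff)⁻¹ ∈ O := by
    rw [← O.valuation_le_one_iff, map_inv₀, hv', inv_one]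
  have hlc : (F.map φ).leadingCoeff = φ F.leadingCoeff :=
    leadingCoeff_map_of_leadingCoeff_ne_zero _ hne
  apply val_mem_of_monic O (C (φ F.leadingCoeff)⁻¹ * F.map φ)
  · rw [Monic, leadingCoeff_mul, leadingCoeff_C, hlc, inv_mul_cancel₀ hne]
  · intro i
    rw [coeff_C_mul, coeff_map]
    exact O.mul_mem _ _ hinv
      (val_aeval_mem O.toSubring _ (fun n => hO.1 _ (hc' i n)) g hO.2.2.1)
  · rw [eval_mul, Polynomial.eval_map, hF, mul_zero]

theorem prim_rel {L K : Type*} [Field L] [Field K] [Algebra L K] (htr : Algebra.trdeg L K = 1)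
    (g r : K) (hg : Transcendental L g) : ∃ (n : ℕ) (F u : Fin n → L[X]), ∑ i, u i * F i = 1 ∧
      ∑ i, aeval g (F i) * r ^ (i : ℕ) = 0 := by
  obtain ⟨F0, hF0, hF⟩ := alg_rel htr g r hg
  let n := F0.natDegree + 1
  let I : Ideal L[X] := Ideal.span (Set.range fun i : Fin n => F0.coeff i)
  obtain ⟨c, hc⟩ : ∃ c, I = Ideal.span {c} :=
    ⟨_, (Submodule.IsPrincipal.span_singleton_generator I).symm⟩
  have hmem : ∀ i : Fin n, ∃ q, F0.coeff i = c * q := by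
    intro i
    have : F0.coeff i ∈ Ideal.span {c} := hc ▸ Ideal.subset_span ⟨i, rfl⟩
    exact Ideal.mem_span_singleton.1 this
  choose F hFc using hmem
  have hcI : c ∈ I := hc ▸ Ideal.mem_span_singleton_self c
  obtain ⟨u, hu⟩ := Ideal.mem_span_range_iff_exists_fun.1 hcI
  have hc0 : c ≠ 0 := by
    rintro rfl
    apply hF0
    have := hFc ⟨F0.natDegree, Nat.lt_succ_self _⟩
    rw [zero_mul] at this
    exact leadingCoeff_eq_zero.1 this
  have hcg : aeval g c ≠ 0 := fun h => hc0 (transcendental_iff.1 hg c h)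
  refine ⟨n, F, u, ?_, ?_⟩
  · apply mul_left_cancel₀ hc0
    rw [mul_one]
    conv_rhs => rw [← hu]
    rw [Finset.mul_sum]
    refine Finset.sum_congr rfl fun i _ => ?_
    rw [hFc]; ring
  · apply mul_left_cancel₀ hcg
    rw [mul_zero, ← hF, eval₂_eq_sum_range, ← Fin.sum_univ_eq_sum_range
      (fun i => (aeval g : L[X] →ₐ[L] K).toRingHom (F0.coeff i) * r ^ i), Finset.mul_sum]
    refine Finset.sum_congr rfl fun i _ => ?_
    have : (aeval g : L[X] →ₐ[L] K).toRingHom (F0.coeff i) = aeval g c * aeval g (F i) := by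
      rw [hFc, map_mul]; rfl
    rw [this]; ring

/-- image of `V` in the residue field of `O` -/
noncomputable def resD {L K : Type*} [Field L] [Field K] [Algebra L K] (V : ValuationSubring L)
    (O : ValuationSubring K) (h : ∀ l ∈ V, algebraMap L K l ∈ O) :
    V →+* IsLocalRing.ResidueField O :=
  (IsLocalRing.residue O).comp (((algebraMap L K).comp V.subtype).codRestrict O.toSubring
    (fun l => h l l.2))

theorem resD_apply {L K : Type*} [Field L] [Field K] [Algebra L K] (V : ValuationSubring L)
    (O : ValuationSubring K) (h : ∀ l ∈ V, algebraMap L K l ∈ O) (l : V) :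
    resD V O h l = IsLocalRing.residue O ⟨algebraMap L K l, h l l.2⟩ := rfl

theorem residue_zero_iff {K : Type*} [Field K] (O : ValuationSubring K) (z : O) :
    IsLocalRing.residue O z = 0 ↔ O.valuation (z : K) < 1 := by
  rw [IsLocalRing.residue_eq_zero_iff, ValuationSubring.valuation_lt_one_iff]

theorem gauss_trans {L K : Type*} [Field L] [Field K] [Algebra L K] (V : ValuationSubring L) (g : K)
    (O : ValuationSubring K) (hO : IsGauss V g O) :
    Transcendental (resD V O hO.1).range (IsLocalRing.residue O ⟨g, hO.2.2.1⟩) := by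
  rw [transcendental_iff]
  intro p hp
  obtain ⟨P, rfl⟩ := Polynomial.map_surjective (resD V O hO.1).rangeRestrict
    (RingHom.rangeRestrict_surjective _) p
  rw [aeval_def, Polynomial.eval₂_map] at hp
  let j : V →+* O := ((algebraMap L K).comp V.subtype).codRestrict O.toSubring
    (fun l => hO.1 l l.2)
  have h1 : IsLocalRing.residue O (P.eval₂ j ⟨g, hO.2.2.1⟩) = 0 := by
    rw [Polynomial.hom_eval₂, ← hp]; rfl
  rw [residue_zero_iff] at h1
  have h2 : ((P.eval₂ j ⟨g, hO.2.2.1⟩ : O) : K) = aeval g (P.map V.subtype) := by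
    rw [aeval_def, Polynomial.eval₂_map]
    exact Polynomial.hom_eval₂ P j O.subtype _
  rw [h2] at h1
  ext i
  rw [coeff_map, coeff_zero]
  have hi : V.valuation (P.coeff i : L) < 1 := by
    by_contra hi
    have hi' : V.valuation (P.coeff i : L) = 1 :=
      le_antisymm ((V.valuation_le_one_iff _).2 (P.coeff i).2) (not_lt.1 hi)
    have := hO.2.2.2 (P.map V.subtype) (fun i => by rw [coeff_map]; exact (P.coeff i).2)
      ⟨i, by rw [coeff_map]; exact hi'⟩
    rw [this] at h1
    exact lt_irrefl _ h1
  have h3 := hO.2.1 _ hi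
  have h4 : resD V O hO.1 (P.coeff i) = 0 := by
    rw [resD_apply, residue_zero_iff]; exact h3
  rw [RingHom.coe_rangeRestrict, h4]; rfl

theorem gauss_other {L K : Type*} [Field L] [Field K] [Algebra L K] (V : ValuationSubring L)
    (g r : K) (O : ValuationSubring K) (hO : IsGauss V g O) (n : ℕ) (F u : Fin n → L[X])
    (h1 : ∑ i, u i * F i = 1) (h2 : ∑ i, aeval r (F i) * g ^ (i : ℕ) = 0)
    (hF : ∀ i j, (F i).coeff j ∈ V) (hu : ∀ i j, (u i).coeff j ∈ V) (hr : r ∈ O) :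
    ¬ IsIntegral (resD V O hO.1).range (IsLocalRing.residue O ⟨r, hr⟩) := by
  intro hintg
  let D := (resD V O hO.1).range
  let C := integralClosure D (IsLocalRing.ResidueField O)
  let T : Subring K := (C.toSubring.comap (IsLocalRing.residue O)).map O.toSubring.subtype
  have hrT : r ∈ T := ⟨⟨r, hr⟩, hintg, rfl⟩
  have hLT : ∀ l ∈ V, algebraMap L K l ∈ T := fun l hl =>
    ⟨⟨algebraMap L K l, hO.1 l hl⟩, C.algebraMap_mem ⟨_, ⟨⟨l, hl⟩, rfl⟩⟩, rfl⟩
  have hFT : ∀ i, ∃ z : O, IsLocalRing.residue O z ∈ C ∧ (z : K) = aeval r (F i) := fun i =>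
    val_aeval_mem T _ (fun j => hLT _ (hF i j)) r hrT
  have huT : ∀ i, ∃ z : O, IsLocalRing.residue O z ∈ C ∧ (z : K) = aeval r (u i) := fun i =>
    val_aeval_mem T _ (fun j => hLT _ (hu i j)) r hrT
  have hgO : g ∈ O := hO.2.2.1
  choose F' hF'C hF' using hFT
  choose u' hu'C hu' using huT
  have htr : Transcendental C (IsLocalRing.residue O ⟨g, hgO⟩) := by
    intro h
    exact gauss_trans V g O hO (h.restrictScalars D)
  let q : C[X] := ∑ i : Fin n, monomial (i : ℕ) ⟨IsLocalRing.residue O (F' i), hF'C i⟩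
  have hq : aeval (IsLocalRing.residue O ⟨g, hgO⟩) q = 0 := by
    simp only [q, map_sum, aeval_monomial]
    have e : (∑ i, F' i * (⟨g, hgO⟩ : O) ^ (i : ℕ)) = 0 := by
      apply Subtype.ext
      refine Eq.trans ?_ h2
      have := map_sum O.subtype (fun i => F' i * (⟨g, hgO⟩ : O) ^ (i : ℕ)) Finset.univ
      refine this.trans (Finset.sum_congr rfl fun i _ => ?_)
      rw [map_mul, map_pow, ← hF']; rfl
    have := congrArg (IsLocalRing.residue O) e
    rw [map_zero, map_sum] at this
    rw [← this]
    refine Finset.sum_congr rfl fun i _ => ?_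
    rw [map_mul, map_pow]; rfl
  have hq0 := transcendental_iff.1 htr q hq
  have hz : ∀ i, IsLocalRing.residue O (F' i) = 0 := by
    intro i
    have := congrArg (fun p => ((p.coeff (i : ℕ) : C) : IsLocalRing.ResidueField O)) hq0
    simp only [q, finsetSum_coeff, coeff_monomial, coeff_zero, Fin.val_inj] at this
    simpa using this
  have e : (∑ i, u' i * F' i) = 1 := by
    apply Subtype.ext
    have h3 := congrArg (aeval r : L[X] →ₐ[L] K) h1
    rw [map_one, map_sum] at h3
    refine Eq.trans ?_ h3
    have := map_sum O.subtype (fun i => u' i * F' i) Finset.univ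
    refine this.trans (Finset.sum_congr rfl fun i _ => ?_)
    rw [map_mul, map_mul, ← hF', ← hu']; rfl
  have := congrArg (IsLocalRing.residue O) e
  simp [hz] at this

theorem base_case {k L K : Type*} [Field k] [Field L] [Field K] [Algebra k L] [Algebra L K]
    (htr : Algebra.trdeg L K = 1) (s : L) (hs : Transcendental k s) (S : Finset L) (G : Finset K)
    (g₁ g₂ : K) (hg₁ : Transcendental L g₁) (hg₂ : Transcendental L g₂) :
    ∃ O O₁ O₂ : ValuationSubring K, O ≠ ⊤ ∧ (∀ c : k, algebraMap L K (algebraMap k L c) ∈ O) ∧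
      (∀ a ∈ G, a ∈ O) ∧
      (O₁ ≤ O ∧ (∀ c : k, algebraMap L K (algebraMap k L c) ∈ O₁) ∧
        (∀ l ∈ S, algebraMap L K l ∈ O₁) ∧ g₁ ∉ O₁) ∧
      (O₂ ≤ O ∧ (∀ c : k, algebraMap L K (algebraMap k L c) ∈ O₂) ∧
        (∀ l ∈ S, algebraMap L K l ∈ O₂) ∧ g₂ ∉ O₂) := by
  classical
  obtain ⟨n, F, u, h1, h2⟩ := prim_rel htr g₂ g₁ hg₂
  obtain ⟨SF, hSF⟩ := exists_coef_set Finset.univ F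
  obtain ⟨Su, hSu⟩ := exists_coef_set Finset.univ u
  choose SG hSG using fun r => FC3 (L := L) htr g₁ r hg₁
  obtain ⟨V, hV, hkV, hSV⟩ := OL s hs (S ∪ SF ∪ Su ∪ G.biUnion SG)
  obtain ⟨O, hO⟩ : ∃ O, IsGauss V g₁ O := gauss_ext V g₁ hg₁
  obtain ⟨l, hl⟩ : ∃ l, l ∉ V := by
    by_contra h
    push Not at h
    exact hV (top_unique fun x _ => h x)
  have hl0 : l ≠ 0 := by rintro rfl; exact hl V.zero_mem
  have hli : V.valuation l⁻¹ < 1 := by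
    rw [map_inv₀]
    apply inv_lt_one_of_one_lt₀
    rw [← not_le, V.valuation_le_one_iff]; exact hl
  have hOt : O ≠ ⊤ := val_ne_top O (algebraMap L K l⁻¹) (by simpa using hl0) (hO.2.1 _ hli)
  obtain ⟨O₁, hO₁, hD₁, hg₁'⟩ := exists_composite O (resD V O hO.1).range g₁
    (fun hg hi => gauss_trans V g₁ O hO hi.isAlgebraic)
  obtain ⟨O₂, hO₂, hD₂, hg₂'⟩ := exists_composite O (resD V O hO.1).range g₂
    (fun hg => gauss_other V g₁ g₂ O hO n F u h1 h2
      (fun i j => hSF V V.zero_mem (fun l hl => hSV l (by simp [hl])) i (Finset.mem_univ _) j)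
      (fun i j => hSu V V.zero_mem (fun l hl => hSV l (by simp [hl])) i (Finset.mem_univ _) j) hg)
  have hV₁ : ∀ l ∈ V, algebraMap L K l ∈ O₁ := fun l hl =>
    hD₁ _ (hO.1 l hl) ⟨⟨l, hl⟩, rfl⟩
  have hV₂ : ∀ l ∈ V, algebraMap L K l ∈ O₂ := fun l hl =>
    hD₂ _ (hO.1 l hl) ⟨⟨l, hl⟩, rfl⟩
  refine ⟨O, O₁, O₂, hOt, fun c => hO.1 _ (hkV c), fun a ha => hSG a V O hO fun l hl =>
    hSV l ?_, ⟨hO₁, fun c => hV₁ _ (hkV c), fun l hl => hV₁ l (hSV l (by simp [hl])), hg₁'⟩,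
    ⟨hO₂, fun c => hV₂ _ (hkV c), fun l hl => hV₂ l (hSV l (by simp [hl])), hg₂'⟩⟩
  exact Finset.mem_union_right _ (Finset.mem_biUnion.2 ⟨a, ha, hl⟩)
end Part7

section Part8
/-- `V` contains `L` and `G`, and `V` is centered at `m`. -/
def GoodV {k K : Type*} [Field k] [Field K] [Algebra k K] (G : Finset K)
    (m : Ideal (Algebra.adjoin k (G : Set K))) (L : IntermediateField k K)
    (V : ValuationSubring K) : Prop :=
  (∀ l ∈ L, l ∈ V) ∧ (∀ a ∈ G, a ∈ V) ∧ ∀ a ∈ m, V.valuation (a : K) < 1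

theorem adjoin_mem_val {k K : Type*} [Field k] [Field K] [Algebra k K] (G : Set K)
    (V : ValuationSubring K) (hk : ∀ c : k, algebraMap k K c ∈ V) (hG : ∀ a ∈ G, a ∈ V) (z : K)
    (hz : z ∈ Algebra.adjoin k G) : z ∈ V := by
  induction hz using Algebra.adjoin_induction with
  | mem x hx => exact hG x hx
  | algebraMap r => exact hk r
  | add x y _ _ hx hy => exact V.add_mem _ _ hx hy
  | mul x y _ _ hx hy => exact V.mul_mem _ _ hx hy

theorem adjoin_sub {k K : Type*} [Field k] [Field K] [Algebra k K] (G : Set K)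
    (L : IntermediateField k K) (z : K) (hz : z ∈ Algebra.adjoin k G) :
    z ∈ Algebra.adjoin L G := by
  have : Algebra.adjoin k G ≤ (Algebra.adjoin L G).restrictScalars k :=
    Algebra.adjoin_le Algebra.subset_adjoin
  exact this hz

theorem trdeg_drop_aux.{u, v} {L : Type u} {E K : Type v} [Field L] [Field E] [Field K] [Algebra L E]
    [Algebra E K] [Algebra L K] [IsScalarTower L E K] (n : ℕ) (hn : Algebra.trdeg L K = n) (s : E)
    (hs : Transcendental L (algebraMap E K s)) : Algebra.trdeg E K < Algebra.trdeg L K := by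
  have hadd := trdeg_add_eq L E (A := K)
  have : Algebra.Transcendental L E := ⟨⟨s, fun h => hs h.algebraMap⟩⟩
  have hpos := trdeg_pos L E
  rw [hn] at hadd ⊢
  have hb : Algebra.trdeg E K < Cardinal.aleph0 :=
    lt_of_le_of_lt (hadd ▸ self_le_add_left _ _) (Cardinal.natCast_lt_aleph0)
  have ha : Algebra.trdeg L E < Cardinal.aleph0 :=
    lt_of_le_of_lt (hadd ▸ self_le_add_right _ _) (Cardinal.natCast_lt_aleph0)
  obtain ⟨a, ha⟩ := Cardinal.lt_aleph0.1 ha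
  obtain ⟨b, hb⟩ := Cardinal.lt_aleph0.1 hb
  rw [ha] at hadd hpos
  rw [hb] at hadd ⊢
  norm_cast at *
  omega

section
variable {k K : Type*} [Field k] [Field K] [Algebra k K] (G : Finset K)
  (m : Ideal (Algebra.adjoin k (G : Set K))) (L : IntermediateField k K)
  (V : ValuationSubring K)

theorem center_max (hV : GoodV G m L V) :
    ∃ M : Ideal (Algebra.adjoin L (G : Set K)), M.IsMaximal ∧
      ∀ a : Algebra.adjoin L (G : Set K), V.valuation (a : K) < 1 → a ∈ M := by
  have hmem : ∀ a : Algebra.adjoin L (G : Set K), (a : K) ∈ V := fun a =>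
    adjoin_mem_val (k := L) _ V (fun c => hV.1 _ c.2) hV.2.1 a a.2
  let j : Algebra.adjoin L (G : Set K) →+* V :=
    ((Algebra.adjoin L (G : Set K)).val : _ →+* K).codRestrict V.toSubring hmem
  have hne : (IsLocalRing.maximalIdeal V).comap j ≠ ⊤ := Ideal.IsPrime.ne_top inferInstance
  obtain ⟨M, hM, hle⟩ := Ideal.exists_le_maximal _ hne
  refine ⟨M, hM, fun a ha => hle ?_⟩
  exact (V.valuation_lt_one_iff (j a)).2 ha

theorem finType_adjoin : Algebra.FiniteType L (Algebra.adjoin L (G : Set K)) :=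
  (Subalgebra.fg_iff_finiteType _).1 ⟨_, rfl⟩

theorem hfrac_up (G : Finset K)
    (hfrac : ∀ z : K, ∃ a b : Algebra.adjoin k (G : Set K), z = (a : K) / (b : K))
    (L : IntermediateField k K)
    (z : K) : ∃ a b : Algebra.adjoin L (G : Set K),
    z = (Algebra.adjoin L (G : Set K)).val a / (Algebra.adjoin L (G : Set K)).val b := by
  obtain ⟨a, b, h⟩ := hfrac z
  exact ⟨⟨a, adjoin_sub _ L _ a.2⟩, ⟨b, adjoin_sub _ L _ b.2⟩, h⟩

theorem trdeg_nat (G : Finset K)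
    (hfrac : ∀ z : K, ∃ a b : Algebra.adjoin k (G : Set K), z = (a : K) / (b : K))
    (L : IntermediateField k K)
    : ∃ n : ℕ, Algebra.trdeg L K = n := by
  have := finType_adjoin G L
  obtain ⟨n, _, _, _, h⟩ := noether_norm (Algebra.adjoin L (G : Set K)).val
    Subtype.val_injective (hfrac_up G hfrac L)
  exact ⟨n, h⟩

theorem good_step (G : Finset K)
    (hfrac : ∀ z : K, ∃ a b : Algebra.adjoin k (G : Set K), z = (a : K) / (b : K))
    (m : Ideal (Algebra.adjoin k (G : Set K))) (L : IntermediateField k K) (V : ValuationSubring K)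
    (hV : GoodV G m L V) (htr : 2 ≤ Algebra.trdeg L K) :
    ∃ (V' : ValuationSubring K) (s : K), (∀ a ∈ G, a ∈ V') ∧ (∀ a ∈ m, V'.valuation (a : K) < 1) ∧
      ResTr L V' s := by
  have := finType_adjoin G L
  obtain ⟨M, hM, hMV⟩ := center_max G m L V hV
  obtain ⟨V', s, h1, h2, h3⟩ := S1 (Algebra.adjoin L (G : Set K)).val
    Subtype.val_injective (hfrac_up G hfrac L) htr M
  refine ⟨V', s, fun a ha => h1 ⟨a, Algebra.subset_adjoin ha⟩, fun a ha => ?_, h3⟩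
  exact h2 ⟨a, adjoin_sub _ L _ a.2⟩ (hMV _ (hV.2.2 a ha))

theorem good_adjoin (s : K) (hG : ∀ a ∈ G, a ∈ V) (hm : ∀ a ∈ m, V.valuation (a : K) < 1)
    (hs : ResTr L V s) : GoodV G m ((IntermediateField.adjoin L {s}).restrictScalars k) V := by
  refine ⟨fun l hl => ?_, hG, hm⟩
  rw [IntermediateField.mem_restrictScalars] at hl
  obtain ⟨p, q, rfl⟩ := (IntermediateField.mem_adjoin_simple_iff L l).1 hl
  by_cases hq : q = 0
  · simp [hq]
  · rw [← V.valuation_le_one_iff, map_div₀, hs q hq, div_one, V.valuation_le_one_iff]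
    exact hs.mem p

theorem trdeg_drop (G : Finset K)
    (hfrac : ∀ z : K, ∃ a b : Algebra.adjoin k (G : Set K), z = (a : K) / (b : K))
    (L : IntermediateField k K) (V : ValuationSubring K)
    (s : K) (hs : ResTr L V s) :
    Algebra.trdeg ((IntermediateField.adjoin L {s}).restrictScalars k) K < Algebra.trdeg L K := by
  change Algebra.trdeg (IntermediateField.adjoin L {s}) K < Algebra.trdeg L K
  obtain ⟨n, hn⟩ := trdeg_nat G hfrac L
  have hst : Transcendental L s := by
    rw [transcendental_iff]
    intro p hp
    by_contra h0
    have := hs p h0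
    rw [hp, map_zero] at this
    exact zero_ne_one this
  exact trdeg_drop_aux n hn ⟨s, IntermediateField.mem_adjoin_simple_self L s⟩ hst

theorem trdeg_ne_zero_of_good (G : Finset K)
    (hfrac : ∀ z : K, ∃ a b : Algebra.adjoin k (G : Set K), z = (a : K) / (b : K))
    (m : Ideal (Algebra.adjoin k (G : Set K))) (L : IntermediateField k K) (V : ValuationSubring K)
    (hV : GoodV G m L V) [hm : m.IsMaximal]
    (htr : Algebra.trdeg k K ≠ 0) : Algebra.trdeg L K ≠ 0 := by
  intro h0
  rw [_root_.trdeg_eq_zero_iff] at h0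
  have hVt : ∀ z : K, z ∈ V := by
    intro z
    apply val_mem_of_integralElem V (algebraMap L K) (fun r => hV.1 _ r.2)
    exact Algebra.IsIntegral.isIntegral (R := L) z
  have hm0 : m = ⊥ := by
    rw [eq_bot_iff]
    intro a ha
    by_contra hne
    refine val_ne_top V (a : K) (fun h => hne (by simpa using h)) (hV.2.2 a ha) ?_
    exact top_unique fun x _ => hVt x
  have hF : IsField (Algebra.adjoin k (G : Set K)) := by
    by_contra hF
    exact Ring.ne_bot_of_isMaximal_of_not_isField hm hF hm0
  let := hF.toField
  have : Algebra.FiniteType k (Algebra.adjoin k (G : Set K)) :=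
    (Subalgebra.fg_iff_finiteType _).1 ⟨_, rfl⟩
  have : Module.Finite k (Algebra.adjoin k (G : Set K)) :=
    finite_of_finite_type_of_isJacobsonRing k _
  have hintg : ∀ a : Algebra.adjoin k (G : Set K), IsAlgebraic k (a : K) := fun a =>
    ((Algebra.IsIntegral.isIntegral (R := k) a).map (Algebra.adjoin k (G : Set K)).val).isAlgebraic
  apply htr
  rw [_root_.trdeg_eq_zero_iff]
  refine ⟨fun z => ?_⟩
  obtain ⟨a, b, rfl⟩ := hfrac z
  rw [div_eq_mul_inv]
  exact (hintg a).mul (hintg b).inv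

theorem good_side (G : Finset K)
    (hfrac : ∀ z : K, ∃ a b : Algebra.adjoin k (G : Set K), z = (a : K) / (b : K))
    (m : Ideal (Algebra.adjoin k (G : Set K))) (L : IntermediateField k K) (V : ValuationSubring K)
    (hV : GoodV G m L V) (htr : Algebra.trdeg L K = 1) :
    ∃ (g : K) (S : Finset L), Transcendental L g ∧ ∀ O : ValuationSubring K,
      (∀ c : k, algebraMap k K c ∈ O) → (∀ l ∈ S, algebraMap L K l ∈ O) → g ∉ O →
      (∀ a : Algebra.adjoin k (G : Set K), (a : K) ∈ O) ∧ ∀ a ∈ m, O.valuation (a : K) < 1 := by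
  classical
  have := finType_adjoin G L
  obtain ⟨M, hM, hMV⟩ := center_max G m L V hV
  have hft : Algebra.FiniteType k (Algebra.adjoin k (G : Set K)) :=
    (Subalgebra.fg_iff_finiteType _).1 ⟨_, rfl⟩
  have hnoeth : IsNoetherianRing (Algebra.adjoin k (G : Set K)) :=
    Algebra.FiniteType.isNoetherianRing k _
  obtain ⟨Z, hZ⟩ := hnoeth.noetherian m
  let ι : Algebra.adjoin k (G : Set K) → Algebra.adjoin L (G : Set K) :=
    fun a => ⟨a, adjoin_sub _ L _ a.2⟩
  obtain ⟨t, g, h1, h2, h3, hg⟩ := RR (Algebra.adjoin L (G : Set K)).val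
    Subtype.val_injective (hfrac_up G hfrac L) htr M (Z.image ι) (by
      intro z hz
      obtain ⟨w, hw, rfl⟩ := Finset.mem_image.1 hz
      refine hMV _ (hV.2.2 w ?_)
      rw [← hZ]; exact Submodule.subset_span hw)
  obtain ⟨S, hS⟩ := side_finite (L := L) G (Z.image (fun a : Algebra.adjoin k (G : Set K) => (a : K))) t g
    (fun a ha => h1 ⟨a, Algebra.subset_adjoin ha⟩) (by
      intro z hz
      obtain ⟨w, hw, rfl⟩ := Finset.mem_image.1 hz
      obtain ⟨N, a, ha⟩ := h2 (ι w) (Finset.mem_image_of_mem _ hw)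
      refine ⟨N, ?_⟩
      have : (w : K) ^ N * g = a := ha
      rw [this]; exact a.2) h3
  refine ⟨g, S, hg, fun O hk hSO hgO => ?_⟩
  obtain ⟨hGO, hZO⟩ := hS O hSO hgO
  have hA : ∀ a : Algebra.adjoin k (G : Set K), (a : K) ∈ O := fun a =>
    adjoin_mem_val _ O hk hGO a a.2
  refine ⟨hA, fun a ha => ?_⟩
  rw [← hZ] at ha
  induction ha using Submodule.span_induction with
  | mem x hx => exact hZO _ (Finset.mem_image.2 ⟨x, hx, rfl⟩)
  | zero => simp
  | add x y _ _ hx hy =>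
    rw [Subalgebra.coe_add]
    exact lt_of_le_of_lt (O.valuation.map_add _ _) (max_lt hx hy)
  | smul r x _ hx =>
    rw [smul_eq_mul, Subalgebra.coe_mul, map_mul, mul_comm]
    exact mul_lt_one_of_lt_of_le hx ((O.valuation_le_one_iff _).2 (hA r))
end

theorem val_lt_of_le {K : Type*} [Field K] {O' O : ValuationSubring K} (h : O' ≤ O) (a : K)
    (ha : O.valuation a < 1) : O'.valuation a < 1 := by
  by_cases h0 : a = 0
  · simp [h0]
  by_contra hn
  have hi : a⁻¹ ∈ O' := by
    rw [← O'.valuation_le_one_iff, map_inv₀]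
    exact inv_le_one_of_one_le₀ (not_lt.1 hn)
  have h1 := (O.valuation_le_one_iff _).2 (h hi)
  have h3 := mul_lt_one_of_lt_of_le ha h1
  rw [← map_mul, mul_inv_cancel₀ h0, map_one] at h3
  exact lt_irrefl _ h3

theorem good_center {k K : Type*} [Field k] [Field K] [Algebra k K] (G : Finset K)
    (m : Ideal (Algebra.adjoin k (G : Set K))) [hm : m.IsMaximal] (O : ValuationSubring K)
    (hA : ∀ a : Algebra.adjoin k (G : Set K), (a : K) ∈ O) (hmO : ∀ a ∈ m, O.valuation (a : K) < 1)
    (a : Algebra.adjoin k (G : Set K)) (ha : O.valuation (a : K) < 1) : a ∈ m := by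
  by_contra hn
  obtain ⟨b, c, hc, h⟩ := hm.exists_inv hn
  have h1 : (b : K) * a + c = 1 := by exact_mod_cast h
  have h2 : O.valuation ((b : K) * a + c) < 1 := by
    refine lt_of_le_of_lt (O.valuation.map_add _ _) (max_lt ?_ (hmO c hc))
    rw [map_mul, mul_comm]
    exact mul_lt_one_of_lt_of_le ha ((O.valuation_le_one_iff _).2 (hA b))
  rw [h1, map_one] at h2
  exact lt_irrefl _ h2

theorem MAT {k K : Type*} [Field k] [Field K] [Algebra k K] (G₁ G₂ R : Finset K)
    (h₁ : ∀ z : K, ∃ a b : Algebra.adjoin k (G₁ : Set K), z = (a : K) / (b : K))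
    (h₂ : ∀ z : K, ∃ a b : Algebra.adjoin k (G₂ : Set K), z = (a : K) / (b : K))
    (htr : 2 ≤ Algebra.trdeg k K)
    (m₁ : Ideal (Algebra.adjoin k (G₁ : Set K))) [m₁.IsMaximal]
    (m₂ : Ideal (Algebra.adjoin k (G₂ : Set K))) [m₂.IsMaximal] :
    ∃ O : ValuationSubring K, O ≠ ⊤ ∧ (∀ a ∈ Algebra.adjoin k (R : Set K), a ∈ O) ∧
      (∀ a : Algebra.adjoin k (G₁ : Set K), O.valuation (a : K) < 1 → a ∈ m₁) ∧
      (∀ a : Algebra.adjoin k (G₂ : Set K), O.valuation (a : K) < 1 → a ∈ m₂) := by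
  classical
  let good : Set (IntermediateField k K) := {L | (∃ V, GoodV G₁ m₁ L V) ∧ ∃ V, GoodV G₂ m₂ L V}
  have hstart : ∀ (G : Finset K) (m : Ideal (Algebra.adjoin k (G : Set K))) [m.IsMaximal],
      ∃ V, GoodV G m ⊥ V := by
    intro G m hm
    obtain ⟨V, hV1, hV2, -⟩ := exists_val_of_prime
      ((Algebra.adjoin k (G : Set K)).val : _ →+* K) m (by
        intro z hz
        have : z = 0 := Subtype.ext hz
        rw [this]; exact m.zero_mem)
    refine ⟨V, fun l hl => ?_, fun a ha => hV1 ⟨a, Algebra.subset_adjoin ha⟩, hV2⟩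
    obtain ⟨c, rfl⟩ := IntermediateField.mem_bot.1 hl
    exact hV1 (algebraMap k _ c)
  have hne : good.Nonempty := ⟨⊥, hstart G₁ m₁, hstart G₂ m₂⟩
  obtain ⟨L, ⟨⟨V₁, hV₁⟩, ⟨V₂, hV₂⟩⟩, hmin⟩ :=
    (InvImage.wf (fun L : IntermediateField k K => Algebra.trdeg L K)
      Cardinal.lt_wf).has_min good hne
  have hlt : Algebra.trdeg L K < 2 := by
    by_contra h
    rw [not_lt] at h
    obtain ⟨W₁, s₁, a₁, b₁, c₁⟩ := good_step G₁ h₁ m₁ L V₁ hV₁ h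
    obtain ⟨W₂, s₂, a₂, b₂, c₂⟩ := good_step G₂ h₂ m₂ L V₂ hV₂ h
    obtain ⟨s, d₁, d₂⟩ := c₁.exists_common c₂
    exact hmin _ ⟨⟨W₁, good_adjoin G₁ m₁ L W₁ s a₁ b₁ d₁⟩, ⟨W₂, good_adjoin G₂ m₂ L W₂ s a₂ b₂ d₂⟩⟩
      (trdeg_drop G₁ h₁ L W₁ s d₁)
  have h0 := trdeg_ne_zero_of_good G₁ h₁ m₁ L V₁ hV₁ (by
    intro h
    rw [h] at htr
    exact absurd htr (by simp))
  have h1 : Algebra.trdeg L K = 1 := by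
    obtain ⟨n, hn⟩ := trdeg_nat G₁ h₁ L
    rw [hn] at hlt h0 ⊢
    norm_cast at *
    omega
  obtain ⟨g₁, S₁, hg₁, hS₁⟩ := good_side G₁ h₁ m₁ L V₁ hV₁ h1
  obtain ⟨g₂, S₂, hg₂, hS₂⟩ := good_side G₂ h₂ m₂ L V₂ hV₂ h1
  have htL : Algebra.Transcendental k L := by
    rw [← _root_.trdeg_ne_zero_iff]
    intro h
    have hadd := _root_.trdeg_add_eq k L (A := K)
    rw [h, h1, zero_add] at hadd
    rw [← hadd] at htr
    norm_num at htr
  obtain ⟨s, hs⟩ := htL.transcendental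
  obtain ⟨O, O₁, O₂, hO, hk, hR, ⟨p₁, q₁, r₁, t₁⟩, ⟨p₂, q₂, r₂, t₂⟩⟩ :=
    base_case h1 s hs (S₁ ∪ S₂) R g₁ g₂ hg₁ hg₂
  obtain ⟨e₁, f₁⟩ := hS₁ O₁ q₁ (fun l hl => r₁ l (by simp [hl])) t₁
  obtain ⟨e₂, f₂⟩ := hS₂ O₂ q₂ (fun l hl => r₂ l (by simp [hl])) t₂
  refine ⟨O, hO, fun a ha => adjoin_mem_val _ O hk hR a ha, fun a ha => ?_, fun a ha => ?_⟩
  · exact good_center G₁ m₁ O₁ e₁ f₁ a (val_lt_of_le p₁ _ ha)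
  · exact good_center G₂ m₂ O₂ e₂ f₂ a (val_lt_of_le p₂ _ ha)
end Part8

section Part9
theorem trdeg_ge_two {k K A : Type} [Field k] [Field K] [Algebra k K] [CommRing A]
    (c : k →+* A) (hc : c.FiniteType) (φ : A →+* K) (hcφ : ∀ r, φ (c r) = algebraMap k K r)
    (hfrac : ∀ z : K, ∃ a b, z = φ a / φ b) (p q r : Ideal A) (hp : p.IsPrime) (hq : q.IsPrime)
    (hr : r.IsPrime) (hker : RingHom.ker φ ≤ p) (hpq : p < q) (hqr : q < r) :
    2 ≤ Algebra.trdeg k K := by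
  let B := φ.range
  let : Algebra k B := (φ.rangeRestrict.comp c).toAlgebra
  have hft : Algebra.FiniteType k B :=
    RingHom.FiniteType.comp_surjective hc φ.rangeRestrict_surjective
  let ψ : B →ₐ[k] K := { φ.range.subtype with commutes' := hcφ }
  obtain ⟨n, g, hg, hfin, hn⟩ := noether_norm ψ Subtype.val_injective (by
    intro z
    obtain ⟨a, b, h⟩ := hfrac z
    exact ⟨φ.rangeRestrict a, φ.rangeRestrict b, h⟩)
  rw [hn]
  let : Algebra (MvPolynomial (Fin n) k) B := g.toRingHom.toAlgebra
  have hintg : Algebra.IsIntegral (MvPolynomial (Fin n) k) B := ⟨hfin.to_isIntegral⟩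
  have h2 : ringKrullDim (MvPolynomial (Fin n) k) = n := by
    rw [MvPolynomial.ringKrullDim_of_isNoetherianRing]
    simp
  have hsurj := φ.rangeRestrict_surjective
  have hker' : RingHom.ker φ.rangeRestrict = RingHom.ker φ := RingHom.ker_rangeRestrict φ
  have key : ∀ I : Ideal A, RingHom.ker φ ≤ I → (I.map φ.rangeRestrict).comap φ.rangeRestrict = I := by
    intro I hI
    rw [Ideal.comap_map_of_surjective' _ hsurj, hker', sup_eq_left.2 hI]
  have hprime : ∀ I : Ideal A, I.IsPrime → RingHom.ker φ ≤ I → (I.map φ.rangeRestrict).IsPrime := by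
    intro I hI h
    exact Ideal.map_isPrime_of_surjective hsurj (hker'.le.trans h)
  have hlt : ∀ I J : Ideal A, RingHom.ker φ ≤ I → RingHom.ker φ ≤ J → I < J →
      I.map φ.rangeRestrict < J.map φ.rangeRestrict := by
    intro I J hI hJ h
    refine lt_of_le_of_ne (Ideal.map_mono h.le) fun e => h.ne ?_
    rw [← key I hI, ← key J hJ, e]
  have hkq := hker.trans hpq.le
  have hkr := hkq.trans hqr.le
  have hp' := hprime p hp hker
  have hq' := hprime q hq hkq
  have hr' := hprime r hr hkr
  let j := algebraMap (MvPolynomial (Fin n) k) B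
  let l : LTSeries (PrimeSpectrum (MvPolynomial (Fin n) k)) :=
    { length := 2
      toFun := ![⟨_, hp'.comap j⟩, ⟨_, hq'.comap j⟩, ⟨_, hr'.comap j⟩]
      step := by
        intro i
        fin_cases i
        · exact Ideal.IsIntegral.comap_lt_comap (hlt p q hker hkq hpq)
        · exact Ideal.IsIntegral.comap_lt_comap (hlt q r hkq hkr hqr) }
  have h3 : (2 : WithBot ℕ∞) ≤ ringKrullDim (MvPolynomial (Fin n) k) :=
    Order.le_krullDim_iff.2 ⟨l, rfl⟩
  rw [h2] at h3
  exact_mod_cast h3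

theorem MAT_side {k K A : Type} [Field k] [Field K] [Algebra k K] [CommRing A]
    (c : k →+* A) (hc : c.FiniteType) (φ : A →+* K) (hcφ : ∀ r, φ (c r) = algebraMap k K r) :
    ∃ G : Finset K, ∀ z, z ∈ Algebra.adjoin k (G : Set K) ↔ ∃ a, φ a = z := by
  classical
  let : Algebra k A := c.toAlgebra
  have hft : Algebra.FiniteType k A := hc
  let ψ : A →ₐ[k] K := { φ with commutes' := hcφ }
  obtain ⟨S, hS⟩ := hft.out
  refine ⟨S.image φ, fun z => ?_⟩
  have : Algebra.adjoin k ((S.image φ : Finset K) : Set K) = ψ.range := by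
    rw [← Algebra.map_top, ← hS, AlgHom.map_adjoin, Finset.coe_image]; rfl
  rw [this]
  exact Iff.rfl

theorem MAT_ideal {k K A : Type} [Field k] [Field K] [Algebra k K] [CommRing A]
    (φ : A →+* K) (G : Finset K) (hG : ∀ z, z ∈ Algebra.adjoin k (G : Set K) ↔ ∃ a, φ a = z)
    (p : Ideal A) (hp : p.IsMaximal) (hker : RingHom.ker φ ≤ p) :
    ∃ m : Ideal (Algebra.adjoin k (G : Set K)), m.IsMaximal ∧ ∀ a (h : φ a ∈ Algebra.adjoin k (G : Set K)),
      ⟨φ a, h⟩ ∈ m → a ∈ p := by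
  let ψ : A →+* Algebra.adjoin k (G : Set K) :=
    φ.codRestrict (Algebra.adjoin k (G : Set K)) (fun a => (hG _).2 ⟨a, rfl⟩)
  have hsurj : Function.Surjective ψ := by
    rintro ⟨z, hz⟩
    obtain ⟨a, rfl⟩ := (hG z).1 hz
    exact ⟨a, rfl⟩
  have hk : RingHom.ker ψ ≤ p := by
    intro a ha
    exact hker (congrArg Subtype.val (show ψ a = 0 from ha))
  have hcm : (p.map ψ).comap ψ = p := by
    rw [Ideal.comap_map_of_surjective' _ hsurj, sup_eq_left.2 hk]
  refine ⟨p.map ψ, ?_, fun a h ha => ?_⟩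
  · rcases Ideal.map_eq_top_or_isMaximal_of_surjective ψ hsurj hp with h | h
    · rw [h, Ideal.comap_top] at hcm
      exact absurd hcm.symm hp.ne_top
    · exact h
  · rw [← hcm]; exact ha

theorem MAT' {k K A B C : Type} [Field k] [Field K] [Algebra k K] [CommRing A] [CommRing B]
    [CommRing C] (htr : 2 ≤ Algebra.trdeg k K)
    (cA : k →+* A) (hcA : cA.FiniteType) (φA : A →+* K) (hφA : ∀ r, φA (cA r) = algebraMap k K r)
    (cB : k →+* B) (hcB : cB.FiniteType) (φB : B →+* K) (hφB : ∀ r, φB (cB r) = algebraMap k K r)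
    (cC : k →+* C) (hcC : cC.FiniteType) (φC : C →+* K) (hφC : ∀ r, φC (cC r) = algebraMap k K r)
    (hfA : ∀ z : K, ∃ a b, z = φA a / φA b) (hfB : ∀ z : K, ∃ a b, z = φB a / φB b)
    (p : Ideal A) (hp : p.IsMaximal) (hkp : RingHom.ker φA ≤ p)
    (q : Ideal B) (hq : q.IsMaximal) (hkq : RingHom.ker φB ≤ q) :
    ∃ O : ValuationSubring K, O ≠ ⊤ ∧ (∀ a, φC a ∈ O) ∧
      (∀ a, O.valuation (φA a) < 1 → a ∈ p) ∧ (∀ a, O.valuation (φB a) < 1 → a ∈ q) := by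
  obtain ⟨G₁, hG₁⟩ := MAT_side cA hcA φA hφA
  obtain ⟨G₂, hG₂⟩ := MAT_side cB hcB φB hφB
  obtain ⟨R, hR⟩ := MAT_side cC hcC φC hφC
  obtain ⟨m₁, hm₁, h₁⟩ := MAT_ideal φA G₁ hG₁ p hp hkp
  obtain ⟨m₂, hm₂, h₂⟩ := MAT_ideal φB G₂ hG₂ q hq hkq
  obtain ⟨O, hO, hRO, ho₁, ho₂⟩ := MAT G₁ G₂ R (by
      intro z
      obtain ⟨a, b, h⟩ := hfA z
      exact ⟨⟨φA a, (hG₁ _).2 ⟨a, rfl⟩⟩, ⟨φA b, (hG₁ _).2 ⟨b, rfl⟩⟩, h⟩) (by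
      intro z
      obtain ⟨a, b, h⟩ := hfB z
      exact ⟨⟨φB a, (hG₂ _).2 ⟨a, rfl⟩⟩, ⟨φB b, (hG₂ _).2 ⟨b, rfl⟩⟩, h⟩) htr m₁ m₂
  exact ⟨O, hO, fun a => hRO _ ((hR _).2 ⟨a, rfl⟩),
    fun a ha => h₁ a ((hG₁ _).2 ⟨a, rfl⟩) (ho₁ ⟨φA a, _⟩ ha),
    fun a ha => h₂ a ((hG₂ _).2 ⟨a, rfl⟩) (ho₂ ⟨φB a, _⟩ ha)⟩
end Part9

section Part10
section
variable {k : Type} [Field k] {X : Scheme} (sX : X ⟶ Spec (CommRingCat.of k))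

/-- constants as sections over `U` -/
noncomputable def cst (U : X.Opens) : k →+* Γ(X, U) :=
  (sX.appLE ⊤ U le_top).hom.comp (Scheme.ΓSpecIso (CommRingCat.of k)).inv.hom

theorem cst_finite [LocallyOfFiniteType sX] (U : X.Opens) (hU : IsAffineOpen U) :
    (cst sX U).FiniteType := by
  have h1 := sX.finiteType_appLE (isAffineOpen_top _) hU le_top
  refine h1.comp (RingHom.FiniteType.of_surjective _ ?_)
  exact (ConcreteCategory.bijective_of_isIso (Scheme.ΓSpecIso (CommRingCat.of k)).inv).2

theorem cst_res (U V : X.Opens) (i : U ⟶ V) (r : k) :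
    X.presheaf.map i.op (cst sX V r) = cst sX U r := by
  have := sX.appLE_map (U := ⊤) (V := V) le_top i.op
  have h2 := congrArg (fun f => f.hom ((Scheme.ΓSpecIso (CommRingCat.of k)).inv.hom r)) this
  exact h2

theorem ev_res (U V : X.Opens) (i : U ⟶ V) (z : X) (hz : z ∈ U) (f : Γ(X, V)) :
    X.evaluation U z hz (X.presheaf.map i.op f) = X.evaluation V z (i.le hz) f := by
  change X.residue z (X.presheaf.germ U z hz (X.presheaf.map i.op f)) =
    X.residue z (X.presheaf.germ V z _ f)
  rw [TopCat.Presheaf.germ_res_apply]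

theorem ev_frac (U : X.Opens) (hU : IsAffineOpen U) (z : X) (hz : z ∈ U) (w : X.residueField z) :
    ∃ a b : Γ(X, U), w = (X.evaluation U z hz).hom a / (X.evaluation U z hz).hom b := by
  obtain ⟨s, rfl⟩ := X.residue_surjective z w
  let := TopCat.Presheaf.algebra_section_stalk X.presheaf (⟨z, hz⟩ : U)
  have := hU.isLocalization_stalk ⟨z, hz⟩
  obtain ⟨⟨a, b⟩, h⟩ := IsLocalization.surj (hU.primeIdealOf ⟨z, hz⟩).asIdeal.primeCompl s
  have hb := IsLocalization.map_units (X.presheaf.stalk z) b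
  have hb' : IsUnit (X.presheaf.germ U z hz b.1) := hb
  have hne : (X.evaluation U z hz).hom b.1 ≠ 0 :=
    (X.evaluation_ne_zero_iff_mem_basicOpen z hz b.1).2 ((X.mem_basicOpen _ z hz).2 hb')
  refine ⟨a, b, ?_⟩
  rw [eq_div_iff hne]
  have h' := congrArg (X.residue z).hom h
  rw [map_mul] at h'
  exact h'

theorem mem_primeIdealOf (U : X.Opens) (hU : IsAffineOpen U) (z : X) (hz : z ∈ U) (f : Γ(X, U)) :
    f ∈ (hU.primeIdealOf ⟨z, hz⟩).asIdeal ↔ z ∉ X.basicOpen f := by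
  rw [hU.primeIdealOf_eq_map_closedPoint, X.mem_basicOpen _ z hz]
  exact IsLocalRing.mem_maximalIdeal _

theorem exists_point (U : X.Opens) (hU : IsAffineOpen U) (q : Ideal Γ(X, U)) (hq : q.IsPrime) :
    ∃ w ∈ U, ∀ f : Γ(X, U), w ∈ X.basicOpen f ↔ f ∉ q := by
  refine ⟨hU.fromSpec (⟨q, hq⟩ : PrimeSpectrum Γ(X, U)), ?_, fun f => ?_⟩
  · have : hU.fromSpec (⟨q, hq⟩ : PrimeSpectrum Γ(X, U)) ∈ Set.range hU.fromSpec := ⟨_, rfl⟩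
    rw [hU.range_fromSpec] at this
    exact this
  · have h := hU.fromSpec_preimage_basicOpen f
    have h2 : (⟨q, hq⟩ : PrimeSpectrum Γ(X, U)) ∈ hU.fromSpec ⁻¹ᵁ X.basicOpen f ↔ f ∉ q := by
      rw [h]; exact Iff.rfl
    exact h2

/-- the structure map to the residue field -/
noncomputable abbrev resAlg (z : X) : Algebra k (X.residueField z) :=
  ((X.evaluation ⊤ z trivial).hom.comp (cst sX ⊤)).toAlgebra

theorem ev_cst (U : X.Opens) (z : X) (hz : z ∈ U) (r : k) :
    letI := resAlg sX z
    (X.evaluation U z hz).hom (cst sX U r) = algebraMap k (X.residueField z) r := by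
  have h1 := cst_res sX U ⊤ (homOfLE le_top) r
  have h2 := ev_res U ⊤ (homOfLE le_top) z hz (cst sX ⊤ r)
  rw [h1] at h2
  exact h2

theorem ker_ev_le (U : X.Opens) (hU : IsAffineOpen U) (z x : X) (hz : z ∈ U) (hx : x ∈ U)
    (h : z ⤳ x) : RingHom.ker (X.evaluation U z hz).hom ≤ (hU.primeIdealOf ⟨x, hx⟩).asIdeal := by
  intro f hf
  rw [mem_primeIdealOf]
  intro hxf
  have hzf : z ∈ X.basicOpen f := h.mem_open (X.basicOpen f).2 hxf
  exact (X.evaluation_ne_zero_iff_mem_basicOpen z hz f).2 hzf hf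

theorem specializes_of_basic (U : X.Opens) (hU : IsAffineOpen U) (w x : X) (hx : x ∈ U)
    (h : ∀ f : Γ(X, U), x ∈ X.basicOpen f → w ∈ X.basicOpen f) : w ⤳ x := by
  rw [specializes_iff_forall_open]
  intro s hs hxs
  obtain ⟨f, hf, hxf⟩ := hU.exists_basicOpen_le (V := ⟨s, hs⟩) ⟨x, hxs⟩ hx
  exact hf (h f hxf)

theorem exists_between_points [LocallyOfFiniteType sX] (z x y : X) (hzx : z ⤳ x) (hzy : z ⤳ y)
    (hx : IsClosed ({x} : Set X)) (hy : IsClosed ({y} : Set X))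
    (htr : letI := resAlg sX z; 2 ≤ Algebra.trdeg k (X.residueField z)) :
    ∃ w : X, w ≠ z ∧ z ⤳ w ∧ w ⤳ x ∧ w ⤳ y := by
  letI := resAlg sX z
  obtain ⟨U, hU, hxU, -⟩ := exists_isAffineOpen_mem_and_subset (X := X) (x := x) (U := ⊤) trivial
  obtain ⟨V, hV, hyV, -⟩ := exists_isAffineOpen_mem_and_subset (X := X) (x := y) (U := ⊤) trivial
  have hzU : z ∈ U := hzx.mem_open U.2 hxU
  have hzV : z ∈ V := hzy.mem_open V.2 hyV
  obtain ⟨W, hW, hzW, hWUV⟩ :=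
    exists_isAffineOpen_mem_and_subset (X := X) (x := z) (U := U ⊓ V) ⟨hzU, hzV⟩
  have hWU : W ≤ U := fun a ha => (hWUV ha).1
  have hWV : W ≤ V := fun a ha => (hWUV ha).2
  obtain ⟨O, hO, hWO, hUO, hVO⟩ := MAT' htr
    (cst sX U) (cst_finite sX U hU) (X.evaluation U z hzU).hom (ev_cst sX U z hzU)
    (cst sX V) (cst_finite sX V hV) (X.evaluation V z hzV).hom (ev_cst sX V z hzV)
    (cst sX W) (cst_finite sX W hW) (X.evaluation W z hzW).hom (ev_cst sX W z hzW)
    (ev_frac U hU z hzU) (ev_frac V hV z hzV)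
    (hU.primeIdealOf ⟨x, hxU⟩).asIdeal (hU.primeIdealOf_isMaximal_of_isClosed ⟨x, hxU⟩ hx)
    (ker_ev_le U hU z x hzU hxU hzx)
    (hV.primeIdealOf ⟨y, hyV⟩).asIdeal (hV.primeIdealOf_isMaximal_of_isClosed ⟨y, hyV⟩ hy)
    (ker_ev_le V hV z y hzV hyV hzy)
  let j : Γ(X, W) →+* O := (X.evaluation W z hzW).hom.codRestrict O.toSubring hWO
  obtain ⟨w, hwW, hw⟩ := exists_point W hW ((IsLocalRing.maximalIdeal O).comap j) inferInstance
  have hw' : ∀ f : Γ(X, W), w ∈ X.basicOpen f ↔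
      ¬ O.valuation ((X.evaluation W z hzW).hom f) < 1 := by
    intro f
    rw [hw, Ideal.mem_comap]
    exact not_congr (O.valuation_lt_one_iff (j f))
  have hz' : ∀ f : Γ(X, W), z ∈ X.basicOpen f ↔ (X.evaluation W z hzW).hom f ≠ 0 := fun f =>
    (X.evaluation_ne_zero_iff_mem_basicOpen z hzW f).symm
  have hside : ∀ (U : X.Opens) (hU : IsAffineOpen U) (hzU : z ∈ U) (hWU : W ≤ U) (x : X) (hxU : x ∈ U)
      (hUO : ∀ a, O.valuation ((X.evaluation U z hzU).hom a) < 1 →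
        a ∈ (hU.primeIdealOf ⟨x, hxU⟩).asIdeal), w ⤳ x := by
    intro U hU hzU hWU x hxU hUO
    refine specializes_of_basic U hU w x hxU fun f hxf => ?_
    have h1 : w ∈ X.basicOpen (X.presheaf.map (homOfLE hWU).op f) := by
      rw [hw']
      intro hlt
      have e := ev_res W U (homOfLE hWU) z hzW f
      have e' : (X.evaluation W z hzW).hom (X.presheaf.map (homOfLE hWU).op f) =
        (X.evaluation U z hzU).hom f := e
      rw [e'] at hlt
      exact (mem_primeIdealOf U hU x hxU f).1 (hUO f hlt) hxf
    rw [X.basicOpen_res] at h1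
    exact h1.2
  refine ⟨w, ?_, ?_, hside U hU hzU hWU x hxU hUO, hside V hV hzV hWV y hyV hVO⟩
  · rintro rfl
    apply hO
    refine top_unique fun u _ => ?_
    obtain ⟨a, b, rfl⟩ := ev_frac W hW w hzW u
    by_cases hb : (X.evaluation W w hzW).hom b = 0
    · rw [hb, div_zero]; exact O.zero_mem
    · have h1 := (hw' b).1 ((hz' b).2 hb)
      rw [div_eq_mul_inv]
      refine O.mul_mem _ _ (hWO a) ?_
      rw [← O.valuation_le_one_iff, map_inv₀]
      exact inv_le_one_of_one_le₀ (not_lt.1 h1)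
  · refine specializes_of_basic W hW z w hwW fun f hf => ?_
    rw [hz']
    intro h0
    rw [hw', h0, map_zero] at hf
    exact hf (by simp)

theorem trdeg_of_chain [LocallyOfFiniteType sX] (z a b : X) (hza : z ⤳ a) (hab : a ⤳ b)
    (h1 : z ≠ a) (h2 : a ≠ b) :
    letI := resAlg sX z; 2 ≤ Algebra.trdeg k (X.residueField z) := by
  letI := resAlg sX z
  obtain ⟨U, hU, hbU, -⟩ := exists_isAffineOpen_mem_and_subset (X := X) (x := b) (U := ⊤) trivial
  have haU : a ∈ U := hab.mem_open U.2 hbU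
  have hzU : z ∈ U := hza.mem_open U.2 haU
  have hlt : ∀ (p q : X) (hp : p ∈ U) (hq : q ∈ U), p ⤳ q → p ≠ q →
      (hU.primeIdealOf ⟨p, hp⟩).asIdeal < (hU.primeIdealOf ⟨q, hq⟩).asIdeal := by
    intro p q hp hq h hne
    refine lt_of_le_of_ne ?_ fun e => hne ?_
    · intro f hf
      rw [mem_primeIdealOf] at hf ⊢
      exact fun hqf => hf (h.mem_open (X.basicOpen f).2 hqf)
    · have e' := congrArg hU.fromSpec (PrimeSpectrum.ext e)
      rw [hU.fromSpec_primeIdealOf, hU.fromSpec_primeIdealOf] at e'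
      exact e'
  exact trdeg_ge_two (cst sX U) (cst_finite sX U hU) (X.evaluation U z hzU).hom (ev_cst sX U z hzU)
    (ev_frac U hU z hzU) _ _ _ (hU.primeIdealOf ⟨z, hzU⟩).2 (hU.primeIdealOf ⟨a, haU⟩).2
    (hU.primeIdealOf ⟨b, hbU⟩).2 (ker_ev_le U hU z z hzU hzU specializes_rfl)
    (hlt z a hzU haU hza h1) (hlt a b haU hbU hab h2)
end
end Part10

section Part11
theorem exists_curve_of_ne
    (k : Type) [Field k] (X : Scheme) [IrreducibleSpace X]
    (sX : X ⟶ Spec (CommRingCat.of k)) [LocallyOfFiniteType sX] [QuasiCompact sX]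
    (x y : X) (hx : IsClosed ({x} : Set X)) (hy : IsClosed ({y} : Set X)) (hxy : x ≠ y) :
    ∃ Z : Set X, IsClosed Z ∧ IsIrreducible Z ∧ topologicalKrullDim Z = 1 ∧ x ∈ Z ∧ y ∈ Z := by
  have : CompactSpace X := QuasiCompact.compactSpace_of_compactSpace sX
  have : IsLocallyNoetherian X := LocallyOfFiniteType.isLocallyNoetherian sX
  have : IsNoetherian X := {}
  have : TopologicalSpace.NoetherianSpace X := inferInstance
  have wf : WellFounded (fun a b : TopologicalSpace.Closeds X => a < b) :=
    (inferInstance : WellFoundedLT (TopologicalSpace.Closeds X)).wf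
  obtain ⟨z, ⟨hzx, hzy⟩, hmin⟩ := (InvImage.wf (fun z : X =>
      (TopologicalSpace.Closeds.closure {z} : TopologicalSpace.Closeds X)) wf).has_min
      {z : X | z ⤳ x ∧ z ⤳ y} ⟨genericPoint X, genericPoint_specializes x, genericPoint_specializes y⟩
  have hno : ∀ w, w ≠ z → z ⤳ w → w ⤳ x → w ⤳ y → False := by
    intro w hw h1 h2 h3
    refine hmin w ⟨h2, h3⟩ ?_
    change TopologicalSpace.Closeds.closure {w} < TopologicalSpace.Closeds.closure {z}
    rw [lt_iff_le_not_ge]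
    constructor
    · exact h1.closure_subset
    · intro h
      exact hw ((specializes_iff_closure_subset.2 h).antisymm h1).eq
  have hzirr : IsIrreducible (closure ({z} : Set X)) := isIrreducible_singleton.closure
  have hxZ : x ∈ closure ({z} : Set X) := hzx.mem_closure
  have hyZ : y ∈ closure ({z} : Set X) := hzy.mem_closure
  refine ⟨closure {z}, isClosed_closure, hzirr, ?_, hxZ, hyZ⟩
  apply le_antisymm
  · change Order.krullDim (TopologicalSpace.IrreducibleCloseds (closure ({z} : Set X))) ≤ 1
    refine iSup_le fun c => ?_
    by_contra hlt
    have hc : 2 ≤ c.length := by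
      by_contra h
      have h' : c.length ≤ 1 := by omega
      exact hlt (by exact_mod_cast h')
    have key : ∀ S : TopologicalSpace.IrreducibleCloseds (closure ({z} : Set X)),
        ∃ a, IsGenericPoint a (Subtype.val '' (S : Set (closure ({z} : Set X)))) := fun S =>
      QuasiSober.sober (S.isIrreducible'.image _ continuous_subtype_val.continuousOn)
        (isClosed_closure.isClosedEmbedding_subtypeVal.isClosedMap _ S.isClosed')
    have l01 : c ⟨0, by omega⟩ < c ⟨1, by omega⟩ := c.strictMono (by rw [Fin.lt_def]; norm_num)
    have l12 : c ⟨1, by omega⟩ < c ⟨2, by omega⟩ := c.strictMono (by rw [Fin.lt_def]; norm_num)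
    generalize c ⟨0, by omega⟩ = c0 at l01
    generalize c ⟨1, by omega⟩ = c1 at l01 l12
    generalize c ⟨2, by omega⟩ = c2 at l12
    obtain ⟨a, ha⟩ := key c1
    obtain ⟨b, hb⟩ := key c0
    have hza : z ⤳ a := by
      obtain ⟨a', _, h⟩ := ha.mem
      rw [specializes_iff_mem_closure, ← h]
      exact a'.2
    have hab : a ⤳ b := by
      rw [specializes_iff_mem_closure, ha.def]
      exact Set.image_mono l01.le hb.mem
    have hne1 : z ≠ a := by
      rintro rfl
      refine l12.not_ge fun p hp => ?_
      have hp' := p.2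
      have e : closure {z} = _ := ha.def
      have : (p : X) ∈ Subtype.val '' (c1 : Set (closure ({z} : Set X))) := by
        rw [← e]; exact hp'
      obtain ⟨q, hq, hqp⟩ := this
      rwa [← Subtype.ext hqp]
    have hne2 : a ≠ b := by
      rintro rfl
      refine l01.not_ge fun p hp => ?_
      have e := ha.def.symm.trans hb.def
      have : (p : X) ∈ Subtype.val '' (c0 : Set (closure ({z} : Set X))) := by
        rw [← e]; exact ⟨p, hp, rfl⟩
      obtain ⟨q, hq, hqp⟩ := this
      rwa [← Subtype.ext hqp]
    obtain ⟨w, hw, h1, h2, h3⟩ := exists_between_points sX z x y hzx hzy hx hy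
      (trdeg_of_chain sX z a b hza hab hne1 hne2)
    exact hno w hw h1 h2 h3
  · change ((1 : ℕ) : WithBot ℕ∞) ≤ Order.krullDim
        (TopologicalSpace.IrreducibleCloseds (closure ({z} : Set X)))
    have hIrr : IrreducibleSpace (closure ({z} : Set X)) :=
      Subtype.irreducibleSpace hzirr
    let A : TopologicalSpace.IrreducibleCloseds (closure ({z} : Set X)) :=
      ⟨{⟨x, hxZ⟩}, isIrreducible_singleton, by
        have : ({⟨x, hxZ⟩} : Set (closure ({z} : Set X))) = Subtype.val ⁻¹' {x} := by
          ext p; simp [Subtype.ext_iff]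
        rw [this]; exact hx.preimage continuous_subtype_val⟩
    let B : TopologicalSpace.IrreducibleCloseds (closure ({z} : Set X)) :=
      ⟨Set.univ, (irreducibleSpace_def _).1 hIrr, isClosed_univ⟩
    have hAB : A < B := by
      rw [lt_iff_le_not_ge]
      refine ⟨fun p _ => Set.mem_univ p, fun h => ?_⟩
      have h' : (⟨y, hyZ⟩ : closure ({z} : Set X)) ∈ A := h (Set.mem_univ _)
      have h'' : (⟨y, hyZ⟩ : closure ({z} : Set X)) = ⟨x, hxZ⟩ := h'
      exact hxy (Subtype.ext_iff.1 h'').symm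
    exact Order.le_krullDim_iff.2 ⟨(RelSeries.singleton _ A).snoc B hAB, rfl⟩

theorem exists_other_closed
    (k : Type) [Field k] (X : Scheme)
    (sX : X ⟶ Spec (CommRingCat.of k)) [LocallyOfFiniteType sX]
    (hdim : 1 ≤ topologicalKrullDim X)
    (x : X) (hx : IsClosed ({x} : Set X)) : ∃ y : X, IsClosed ({y} : Set X) ∧ x ≠ y := by
  by_contra! hcon
  have : JacobsonSpace X := LocallyOfFiniteType.jacobsonSpace sX
  have h1 : (Set.univ : Set X) ⊆ {x} := by
    rw [← closure_closedPoints (X := X)]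
    exact closure_minimal (fun p hp => (hcon p hp).symm) hx
  obtain ⟨c, hc⟩ := Order.le_krullDim_iff.1 (show ((1 : ℕ) : WithBot ℕ∞) ≤ Order.krullDim
    (TopologicalSpace.IrreducibleCloseds X) from hdim)
  have l01 : c ⟨0, by omega⟩ < c ⟨1, by omega⟩ := c.strictMono (by rw [Fin.lt_def]; norm_num)
  refine l01.not_ge fun p hp => ?_
  obtain ⟨q, hq⟩ := (c ⟨0, by omega⟩).isIrreducible'.nonempty
  have e : p = q := (h1 (Set.mem_univ p)).trans (h1 (Set.mem_univ q)).symm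
  rw [e]; exact hq

theorem main_curve
    (k : Type) [Field k] (X : Scheme) [IrreducibleSpace X]
    (sX : X ⟶ Spec (CommRingCat.of k)) [LocallyOfFiniteType sX] [QuasiCompact sX]
    (hdim : 1 ≤ topologicalKrullDim X)
    (x y : X) (hx : IsClosed ({x} : Set X)) (hy : IsClosed ({y} : Set X)) :
    ∃ Z : Set X, IsClosed Z ∧ IsIrreducible Z ∧ topologicalKrullDim Z = 1 ∧ x ∈ Z ∧ y ∈ Z := by
  by_cases hxy : x = y
  · subst hxy
    obtain ⟨y, hy, hne⟩ := exists_other_closed k X sX hdim x hx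
    obtain ⟨Z, h1, h2, h3, h4, _⟩ := exists_curve_of_ne k X sX x y hx hy hne
    exact ⟨Z, h1, h2, h3, h4, h4⟩
  · exact exists_curve_of_ne k X sX x y hx hy hxy
end Part11

end Helpers

/-- Let `X` be an irreducible scheme of finite type over a field `k` whose
underlying topological space has Krull dimension at least `1`. Then any two closed points of
`X` lie on a closed irreducible subset of topological Krull dimension `1` (an irreducible
curve on `X`). -/
theorem exists_irreducible_curve_through_two_closed_points
    (k : Type) [Field k]
    (X : Scheme) [IrreducibleSpace X]
    (sX : X ⟶ Spec (CommRingCat.of k)) [LocallyOfFiniteType sX] [QuasiCompact sX]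
    (hdim : 1 ≤ topologicalKrullDim X)
    (x y : X) (hx : IsClosed ({x} : Set X)) (hy : IsClosed ({y} : Set X)) :
    ∃ Z : Set X, IsClosed Z ∧ IsIrreducible Z ∧ topologicalKrullDim Z = 1 ∧
      x ∈ Z ∧ y ∈ Z := by
  exact main_curve k X sX hdim x y hx hy
end
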